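/- arXiv:2107.14022 — 2 statements merged into one kernel-verified Lean document; each statement's English description precedes it below -/
import Mathlib

section
/- Let A be a finite alphabet with at least 4 letters. Then Ann has a winning strategy for the nonrepetitive game over A: there exists an Ann strategy ψ such that for every Ben strategy φ, no word arising in the play between ψ and φ contains a factor uu with |u| ≥ 2. -/
/-- The play of the nonrepetitive game over the alphabet `A`: starting from the empty
word, Ann (playing the strategy `ψ`) appends a letter when the current word has even
length, and Ben (playing the strategy `φ`) appends a letter when it has odd length. -/
def playNR {A : Type*} (ψ φ : List A → A) : ℕ → List A
  | 0 => []
  | k + 1 =>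
      let w := playNR ψ φ k
      w ++ [if Even w.length then ψ w else φ w]

/-!
Ann gives weights to her possible moves; the weight of a future word is the product of the weights
of her moves in it.  A square of period at least two without its first or its last letter has the
form `x ++ y :: x`, and Ann keeps the total weight of all words that would complete such a factor
below one, so that none of them is ever completed.  By averaging, she has a suitable move if the
weights of her moves add up to at least one plus the total weight of the new threats.

The weights come from a finite decision tree on the newest letters, which gives weight zero to the
moves that complete short factors `x ++ y :: x`.  It also contains a potential which shows that the
weight of a word decays at a rate of `592 / 1000` per move of Ann.  So the new threats of long
period are bounded by a geometric series, and the inequality reduces to a finite search over the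
newest letters.  Over a larger alphabet, Ann plays with four letters and merges the other ones with
one of them.
-/

namespace NonrepetitiveGame

section Threats

variable {α : Type*} (g : List α → α → ℝ) (t s : List α) (v : List α) (x : α)

/-- Positions are recorded as histories: words with the newest letter first.  Given weights `g v x`
of playing `x` after the history `v`, this is the weight of playing the word `t` after `v`. -/
def futureWeight : List α → List α → ℝ
  | [], _ => 1
  | x :: t, v => g v x * futureWeight t (x :: v)

@[simp]
lemma futureWeight_nil : futureWeight g [] v = 1 := rfl

lemma futureWeight_cons : futureWeight g (x :: t) v = g v x * futureWeight g t (x :: v) := rfl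

lemma futureWeight_append :
    futureWeight g (s ++ t) v = futureWeight g s v * futureWeight g t (s.reverse ++ v) := by
  induction s generalizing v with
  | nil => simp
  | cons y s ih => simp [futureWeight_cons, ih, mul_assoc]

lemma futureWeight_reverse_cons :
    futureWeight g (x :: t).reverse v = futureWeight g t.reverse v * g (t ++ v) x := by
  rw [List.reverse_cons, futureWeight_append, futureWeight_cons, futureWeight_nil, mul_one,
    List.reverse_reverse]

/-- A history is good if each of its letters had a nonzero weight when it was played. -/
def Good : Prop := futureWeight g v.reverse [] ≠ 0

variable {g t v x}

lemma futureWeight_nonneg (hg : ∀ v x, 0 ≤ g v x) : 0 ≤ futureWeight g t v := by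
  induction t generalizing v with
  | nil => simp
  | cons y t ih => exact mul_nonneg (hg v y) ih

lemma good_cons : Good g (x :: v) ↔ Good g v ∧ g v x ≠ 0 := by
  rw [Good, futureWeight_reverse_cons, List.append_nil, mul_ne_zero_iff, Good]

lemma futureWeight_map {σ : Equiv.Perm α} (hσ : ∀ v x, g (v.map σ) (σ x) = g v x) (t v : List α) :
    futureWeight g (t.map σ) (v.map σ) = futureWeight g t v := by
  induction t generalizing v with
  | nil => rfl
  | cons x t ih =>
    rw [List.map_cons, futureWeight_cons, futureWeight_cons, hσ, ← List.map_cons, ih]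

lemma good_map {σ : Equiv.Perm α} (hσ : ∀ v x, g (v.map σ) (σ x) = g v x) (v : List α) :
    Good g (v.map σ) ↔ Good g v := by
  rw [Good, ← List.map_reverse, ← List.map_nil (f := σ), futureWeight_map hσ, Good]

variable (g) in
/-- The total weight of a collection of threats, i.e. of future words that Ann wants to avoid. -/
noncomputable def risk (L : Multiset (List α)) (v : List α) : ℝ :=
  (L.map fun t => futureWeight g t v).sum

lemma risk_add (L M : Multiset (List α)) : risk g (L + M) v = risk g L v + risk g M v := by
  simp [risk]

lemma risk_nonneg (hg : ∀ v x, 0 ≤ g v x) (L : Multiset (List α)) : 0 ≤ risk g L v :=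
  Multiset.sum_nonneg fun _ h => by
    obtain ⟨_, _, rfl⟩ := Multiset.mem_map.1 h
    exact futureWeight_nonneg hg

lemma nil_notMem_of_risk_lt_one (hg : ∀ v x, 0 ≤ g v x) {L : Multiset (List α)}
    (hL : risk g L v < 1) : [] ∉ L := fun h => by
  obtain ⟨M, rfl⟩ := Multiset.exists_cons_of_mem h
  have hM := risk_nonneg (v := v) hg M
  simp only [risk, Multiset.map_cons, Multiset.sum_cons, futureWeight_nil] at hL hM
  linarith

variable [DecidableEq α]

variable (x) in
/-- What remains of a threat after the letter `x` has been played, if it is still alive. -/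
def residual : List α → Option (List α)
  | [] => none
  | y :: t => if y = x then some t else none

variable [Fintype α]

lemma sum_mul_risk_residual_le (L : Multiset (List α)) :
    ∑ x, g v x * risk g (L.filterMap (residual x)) (x :: v) ≤ risk g L v := by
  induction L using Multiset.induction_on with
  | empty => simp [risk]
  | cons t L ih =>
    cases t with
    | nil =>
      simp only [Multiset.filterMap_cons_none _ _ (show residual _ [] = none from rfl)]
      simp only [risk, Multiset.map_cons, Multiset.sum_cons, futureWeight_nil] at ih ⊢
      linarith
    | cons y t =>
      have hterm (x : α) :
          g v x * risk g (((y :: t) ::ₘ L).filterMap (residual x)) (x :: v) =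
            (if x = y then g v x * futureWeight g t (x :: v) else 0) +
              g v x * risk g (L.filterMap (residual x)) (x :: v) := by
        by_cases hxy : x = y
        · rw [Multiset.filterMap_cons_some (residual x) _ _ (by simp [residual, hxy]; rfl)]
          simp [risk, hxy, mul_add]
        · rw [Multiset.filterMap_cons_none _ _ (by simp [residual, Ne.symm hxy])]
          simp [hxy]
      simp only [hterm, Finset.sum_add_distrib, Finset.sum_ite_eq', Finset.mem_univ, if_true]
      simp only [risk, Multiset.map_cons, Multiset.sum_cons, futureWeight_cons] at ih ⊢
      linarith

lemma exists_risk_residual_lt_one (hg : ∀ v x, 0 ≤ g v x) {L : Multiset (List α)}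
    (hL : risk g L v < ∑ x, g v x) :
    ∃ x, g v x ≠ 0 ∧ risk g (L.filterMap (residual x)) (x :: v) < 1 := by
  by_contra! h
  refine hL.not_ge (le_trans (Finset.sum_le_sum fun x _ => ?_) (sum_mul_risk_residual_le L))
  by_cases hx : g v x = 0
  · simp [hx]
  · exact le_mul_of_one_le_right (hg v x) (h x hx)

lemma risk_residual_le (hg : ∀ v x, 0 ≤ g v x) (hv : ∀ x, g v x = 1) (L : Multiset (List α)) :
    risk g (L.filterMap (residual x)) (x :: v) ≤ risk g L v := by
  refine le_trans ?_ (sum_mul_risk_residual_le L)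
  simp only [hv, one_mul]
  exact Finset.single_le_sum (f := fun y => risk g (L.filterMap (residual y)) (y :: v))
    (fun y _ => risk_nonneg hg _) (Finset.mem_univ x)

end Threats

section Strategy

variable {α : Type*} [Fintype α]

/-- The threats of period `2 * k` or `2 * k + 1` that arise at the history `v`.  Ann wants to avoid
every word `x ++ y :: x`: it is what remains of a square `uu` if its first or last letter is
dropped, and Ben could complete it.  If Ann is to move after `v`, such a word with a new half `x` of
odd length threatens to be completed by `x` alone, and one with `x` of even length by a middle
letter `c` and then `x`. -/
def periodThreats (v : List α) (k : ℕ) : Multiset (List α) :=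
  (v.tail.take (2 * k - 1)).reverse ::ₘ Finset.univ.val.map fun c => c :: (v.take (2 * k)).reverse

/-- The threats of period at least `2 * m` that arise at the history `v`. -/
def newThreats (m : ℕ) (v : List α) : Multiset (List α) :=
  ∑ k ∈ Finset.Ico m (v.length / 2 + 1), periodThreats v k

lemma reverse_mem_newThreats {m : ℕ} {x r : List α} {y : α} (hm : 2 * m ≤ x.length + 1)
    (hx : Odd x.length) : x.reverse ∈ newThreats m (y :: x ++ r) := by
  obtain ⟨k, hk⟩ := hx
  refine Multiset.mem_sum.2 ⟨k + 1, ?_, ?_⟩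
  · simp only [Finset.mem_Ico, List.cons_append, List.length_cons, List.length_append]
    omega
  · simp [periodThreats, show 2 * (k + 1) - 1 = x.length by omega]

lemma cons_reverse_mem_newThreats {m : ℕ} {x r : List α} {y : α} (hm : 2 * m ≤ x.length)
    (hx : Even x.length) : y :: x.reverse ∈ newThreats m (x ++ r) := by
  obtain ⟨k, hk⟩ := hx
  refine Multiset.mem_sum.2 ⟨k, ?_, ?_⟩
  · simp only [Finset.mem_Ico, List.length_append]
    omega
  · simp [periodThreats, show 2 * k = x.length by omega]

section Permutation

variable {g : List α → α → ℝ} {σ : Equiv.Perm α}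

lemma risk_periodThreats (v : List α) (k : ℕ) :
    risk g (periodThreats v k) v = futureWeight g (v.tail.take (2 * k - 1)).reverse v +
      ∑ c, futureWeight g (c :: (v.take (2 * k)).reverse) v := by
  simp [risk, periodThreats]

lemma risk_newThreats (m : ℕ) (v : List α) :
    risk g (newThreats m v) v =
      ∑ k ∈ Finset.Ico m (v.length / 2 + 1), risk g (periodThreats v k) v := by
  simp only [risk, newThreats, ← Multiset.coe_mapAddMonoidHom, ← Multiset.coe_sumAddMonoidHom,
    map_sum]

lemma risk_newThreats_map (hσ : ∀ v x, g (v.map σ) (σ x) = g v x) (m : ℕ) (v : List α) :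
    risk g (newThreats m (v.map σ)) (v.map σ) = risk g (newThreats m v) v := by
  rw [risk_newThreats, risk_newThreats, List.length_map]
  refine Finset.sum_congr rfl fun k _ => ?_
  rw [risk_periodThreats, risk_periodThreats, ← Equiv.sum_comp σ]
  simp only [← List.map_tail, ← List.map_take, ← List.map_reverse, ← List.map_cons,
    futureWeight_map hσ]

end Permutation

variable [DecidableEq α] (g : List α → α → ℝ) (m : ℕ) (v₀ u : List α)

/-- The threats that are still alive after the moves `u`, played after the initial history `v₀`. -/
def pendingThreats : List α → Multiset (List α)
  | [] => 0
  | x :: u =>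
    (pendingThreats u + if Even (u ++ v₀).length then newThreats m (u ++ v₀) else 0).filterMap
      (residual x)

/-- The invariant that Ann maintains. -/
def Safe : Prop :=
  Good g (u ++ v₀) ∧ risk g (pendingThreats m v₀ u) (u ++ v₀) < 1

variable {g m v₀ u}

lemma mem_pendingThreats_of_append_mem {s t : List α} (hs : s ≠ [])
    (h : s ++ t ∈ pendingThreats m v₀ u +
      if Even (u ++ v₀).length then newThreats m (u ++ v₀) else 0) :
    t ∈ pendingThreats m v₀ (s.reverse ++ u) := by
  induction s generalizing u with
  | nil => exact absurd rfl hs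
  | cons x s ih =>
    have hst : s ++ t ∈ pendingThreats m v₀ (x :: u) :=
      (Multiset.mem_filterMap _ _).2 ⟨_, h, by simp [residual]⟩
    cases s with
    | nil => exact hst
    | cons y s => simpa using ih (by simp) (Multiset.mem_add.2 (.inl hst))

lemma Safe.not_prefix (hg : ∀ v x, 0 ≤ g v x) (hv₀ : Even v₀.length) (hu : Odd u.length)
    (h : Safe g m v₀ u) {x : List α} {y : α} (hx : 2 * m ≤ x.length + 1) : ¬ x ++ y :: x <+: u := by
  rintro ⟨r, rfl⟩
  have hnil := nil_notMem_of_risk_lt_one hg h.2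
  simp only [List.length_append, List.length_cons] at hu
  rcases Nat.even_or_odd x.length with he | ho
  · have hxr : Even (x ++ r ++ v₀).length := by
      simp only [List.length_append]
      grind
    refine hnil ?_
    have := mem_pendingThreats_of_append_mem (s := y :: x.reverse) (t := []) (u := x ++ r)
      (m := m) (v₀ := v₀) (by simp) (by
        rw [if_pos hxr, List.append_assoc, List.append_nil]
        exact Multiset.mem_add.2 (.inr (cons_reverse_mem_newThreats (by grind) he)))
    simpa using this
  · have hxr : Even (y :: x ++ r ++ v₀).length := by
      simp only [List.length_append, List.length_cons]
      grind
    refine hnil ?_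
    have := mem_pendingThreats_of_append_mem (s := x.reverse) (t := []) (u := y :: x ++ r)
      (m := m) (v₀ := v₀) (by rintro h0; simp_all) (by
        rw [if_pos hxr, List.append_assoc, List.append_nil]
        exact Multiset.mem_add.2 (.inr (reverse_mem_newThreats hx ho)))
    simpa using this

lemma Safe.cons_of_odd (hg : ∀ v x, 0 ≤ g v x) (hodd : ∀ v, Odd v.length → ∀ x, g v x = 1)
    (h : Safe g m v₀ u) (hu : Odd (u ++ v₀).length) (x : α) : Safe g m v₀ (x :: u) := by
  refine ⟨good_cons.2 ⟨h.1, by simp [hodd _ hu]⟩, lt_of_le_of_lt ?_ h.2⟩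
  rw [pendingThreats, if_neg (Nat.not_even_iff_odd.2 hu), add_zero]
  exact risk_residual_le hg (hodd _ hu) (pendingThreats m v₀ u)

lemma Safe.exists_cons (hg : ∀ v x, 0 ≤ g v x) (h : Safe g m v₀ u) (hu : Even (u ++ v₀).length)
    (hkey : 1 + risk g (newThreats m (u ++ v₀)) (u ++ v₀) ≤ ∑ x, g (u ++ v₀) x) :
    ∃ x, Safe g m v₀ (x :: u) := by
  obtain ⟨x, hx, hrisk⟩ := exists_risk_residual_lt_one hg
    (L := pendingThreats m v₀ u + newThreats m (u ++ v₀)) (v := u ++ v₀) (by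
      rw [risk_add]
      linarith [h.2])
  exact ⟨x, good_cons.2 ⟨h.1, hx⟩, by rwa [pendingThreats, if_pos hu]⟩

end Strategy

section Game

variable {α : Type*}

/-- Ann wins the nonrepetitive game over the alphabet `A`. -/
def AnnWins (A : Type*) : Prop :=
  ∃ ψ : List A → A, ∀ φ : List A → A, ∀ k : ℕ, ∀ u : List A,
    2 ≤ u.length → ¬ (u ++ u) <:+: playNR ψ φ k

lemma length_playNR (ψ φ : List α → α) (k : ℕ) : (playNR ψ φ k).length = k := by
  induction k with
  | zero => rfl
  | succ k ih => simp [playNR, ih]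

lemma playNR_succ_of_even (ψ φ : List α → α) {k : ℕ} (hk : Even k) :
    playNR ψ φ (k + 1) = playNR ψ φ k ++ [ψ (playNR ψ φ k)] := by
  simp [playNR, length_playNR, hk]

lemma playNR_succ_of_odd (ψ φ : List α → α) {k : ℕ} (hk : Odd k) :
    playNR ψ φ (k + 1) = playNR ψ φ k ++ [φ (playNR ψ φ k)] := by
  simp [playNR, length_playNR, Nat.not_even_iff_odd.2 hk]

/-- The newest letters of the history `v` can be turned into a square of period at least two by
adding a single letter to them. -/
def EndsInAlmostSquare (v : List α) : Prop :=
  ∃ x y, x ≠ [] ∧ x ++ y :: x <+: v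

lemma endsInAlmostSquare_of_square_prefix {u v : List α} {c : α} (hu : 2 ≤ u.length)
    (h : u ++ u <+: c :: v) : EndsInAlmostSquare v ∧ EndsInAlmostSquare (c :: v) := by
  have hne : u ≠ [] := by rintro rfl; simp at hu
  constructor
  · obtain ⟨y, x, rfl⟩ := List.exists_cons_of_ne_nil hne
    refine ⟨x, y, ?_, (List.cons_prefix_cons.1 h).2⟩
    rintro rfl; simp at hu
  · obtain ⟨x, y, rfl⟩ : ∃ x y, u = x ++ [y] := ⟨_, _, (List.dropLast_append_getLast hne).symm⟩
    refine ⟨x, y, ?_, (List.prefix_append _ [y]).trans (by simpa using h)⟩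
    rintro rfl; simp at hu

lemma not_square_infix_playNR {ψ φ : List α → α}
    (h : ∀ k, Odd k → ¬ EndsInAlmostSquare (playNR ψ φ k).reverse) (k : ℕ) {u : List α}
    (hu : 2 ≤ u.length) : ¬ (u ++ u) <:+: playNR ψ φ k := by
  induction k with
  | zero =>
    intro hinf
    have : u = [] := by simpa [playNR] using hinf
    simp [this] at hu
  | succ k ih =>
    obtain ⟨c, hc⟩ : ∃ c, playNR ψ φ (k + 1) = playNR ψ φ k ++ [c] := ⟨_, rfl⟩
    intro hinf
    rw [hc] at hinf
    rcases List.infix_concat_iff.1 hinf with hsuff | hold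
    · rw [← List.reverse_prefix, List.reverse_append, List.reverse_concat] at hsuff
      have hsq := endsInAlmostSquare_of_square_prefix (by simpa using hu) hsuff
      rcases Nat.even_or_odd k with hk | hk
      · refine h (k + 1) hk.add_one ?_
        rw [hc, List.reverse_concat]
        exact hsq.2
      · exact h k hk hsq.1
    · exact ih hold

lemma Safe.not_endsInAlmostSquare [Fintype α] [DecidableEq α] {g : List α → α → ℝ} {m : ℕ}
    {v₀ u : List α} {a : α} (hg : ∀ v x, 0 ≤ g v x) (hv₀ : Even v₀.length) (hu : Even u.length)
    (hshort : g (u ++ v₀) a ≠ 0 →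
      ∀ x y, x ≠ [] → x.length + 1 < 2 * m → ¬ x ++ y :: x <+: a :: (u ++ v₀))
    (h : Safe g m v₀ (a :: u)) : ¬ EndsInAlmostSquare (a :: u) := by
  rintro ⟨x, y, hx, hxy⟩
  by_cases hlong : 2 * m ≤ x.length + 1
  · exact h.not_prefix hg hv₀ (by simpa using hu.add_one) hlong hxy
  · exact hshort (good_cons.1 h.1).2 x y hx (not_le.1 hlong)
      (hxy.trans (List.prefix_append (a :: u) v₀))

theorem annWins_of_weights [Fintype α] (g : List α → α → ℝ) (m : ℕ) (v₀ : List α)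
    (hg : ∀ v x, 0 ≤ g v x) (hodd : ∀ v, Odd v.length → ∀ x, g v x = 1)
    (hv₀ : Even v₀.length) (hgood : Good g v₀)
    (hshort : ∀ v, v₀ <:+ v → Even v.length → ∀ a, g v a ≠ 0 →
      ∀ x y, x ≠ [] → x.length + 1 < 2 * m → ¬ x ++ y :: x <+: a :: v)
    (hkey : ∀ v, v₀ <:+ v → Even v.length → Good g v →
      1 + risk g (newThreats m v) v ≤ ∑ x, g v x) :
    AnnWins α := by
  classical
  have hmove (w : List α) : ∃ x, Even w.length → Safe g m v₀ w.reverse →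
      Safe g m v₀ (x :: w.reverse) := by
    by_cases hw : Even w.length ∧ Safe g m v₀ w.reverse
    · have heven : Even (w.reverse ++ v₀).length := by simpa using hw.1.add hv₀
      obtain ⟨x, hx⟩ := hw.2.exists_cons hg heven
        (hkey _ (List.suffix_append _ _) heven hw.2.1)
      exact ⟨x, fun _ _ => hx⟩
    · obtain ⟨x⟩ : Nonempty α := by
        by_contra hempty
        rw [not_nonempty_iff] at hempty
        have := hkey v₀ List.suffix_rfl hv₀ hgood
        have := risk_nonneg (v := v₀) hg (newThreats m v₀)
        simp only [Finset.univ_eq_empty, Finset.sum_empty] at *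
        linarith
      exact ⟨x, fun h₁ h₂ => absurd ⟨h₁, h₂⟩ hw⟩
  choose ψ hψ using hmove
  refine ⟨ψ, fun φ k u hu => ?_⟩
  have hsafe (k : ℕ) : Safe g m v₀ (playNR ψ φ k).reverse := by
    induction k with
    | zero => exact ⟨by simpa [playNR] using hgood, by simp [playNR, pendingThreats, risk]⟩
    | succ k ih =>
      rcases Nat.even_or_odd k with hk | hk
      · rw [playNR_succ_of_even ψ φ hk, List.reverse_concat]
        exact hψ _ (by rwa [length_playNR]) ih
      · rw [playNR_succ_of_odd ψ φ hk, List.reverse_concat]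
        exact ih.cons_of_odd hg hodd (by simpa [length_playNR] using hk.add_even hv₀) _
  refine not_square_infix_playNR (fun k hk => ?_) k hu
  obtain ⟨j, rfl⟩ := hk
  have heven : Even (playNR ψ φ (2 * j)).reverse.length := by simp [length_playNR]
  have hj := hsafe (2 * j + 1)
  rw [playNR_succ_of_even ψ φ (even_two_mul j), List.reverse_concat] at hj ⊢
  exact hj.not_endsInAlmostSquare hg hv₀ heven
    (hshort _ (List.suffix_append _ _) (by simpa using heven.add hv₀) _)

end Game

section Transfer

variable {α β : Type*} {ι : α → β} {π : β → α}

/-- Ben's counterpart of `φ` in the game over the smaller alphabet is read off the actual play. -/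
lemma map_playNR (h : Function.LeftInverse π ι) (ψ : List α → α) (φ : List β → β) (k : ℕ) :
    (playNR (fun w => ι (ψ (w.map π))) φ k).map π =
      playNR ψ (fun w => π (φ (playNR (fun w => ι (ψ (w.map π))) φ w.length))) k := by
  induction k with
  | zero => rfl
  | succ k ih =>
    rcases Nat.even_or_odd k with hk | hk
    · simp only [playNR_succ_of_even _ _ hk, List.map_append, List.map_cons, List.map_nil, ih, h _]
    · simp only [playNR_succ_of_odd _ _ hk, List.map_append, List.map_cons, List.map_nil, ih,
        length_playNR]

theorem AnnWins.of_leftInverse (h : Function.LeftInverse π ι) : AnnWins α → AnnWins β := by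
  rintro ⟨ψ, hψ⟩
  refine ⟨fun w => ι (ψ (w.map π)), fun φ k u hu hinf => ?_⟩
  have hmap := hinf.map π
  rw [List.map_append, map_playNR h] at hmap
  exact hψ _ k (u.map π) (by simpa using hu) hmap

end Transfer

noncomputable section DecisionTrees

/-- The letters of the four-letter alphabet, which also serve as colours in decision trees. -/
inductive Letter
  | c0 | c1 | c2 | c3
  deriving DecidableEq

open Letter

instance : Fintype Letter where
  elems := {c0, c1, c2, c3}
  complete x := by cases x <;> decide

namespace Letter

-- The kernel evaluates the certificates of this file.  To keep this cheap, the functions that they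
-- call often are written with recursors and `Nat` operations instead of `match`, `if` and classes.
def same (x y : Letter) : Bool :=
  Letter.rec (Letter.rec true false false false y) (Letter.rec false true false false y)
    (Letter.rec false false true false y) (Letter.rec false false false true y) x

/-- The next colour, where `c3` is the last one. -/
def next (k : Letter) : Letter := Letter.rec c1 c2 c3 c3 k

lemma same_eq_decide (x y : Letter) : x.same y = decide (x = y) := by
  cases x <;> cases y <;> rfl

lemma sum_univ {M : Type*} [AddCommMonoid M] (f : Letter → M) :
    ∑ x, f x = (f c0 + f c1) + (f c2 + f c3) := by
  change ∑ x ∈ ({c0, c1, c2, c3} : Finset Letter), f x = _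
  rw [Finset.sum_insert (by decide), Finset.sum_insert (by decide), Finset.sum_insert (by decide),
    Finset.sum_singleton]
  simp only [add_assoc]

end Letter

/-- A function of the history that reads letters, newest first, until it reaches a leaf.  While it
is read, letters are coloured: those that have been met get the colours `c0`, `c1`, ... in order of
appearance, the other ones have the smallest colour `k` not in use, which is recorded in the nodes,
and the child depends on the colour of the next letter.  So the function does not depend on the
names of the letters.  A leaf contains the weights, in thousandths, of playing a letter of a given
colour, followed by the potential and the aggregate of the history (see `ValidAt`). -/
inductive DecisionTree
  | leaf (g₀ g₁ g₂ g₃ potential aggregate : ℕ)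
  | node (k : Letter) (child : Letter → DecisionTree)

def natMax (a b : ℕ) : ℕ := Nat.add a (Nat.sub b a)

def natMin (a b : ℕ) : ℕ := Nat.sub a (Nat.sub a b)

lemma natMax_eq_max (a b : ℕ) : natMax a b = max a b := by
  change a + (b - a) = max a b
  omega

lemma natMin_eq_min (a b : ℕ) : natMin a b = min a b := by
  change a - (a - b) = min a b
  omega

/-- The colouring after reading `x` of colour `k`, the common colour of all unread letters. -/
def recolour (k x : Letter) (m : Letter → Letter) (y : Letter) : Letter :=
  Bool.rec (Bool.rec (m y) k.next ((m y).same k)) k (x.same y)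

lemma recolour_eq (k x : Letter) (m : Letter → Letter) (y : Letter) :
    recolour k x m y = if x = y then k else if m y = k then k.next else m y := by
  simp only [recolour, Letter.same_eq_decide]
  by_cases hxy : x = y <;> by_cases hy : m y = k <;> simp [hxy, hy]

namespace DecisionTree

/-- The subtree and the colouring reached from the tree `t` and the colouring `m`. -/
def descend (t : DecisionTree) :
    (Letter → Letter) → List Letter → DecisionTree × (Letter → Letter) :=
  DecisionTree.rec
    (motive := fun _ => (Letter → Letter) → List Letter → DecisionTree × (Letter → Letter))
    (fun g₀ g₁ g₂ g₃ h o m _ => (leaf g₀ g₁ g₂ g₃ h o, m))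
    (fun k child ih m v => List.rec (node k child, m) (fun x v _ =>
      Bool.rec (ih (m x) m v) (ih (m x) (recolour k x m) v) ((m x).same k)) v) t

def isLeaf (t : DecisionTree) : Bool :=
  DecisionTree.rec (fun _ _ _ _ _ _ => true) (fun _ _ _ => false) t

/-- A bound for the weights of a letter of the given colour in the leaves below `t`. -/
def maxWeight (t : DecisionTree) : Letter → ℕ :=
  DecisionTree.rec (fun g₀ g₁ g₂ g₃ _ _ y => Letter.rec g₀ g₁ g₂ g₃ y)
    (fun k _ ih y => (fun f : Letter → ℕ => Bool.rec (f y) (natMax (f y) (f k.next)) (y.same k))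
      (fun y => natMax (natMax (ih c0 y) (ih c1 y)) (natMax (ih c2 y) (ih c3 y)))) t

/-- The smallest potential in the leaves below `t`. -/
def minPotential (t : DecisionTree) : ℕ :=
  DecisionTree.rec (fun _ _ _ _ h _ => h)
    (fun _ _ ih => natMin (natMin (ih c0) (ih c1)) (natMin (ih c2) (ih c3))) t

def leafAggregate (t : DecisionTree) : ℕ :=
  DecisionTree.rec (fun _ _ _ _ _ o => o) (fun _ _ _ => 0) t

variable (t : DecisionTree) (m : Letter → Letter) (u v : List Letter)

lemma descend_node_cons (k x : Letter) (child : Letter → DecisionTree) :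
    descend (node k child) m (x :: v) =
      descend (child (m x)) (if m x = k then recolour k x m else m) v := by
  rw [show descend (node k child) m (x :: v) = Bool.rec (descend (child (m x)) m v)
    (descend (child (m x)) (recolour k x m) v) ((m x).same k) from rfl, Letter.same_eq_decide]
  by_cases h : m x = k <;> simp [h]

lemma descend_append : descend t m (u ++ v) = descend (descend t m u).1 (descend t m u).2 v := by
  induction t generalizing m u with
  | leaf => rfl
  | node k child ih =>
    cases u with
    | nil => rfl
    | cons x u => simp only [List.cons_append, descend_node_cons, ih]

lemma descend_of_isLeaf (h : t.isLeaf) : t.descend m v = (t, m) := by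
  cases t with
  | leaf => rfl
  | node => cases h

lemma minPotential_le_child (k c : Letter) (child : Letter → DecisionTree) :
    (node k child).minPotential ≤ (child c).minPotential := by
  rw [show (node k child).minPotential = natMin (natMin (child c0).minPotential
    (child c1).minPotential) (natMin (child c2).minPotential (child c3).minPotential) from rfl]
  simp only [natMin_eq_min]
  cases c <;> simp

lemma minPotential_le_descend : t.minPotential ≤ (t.descend m v).1.minPotential := by
  induction t generalizing m v with
  | leaf => exact le_rfl
  | node k child ih =>
    cases v with
    | nil => exact le_rfl
    | cons x v =>
      rw [descend_node_cons]
      exact (minPotential_le_child k (m x) child).trans (ih _ _ _)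

lemma maxWeight_child_le (k c : Letter) (child : Letter → DecisionTree) {y z : Letter}
    (hz : z = y ∨ y = k ∧ z = k.next) : (child c).maxWeight z ≤ (node k child).maxWeight y := by
  let f (y : Letter) : ℕ := natMax (natMax ((child c0).maxWeight y) ((child c1).maxWeight y))
    (natMax ((child c2).maxWeight y) ((child c3).maxWeight y))
  have hnode : (node k child).maxWeight y = if y = k then max (f y) (f k.next) else f y := by
    change Bool.rec (motive := fun _ => ℕ) (f y) (natMax (f y) (f k.next)) (y.same k) = _
    rw [Letter.same_eq_decide, natMax_eq_max]
    by_cases hk : y = k <;> simp [hk]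
  have hchild : (child c).maxWeight z ≤ f z := by
    simp only [f, natMax_eq_max]
    cases c <;> simp only [le_max_iff, le_refl, true_or, or_true]
  refine hchild.trans ?_
  rw [hnode]
  rcases hz with rfl | ⟨rfl, rfl⟩
  · split_ifs
    exacts [le_max_left _ _, le_rfl]
  · rw [if_pos rfl]
    exact le_max_right _ _

lemma maxWeight_descend_le (y : Letter) :
    (t.descend m v).1.maxWeight ((t.descend m v).2 y) ≤ t.maxWeight (m y) := by
  induction t generalizing m v with
  | leaf => exact le_rfl
  | node k child ih =>
    cases v with
    | nil => exact le_rfl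
    | cons x v =>
      rw [descend_node_cons]
      refine (ih _ _ _).trans (maxWeight_child_le k (m x) child ?_)
      by_cases hx : m x = k
      · rw [if_pos hx, recolour_eq]
        grind
      · simp [hx]

variable {m} in
lemma descend_map (σ : Equiv.Perm Letter) {m' : Letter → Letter} (h : ∀ y, m' (σ y) = m y) :
    (t.descend m' (v.map σ)).1 = (t.descend m v).1 ∧
      ∀ y, (t.descend m' (v.map σ)).2 (σ y) = (t.descend m v).2 y := by
  induction t generalizing m m' v with
  | leaf => exact ⟨rfl, h⟩
  | node k child ih =>
    cases v with
    | nil => exact ⟨rfl, h⟩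
    | cons x v =>
      rw [List.map_cons, descend_node_cons, descend_node_cons, h]
      refine ih _ _ fun y => ?_
      by_cases hx : m x = k
      · simp [hx, recolour_eq, h]
      · simp [hx, h]

/-- The subtree of `t` and the colouring to which the history `v` leads. -/
def reached : DecisionTree × (Letter → Letter) := t.descend (fun _ => c0) v

/-- The history `v` leads to a leaf. -/
def settled : Bool := (t.reached v).1.isLeaf

/-- A bound for the weight of playing `x` after any history with newest letters `v`. -/
def weight (x : Letter) : ℕ :=
  Letter.rec ((t.reached v).1.maxWeight c0) ((t.reached v).1.maxWeight c1)
    ((t.reached v).1.maxWeight c2) ((t.reached v).1.maxWeight c3) ((t.reached v).2 x)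

/-- A lower bound for the potential of any history with newest letters `v`. -/
def potential : ℕ := (t.reached v).1.minPotential

/-- The aggregate of the settled history `v`. -/
def aggregate : ℕ := (t.reached v).1.leafAggregate

lemma reached_append : t.reached (u ++ v) = descend (t.reached u).1 (t.reached u).2 v :=
  descend_append t _ u v

lemma weight_eq (x : Letter) :
    t.weight v x = (t.reached v).1.maxWeight ((t.reached v).2 x) := by
  rw [weight]
  cases (t.reached v).2 x <;> rfl

lemma weight_append_le (x : Letter) : t.weight (u ++ v) x ≤ t.weight u x := by
  simpa only [weight_eq, reached_append] using maxWeight_descend_le _ _ v x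

lemma potential_le_append : t.potential u ≤ t.potential (u ++ v) := by
  simpa only [potential, reached_append] using minPotential_le_descend _ _ v

variable {t u}

lemma reached_append_of_settled (h : t.settled u) : t.reached (u ++ v) = t.reached u := by
  rw [reached_append, descend_of_isLeaf _ _ _ h]

lemma weight_append_of_settled (h : t.settled u) (x : Letter) :
    t.weight (u ++ v) x = t.weight u x := by
  rw [weight, reached_append_of_settled v h, weight]

lemma potential_append_of_settled (h : t.settled u) : t.potential (u ++ v) = t.potential u := by
  rw [potential, reached_append_of_settled v h, potential]

lemma aggregate_append_of_settled (h : t.settled u) : t.aggregate (u ++ v) = t.aggregate u := by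
  rw [aggregate, reached_append_of_settled v h, aggregate]

variable (t) (σ : Equiv.Perm Letter)

lemma reached_map_fst : (t.reached (v.map σ)).1 = (t.reached v).1 :=
  (t.descend_map v σ fun _ => rfl).1

lemma potential_map : t.potential (v.map σ) = t.potential v := by
  rw [potential, reached_map_fst, potential]

lemma aggregate_map : t.aggregate (v.map σ) = t.aggregate v := by
  rw [aggregate, reached_map_fst, aggregate]

lemma weight_map (x : Letter) : t.weight (v.map σ) (σ x) = t.weight v x := by
  rw [weight_eq, weight_eq, reached_map_fst]
  exact congrArg _ ((t.descend_map v σ fun _ => rfl).2 x)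

end DecisionTree

end DecisionTrees

noncomputable section Search

open Letter

/-- `f (v.reverse ++ acc)`, with the argument of `f` evaluated first. -/
def reverseThen {β : Type} (v : List Letter) : List Letter → (List Letter → β) → β :=
  List.rec (motive := fun _ => List Letter → (List Letter → β) → β) (fun acc f => f acc)
    (fun x _ ih acc f => ih (x :: acc) f) v

lemma reverseThen_eq {β : Type} (v acc : List Letter) (f : List Letter → β) :
    reverseThen v acc f = f (v.reverse ++ acc) := by
  induction v generalizing acc with
  | nil => rfl
  | cons x v ih =>
    rw [List.reverse_cons, List.append_assoc]
    exact ih (x :: acc)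

/-- Whether every word of length at least `w.length + n` that starts with `w.reverse` has a prefix
that passes the test, up to a permutation of the letters in `fresh`, which do not occur in `w`. -/
def search (test : List Letter → Bool) (n : ℕ) :
    List Letter → List Letter → List Letter → Bool :=
  Nat.rec (motive := fun _ => List Letter → List Letter → List Letter → Bool)
    (fun _ _ _ => false)
    (fun _ ih w used fresh =>
      reverseThen w [] test || (used.all (fun x => ih (x :: w) used fresh) &&
        (List.rec true (fun x fresh _ => ih (x :: w) (x :: used) fresh) fresh))) n

variable {test : List Letter → Bool} {n : ℕ}

lemma search_succ {w used fresh : List Letter}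
    (h : search test (n + 1) w used fresh = true) : test w.reverse = true ∨
      (∀ x ∈ used, search test n (x :: w) used fresh = true) ∧
      ∀ x fresh', fresh = x :: fresh' → search test n (x :: w) (x :: used) fresh' = true := by
  replace h : (reverseThen w [] test || (used.all (fun x => search test n (x :: w) used fresh) &&
    (List.rec true (fun x fresh _ => search test n (x :: w) (x :: used) fresh) fresh : Bool))) =
      true := h
  rw [Bool.or_eq_true, Bool.and_eq_true, List.all_eq_true, reverseThen_eq, List.append_nil] at h
  refine h.imp_right fun h => ⟨h.1, ?_⟩
  rintro x fresh' rfl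
  exact h.2

variable {P : List Letter → Prop}

lemma of_search_reverse_append (hperm : ∀ (σ : Equiv.Perm Letter) v, P (v.map σ) → P v)
    (htest : ∀ e, test e = true → ∀ s, P (e ++ s)) {w used fresh : List Letter}
    (hmem : ∀ x, x ∈ used ++ fresh) (hnodup : (used ++ fresh).Nodup) (hw : ∀ x ∈ w, x ∈ used)
    (h : search test n w used fresh = true) {s : List Letter} (hs : n ≤ s.length) :
    P (w.reverse ++ s) := by
  induction n generalizing w used fresh s with
  | zero => cases h
  | succ n ih =>
    obtain htrue | ⟨hused, hfresh⟩ := search_succ h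
    · exact htest _ htrue s
    obtain ⟨x, s, rfl⟩ := List.exists_cons_of_length_pos (by omega : 0 < s.length)
    rw [List.length_cons, Nat.add_le_add_iff_right] at hs
    rcases List.mem_append.1 (hmem x) with hx | hx
    · have := ih hmem hnodup (List.forall_mem_cons.2 ⟨hx, hw⟩) (hused x hx) hs
      rwa [List.reverse_cons, List.append_assoc] at this
    · obtain ⟨y, fresh, rfl⟩ := List.exists_cons_of_ne_nil (List.ne_nil_of_mem hx)
      have hshift : (y :: used ++ fresh).Perm (used ++ y :: fresh) := List.perm_middle.symm
      have hfix (z) (hz : z ∈ w) : Equiv.swap x y z = z := by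
        have hdisj := List.disjoint_of_nodup_append hnodup (hw z hz)
        exact Equiv.swap_apply_of_ne_of_ne (by rintro rfl; exact hdisj hx)
          (by rintro rfl; exact hdisj List.mem_cons_self)
      have := ih (fun z => hshift.mem_iff.2 (hmem z)) (hshift.nodup_iff.2 hnodup)
        (List.forall_mem_cons.2 ⟨List.mem_cons_self, fun z hz => List.mem_cons_of_mem _ (hw z hz)⟩)
        (hfresh y fresh rfl) (s := s.map (Equiv.swap x y)) (by simpa using hs)
      refine hperm (Equiv.swap x y) _ ?_
      have hmap : w.map (Equiv.swap x y) = w := by simpa using List.map_congr_left hfix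
      rwa [List.map_append, List.map_reverse, hmap, List.map_cons, Equiv.swap_apply_left,
        ← List.singleton_append, ← List.append_assoc, ← List.reverse_cons]

theorem of_search (hperm : ∀ (σ : Equiv.Perm Letter) v, P (v.map σ) → P v)
    (htest : ∀ e, test e = true → ∀ s, P (e ++ s))
    (h : search test n [] [] [c0, c1, c2, c3] = true) {v : List Letter} (hv : n ≤ v.length) :
    P v :=
  of_search_reverse_append hperm htest (fun x => by cases x <;> simp) (by decide) (by simp) h hv

end Search

noncomputable section LocalConditions

open Letter

variable (t : DecisionTree) (u v : List Letter)

/-- The conditions which make `t.potential` decrease on average during two moves, for histories with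
newest letters `v`, and which keep Ann from threatening herself with a short square. -/
structure DecisionTree.ValidAt : Prop where
  no_overlap : ∀ a, t.weight v a ≠ 0 →
    ∀ x y, x ≠ [] → x.length ≤ 6 → ¬ x ++ y :: x <+: a :: v
  weight_mul_potential_le : ∀ a b,
    t.weight v a * t.potential (b :: a :: v) ≤ 592 * t.potential v
  sum_weight_mul_potential_le : ∀ b,
    ∑ a, t.weight v a * t.potential (b :: a :: v) ≤ 1000 * t.aggregate v

variable {t v} in
lemma DecisionTree.ValidAt.of_map {σ : Equiv.Perm Letter} (h : t.ValidAt (v.map σ)) :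
    t.ValidAt v where
  no_overlap a ha x y hx hlen hpre := by
    refine h.no_overlap (σ a) (by rwa [t.weight_map]) (x.map σ) (σ y) (by simpa using hx)
      (by simpa using hlen) ?_
    simpa using hpre.map σ
  weight_mul_potential_le a b := by
    simpa only [← List.map_cons, t.weight_map, t.potential_map] using
      h.weight_mul_potential_le (σ a) (σ b)
  sum_weight_mul_potential_le b := by
    have := h.sum_weight_mul_potential_le (σ b)
    rw [← Equiv.sum_comp σ] at this
    simpa only [← List.map_cons, t.weight_map, t.potential_map, t.aggregate_map] using this

/-- Whether the first `n` letters of `u` and `v` agree, as far as there are so many letters. -/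
def agree (n : ℕ) : List Letter → List Letter → Bool :=
  Nat.rec (motive := fun _ => List Letter → List Letter → Bool) (fun _ _ => true)
    (fun _ ih u v => List.rec true (fun x u _ => List.rec true
      (fun y v _ => Bool.rec false (ih u v) (x.same y)) v) u) n

variable {u v}

lemma agree_of_prefix {x s s' : List Letter} (hu : x <+: u ++ s) (hv : x <+: v ++ s') :
    agree x.length u v = true := by
  induction x generalizing u v with
  | nil => rfl
  | cons a x ih =>
    cases u with
    | nil => rfl
    | cons b u =>
      cases v with
      | nil => rfl
      | cons c v =>
        obtain ⟨rfl, hxu⟩ := List.cons_prefix_cons.1 hu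
        obtain ⟨rfl, hxv⟩ := List.cons_prefix_cons.1 hv
        change Bool.rec (motive := fun _ => Bool) false (agree x.length u v) (a.same a) = true
        simpa [Letter.same_eq_decide] using ih hxu hxv

lemma agree_of_overlap {x s : List Letter} {y : Letter} (h : x ++ y :: x <+: u ++ s) :
    agree x.length u (u.drop (x.length + 1)) = true := by
  by_cases hu : u.length ≤ x.length
  · rw [List.drop_of_length_le (by omega)]
    cases x <;> cases u <;> rfl
  · refine agree_of_prefix ((List.prefix_append _ _).trans h) (s' := s) ?_
    have := h.drop (x.length + 1)
    rwa [List.append_cons, List.drop_left' (by simp), List.drop_append_of_le_length (by omega)]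
      at this

/-- Given `d = v.drop (k + 1)`, whether `v` and `v.drop (j + 1)` do not agree on the first `j`
letters whenever `k ≤ j < k + n`. -/
def noOverlap (n : ℕ) (v : List Letter) : ℕ → List Letter → Bool :=
  Nat.rec (motive := fun _ => ℕ → List Letter → Bool) (fun _ _ => true)
    (fun _ ih k d => (agree k v d).not && ih (Nat.succ k) d.tail) n

lemma agree_eq_false_of_noOverlap {n k j : ℕ} (h : noOverlap n v k (v.drop (k + 1)) = true)
    (hk : k ≤ j) (hj : j < k + n) : agree j v (v.drop (j + 1)) = false := by
  induction n generalizing k with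
  | zero => omega
  | succ n ih =>
    replace h : ((agree k v (v.drop (k + 1))).not &&
      noOverlap n v (k + 1) (v.drop (k + 1)).tail) = true := h
    rw [Bool.and_eq_true, Bool.not_eq_true', List.tail_drop] at h
    rcases hk.eq_or_lt with rfl | hk
    · exact h.1
    · exact ih h.2 hk (by omega)

def Letter.forallLetter (p : Letter → Bool) : Bool := (p c0 && p c1) && (p c2 && p c3)

lemma Letter.forallLetter_iff {p : Letter → Bool} : forallLetter p = true ↔ ∀ x, p x = true := by
  simp only [forallLetter, Bool.and_eq_true]
  exact ⟨fun h x => by cases x <;> simp [h], fun h => by simp [h]⟩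

def Letter.sumLetter (f : Letter → ℕ) : ℕ := (f c0 + f c1) + (f c2 + f c3)

/-- Implies that `t.ValidAt` holds for all histories with newest letters `v`. -/
def DecisionTree.localTest (v : List Letter) : Bool :=
  t.settled v && (forallLetter fun a => (t.weight v a).beq 0 ||
    (noOverlap 6 (a :: v) 1 v.tail && forallLetter fun b => t.settled (b :: a :: v) &&
      Nat.ble (t.weight v a * t.potential (b :: a :: v)) (592 * t.potential v))) &&
  (forallLetter fun b =>
    Nat.ble (sumLetter fun a => t.weight v a * t.potential (b :: a :: v)) (1000 * t.aggregate v))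

lemma DecisionTree.validAt_of_localTest (h : t.localTest v = true) (s : List Letter) :
    t.ValidAt (v ++ s) := by
  simp only [localTest, Bool.and_eq_true, forallLetter_iff, Bool.or_eq_true, Nat.beq_eq,
    Nat.ble_eq] at h
  obtain ⟨⟨hv, hweight⟩, hsum⟩ := h
  have hterm (a b) : t.weight (v ++ s) a * t.potential (b :: a :: (v ++ s)) =
      t.weight v a * t.potential (b :: a :: v) := by
    rw [weight_append_of_settled s hv]
    rcases hweight a with ha | ha
    · simp [ha]
    · rw [show b :: a :: (v ++ s) = (b :: a :: v) ++ s from rfl,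
        potential_append_of_settled s (ha.2 b).1]
  refine ⟨fun a ha x y hx hlen hpre => ?_, fun a b => ?_, fun b => ?_⟩
  · rw [weight_append_of_settled s hv] at ha
    have := agree_eq_false_of_noOverlap (v := a :: v) (k := 1)
      (by simpa using ((hweight a).resolve_left ha).1) (List.length_pos_of_ne_nil hx)
      (by omega : x.length < 1 + 6)
    rw [agree_of_overlap (u := a :: v) hpre] at this
    cases this
  · rw [hterm, potential_append_of_settled s hv]
    rcases hweight a with ha | ha
    · simp [ha]
    · exact (ha.2 b).2
  · simp only [hterm, aggregate_append_of_settled s hv]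
    rw [Letter.sum_univ]
    exact hsum b

end LocalConditions

noncomputable section Potential

open Letter

namespace DecisionTree

/-- The weight of playing `x` after the history `v`.  Ben's moves are not restricted. -/
def playWeight (t : DecisionTree) (v : List Letter) (x : Letter) : ℝ :=
  if Even v.length then t.weight v x / 1000 else 1

/-- The histories of length at least `n` satisfy the local conditions, and potentials are positive.
Then `t.potential` is a supermartingale with decay rate `592 / 1000` for Ann's weights. -/
structure Valid (t : DecisionTree) (n : ℕ) : Prop where
  potential_nil_pos : 0 < t.potential []
  validAt : ∀ v, n ≤ v.length → t.ValidAt v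

variable {t : DecisionTree} {n : ℕ} {v : List Letter}

lemma playWeight_nonneg (v : List Letter) (x : Letter) : 0 ≤ t.playWeight v x := by
  unfold playWeight
  split_ifs <;> positivity

lemma playWeight_of_even (hv : Even v.length) (x : Letter) :
    t.playWeight v x = t.weight v x / 1000 := if_pos hv

lemma playWeight_of_odd (hv : Odd v.length) (x : Letter) : t.playWeight v x = 1 :=
  if_neg (Nat.not_even_iff_odd.2 hv)

lemma playWeight_map (σ : Equiv.Perm Letter) (v : List Letter) (x : Letter) :
    t.playWeight (v.map σ) (σ x) = t.playWeight v x := by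
  rw [playWeight, playWeight, List.length_map, t.weight_map]

lemma Valid.potential_pos (h : t.Valid n) (v : List Letter) : 0 < t.potential v :=
  h.potential_nil_pos.trans_le (t.potential_le_append [] v)

lemma Valid.futureWeight_mul_potential_le (h : t.Valid n) (hv : Even v.length)
    (hn : n ≤ v.length) {s : List Letter} {j : ℕ} (hs : s.length = 2 * j) :
    futureWeight t.playWeight s v * t.potential (s.reverse ++ v) ≤
      (592 / 1000 : ℝ) ^ j * t.potential v := by
  induction j generalizing s v with
  | zero =>
    obtain rfl := List.length_eq_zero_iff.1 hs
    simp
  | succ j ih =>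
    obtain ⟨a, b, s, rfl⟩ : ∃ a b s', s = a :: b :: s' := by
      match s, hs with
      | a :: b :: s', _ => exact ⟨a, b, s', rfl⟩
    have hstep : (t.weight v a * t.potential (b :: a :: v) : ℝ) ≤ 592 * t.potential v := by
      exact_mod_cast (h.validAt v hn).weight_mul_potential_le a b
    have hrest := ih (v := b :: a :: v) (s := s) (by simpa [Nat.even_add_one] using hv)
      (by simp; omega) (by simp at hs; omega)
    rw [futureWeight_cons, futureWeight_cons, playWeight_of_even hv,
      playWeight_of_odd (by simpa using hv.add_one), one_mul, mul_assoc]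
    calc t.weight v a / 1000 * (futureWeight t.playWeight s (b :: a :: v) *
          t.potential ((a :: b :: s).reverse ++ v))
        ≤ t.weight v a / 1000 * ((592 / 1000 : ℝ) ^ j * t.potential (b :: a :: v)) := by
          refine mul_le_mul_of_nonneg_left ?_ (by positivity)
          simpa only [List.reverse_cons, List.append_assoc, List.cons_append,
            List.nil_append] using hrest
      _ = (592 / 1000 : ℝ) ^ j / 1000 * (t.weight v a * t.potential (b :: a :: v)) := by ring
      _ ≤ (592 / 1000 : ℝ) ^ j / 1000 * (592 * t.potential v) := by gcongr
      _ = (592 / 1000 : ℝ) ^ (j + 1) * t.potential v := by ring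

lemma Valid.futureWeight_le_div (h : t.Valid n) (hv : Even v.length) (hn : n ≤ v.length)
    {r s : List Letter} {j : ℕ} (hs : (r ++ s).length = 2 * j) :
    futureWeight t.playWeight (r ++ s).reverse v ≤
      (592 / 1000 : ℝ) ^ j * t.potential v / t.potential r := by
  have hpos : (0 : ℝ) < t.potential r := by exact_mod_cast h.potential_pos r
  have hmono : (t.potential r : ℝ) ≤ t.potential (r ++ s ++ v) := by
    exact_mod_cast (t.potential_le_append r (s ++ v)).trans_eq (by rw [List.append_assoc])
  rw [le_div_iff₀ hpos]
  refine le_trans ?_ (h.futureWeight_mul_potential_le hv hn (s := (r ++ s).reverse)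
    (by rwa [List.length_reverse]))
  rw [List.reverse_reverse]
  exact mul_le_mul_of_nonneg_left hmono (futureWeight_nonneg playWeight_nonneg)

/-- A bound for `10 ^ 6` times the contribution of the last three letters to the weight of a word
that ends, up to reversal, in `e`. -/
def endFactor (t : DecisionTree) (e : List Letter) : ℕ :=
  match e with
  | a :: b :: c :: r =>
    natMin (1000000 * t.weight (b :: c :: r) a / (592 * t.potential (b :: c :: r)) + 1)
      (1000000 * (t.weight (b :: c :: r) a * t.weight r c) / (350464 * t.potential r) + 1)
  | _ => 0

lemma playWeight_append_le {r s : List Letter} (hrs : Even (r ++ s).length) (x : Letter) :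
    t.playWeight (r ++ s) x ≤ t.weight r x / 1000 := by
  rw [playWeight_of_even hrs]
  gcongr
  exact_mod_cast t.weight_append_le r s x

lemma Valid.futureWeight_le_last (h : t.Valid n) (hv : Even v.length) (hn : n ≤ v.length)
    {a : Letter} {r s : List Letter} {j : ℕ} (hs : (r ++ s).length = 2 * j) :
    futureWeight t.playWeight (a :: (r ++ s)).reverse v ≤
      (592 / 1000 : ℝ) ^ (j + 1) * t.potential v * (t.weight r a / (592 * t.potential r)) := by
  have hlast := playWeight_append_le (t := t) (r := r) (s := s ++ v)
    (by rw [← List.append_assoc, List.length_append, hs]; exact (even_two_mul j).add hv) a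
  rw [futureWeight_reverse_cons, List.append_assoc]
  calc futureWeight t.playWeight (r ++ s).reverse v * t.playWeight (r ++ (s ++ v)) a
      ≤ (592 / 1000 : ℝ) ^ j * t.potential v / t.potential r * (t.weight r a / 1000) :=
        mul_le_mul (h.futureWeight_le_div hv hn hs) hlast (playWeight_nonneg _ _) (by positivity)
    _ = _ := by ring

lemma Valid.futureWeight_le_last_two (h : t.Valid n) (hv : Even v.length) (hn : n ≤ v.length)
    {a b c : Letter} {r s : List Letter} {j : ℕ} (hs : (r ++ s).length = 2 * j) :
    futureWeight t.playWeight (a :: b :: c :: (r ++ s)).reverse v ≤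
      (592 / 1000 : ℝ) ^ (j + 2) * t.potential v *
        (t.weight (b :: c :: r) a * t.weight r c / (350464 * t.potential r)) := by
  have heven : Even (b :: c :: (r ++ (s ++ v))).length := by
    rw [← List.append_assoc, List.length_cons, List.length_cons, List.length_append, hs]
    exact ((even_two_mul j).add hv).add even_two
  have hlast := playWeight_append_le (t := t) (r := b :: c :: r) (s := s ++ v) heven a
  rw [futureWeight_reverse_cons, futureWeight_reverse_cons]
  simp only [List.cons_append, List.append_assoc]
  rw [playWeight_of_odd (by simpa [Nat.even_add_one, Nat.odd_add_one] using heven), mul_one]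
  calc futureWeight t.playWeight (c :: (r ++ s)).reverse v *
        t.playWeight (b :: c :: (r ++ (s ++ v))) a
      ≤ (592 / 1000 : ℝ) ^ (j + 1) * t.potential v * (t.weight r c / (592 * t.potential r)) *
          (t.weight (b :: c :: r) a / 1000) :=
        mul_le_mul (h.futureWeight_le_last hv hn hs) hlast (playWeight_nonneg _ _) (by positivity)
    _ = _ := by ring

lemma div_le_natDiv_add_one (x : ℕ) {y : ℕ} (hy : 0 < y) :
    (x / y : ℝ) ≤ (1000000 * x / y + 1 : ℕ) / 1000000 := by
  have := Nat.lt_div_mul_add hy (a := 1000000 * x)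
  rw [div_le_div_iff₀ (by positivity) (by norm_num)]
  norm_cast
  linarith

lemma Valid.futureWeight_le_endFactor (h : t.Valid n) (hv : Even v.length) (hn : n ≤ v.length)
    {e d : List Letter} (he : 3 ≤ e.length) (hd : e <+: d) {j : ℕ} (hj : d.length + 1 = 2 * j) :
    futureWeight t.playWeight d.reverse v ≤
      (592 / 1000 : ℝ) ^ j * (t.potential v * t.endFactor e / 1000000) := by
  obtain ⟨s, rfl⟩ := hd
  obtain ⟨a, b, c, r, rfl⟩ : ∃ a b c r, e = a :: b :: c :: r := by
    match e, he with
    | a :: b :: c :: r, _ => exact ⟨a, b, c, r, rfl⟩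
  obtain ⟨i, rfl⟩ : ∃ i, j = i + 2 := ⟨j - 2, by simp at hj; omega⟩
  have hs : (r ++ s).length = 2 * i := by simp at hj ⊢; omega
  have hlast := h.futureWeight_le_last hv hn (a := a) (r := b :: c :: r) (s := s) (j := i + 1)
    (by simpa [mul_add] using hs)
  have hlast₂ := h.futureWeight_le_last_two hv hn (a := a) (b := b) (c := c) hs
  have hmin : (t.endFactor (a :: b :: c :: r) : ℝ) / 1000000 =
      min ((1000000 * t.weight (b :: c :: r) a / (592 * t.potential (b :: c :: r)) + 1 : ℕ) /
          1000000 : ℝ)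
        ((1000000 * (t.weight (b :: c :: r) a * t.weight r c) / (350464 * t.potential r) + 1 : ℕ) /
          1000000) := by
    rw [endFactor, natMin_eq_min, Nat.cast_min, min_div_div_right (by norm_num)]
  rw [mul_div_assoc, hmin, ← mul_assoc, mul_min_of_nonneg _ _ (by positivity)]
  refine le_min (hlast.trans (mul_le_mul_of_nonneg_left ?_ (by positivity)))
    (hlast₂.trans (mul_le_mul_of_nonneg_left ?_ (by positivity)))
  · simpa only [Nat.cast_mul, Nat.cast_ofNat] using div_le_natDiv_add_one
      (t.weight (b :: c :: r) a) (Nat.mul_pos (by norm_num : 0 < 592) (h.potential_pos _))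
  · simpa only [Nat.cast_mul, Nat.cast_ofNat] using div_le_natDiv_add_one
      (t.weight (b :: c :: r) a * t.weight r c)
      (Nat.mul_pos (by norm_num : 0 < 350464) (h.potential_pos _))

end DecisionTree

end Potential

noncomputable section KeyInequality

open Letter

/-- `f ((v.take n).reverse ++ acc)`, with the argument of `f` evaluated first. -/
def reverseTakeThen {β : Type} (n : ℕ) : List Letter → List Letter → (List Letter → β) → β :=
  Nat.rec (motive := fun _ => List Letter → List Letter → (List Letter → β) → β)
    (fun _ acc f => f acc)
    (fun _ ih v acc f => List.rec (f acc) (fun x v _ => ih v (x :: acc) f) v) n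

lemma reverseTakeThen_eq {β : Type} (n : ℕ) (v acc : List Letter) (f : List Letter → β) :
    reverseTakeThen n v acc f = f ((v.take n).reverse ++ acc) := by
  induction n generalizing v acc with
  | zero => rfl
  | succ n ih =>
    cases v with
    | nil => rfl
    | cons x v =>
      rw [List.take_succ_cons, List.reverse_cons, List.append_assoc]
      exact ih v (x :: acc)

namespace DecisionTree

/-- A bound for the weight of playing `s` after a history with newest letters `v`, in units of
`1 / 1000` per move of Ann.  The Boolean tells whether Ann is to move. -/
def weightProduct (t : DecisionTree) (s : List Letter) : Bool → List Letter → ℕ :=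
  List.rec (motive := fun _ => Bool → List Letter → ℕ) (fun _ _ => 1)
    (fun x _ ih b v => Bool.rec (ih true (x :: v))
      (Bool.rec (Nat.mul (t.weight v x) (ih false (x :: v))) 0 ((t.weight v x).beq 0)) b) s

/-- A bound for `1000 ^ (k + 1)` times the risk of `periodThreats v k` if `v` has newest letters
`e`. -/
def periodRisk (t : DecisionTree) (e : List Letter) (k : ℕ) : ℕ :=
  1000 * reverseTakeThen (2 * k - 1) e.tail [] (fun s => t.weightProduct s true e) +
    reverseTakeThen (2 * k) e [] (fun s =>
      (t.weightProduct (c0 :: s) true e + t.weightProduct (c1 :: s) true e) +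
        (t.weightProduct (c2 :: s) true e + t.weightProduct (c3 :: s) true e))

/-- The bound for `1000 ^ (n + 4)` times the risk of all threats of period `8, …, 2 * n + 7`. -/
def shortRisk (t : DecisionTree) (e : List Letter) (n : ℕ) : ℕ :=
  Nat.rec 0 (fun j S => 1000 * S + t.periodRisk e (j + 4)) n

/-- Whether Ann would have had to play a letter of weight zero in order to reach a history with
newest letters `e`.  The Boolean tells whether Ann has made the last move. -/
def unplayable (t : DecisionTree) (e : List Letter) : Bool → Bool :=
  List.rec (motive := fun _ => Bool → Bool) (fun _ => false)
    (fun x e ih b => Bool.rec (ih true) (Bool.rec (ih false) true ((t.weight e x).beq 0)) b) e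

/-- Implies the key inequality for the histories with newest letters `e`.  With
`K = e.length / 2`, the threats of period at most `2 * K + 1` are bounded one by one, and the other
ones by a geometric series with ratio `592 / 1000`, where `408 = 1000 - 592`. -/
def keyTest (t : DecisionTree) (e : List Letter) : Bool :=
  Nat.ble 6 e.length && (t.unplayable e false || (t.settled e &&
    (fun K => Nat.ble
      (Nat.pow 592 (K + 1) *
          (t.potential e * t.endFactor e.tail + t.aggregate e * t.endFactor e) +
        408000 * (Nat.pow 1000 (K + 1) + t.shortRisk e (K - 3)))
      (408000 * ((t.weight e c0 + t.weight e c1) + (t.weight e c2 + t.weight e c3)) *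
        Nat.pow 1000 K)) (e.length / 2)))

variable {t : DecisionTree} {n : ℕ} {e v s : List Letter}

lemma weightProduct_cons_true (x : Letter) :
    t.weightProduct (x :: s) true e = t.weight e x * t.weightProduct s false (x :: e) := by
  rw [show t.weightProduct (x :: s) true e = Bool.rec (motive := fun _ => ℕ)
    (t.weight e x * t.weightProduct s false (x :: e)) 0 ((t.weight e x).beq 0) from rfl]
  cases h : (t.weight e x).beq 0
  · rfl
  · rw [Nat.eq_of_beq_eq_true h, zero_mul]

lemma futureWeight_mul_le_weightProduct (u : List Letter) :
    (Even (e ++ u).length → futureWeight t.playWeight s (e ++ u) * 1000 ^ ((s.length + 1) / 2) ≤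
      t.weightProduct s true e) ∧
    (Odd (e ++ u).length → futureWeight t.playWeight s (e ++ u) * 1000 ^ (s.length / 2) ≤
      t.weightProduct s false e) := by
  induction s generalizing e with
  | nil => constructor <;> simp [weightProduct]
  | cons x s ih =>
    obtain ⟨ihAnn, ihBen⟩ := @ih (x :: e)
    rw [List.cons_append, List.length_cons] at ihAnn ihBen
    rw [futureWeight_cons, List.length_cons, weightProduct_cons_true]
    refine ⟨fun heven => ?_, fun hodd => ?_⟩
    · have hx := playWeight_append_le (t := t) heven x
      have hs := ihBen heven.add_one
      rw [show (s.length + 1 + 1) / 2 = s.length / 2 + 1 by omega]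
      push_cast
      calc t.playWeight (e ++ u) x * futureWeight t.playWeight s (x :: (e ++ u)) *
            1000 ^ (s.length / 2 + 1)
          = t.playWeight (e ++ u) x * 1000 *
              (futureWeight t.playWeight s (x :: (e ++ u)) * 1000 ^ (s.length / 2)) := by ring
        _ ≤ t.weight e x * t.weightProduct s false (x :: e) := by
          refine mul_le_mul (by linarith) hs ?_ (by positivity)
          exact mul_nonneg (futureWeight_nonneg playWeight_nonneg) (by positivity)
    · rw [playWeight_of_odd hodd, one_mul]
      exact ihAnn hodd.add_one

lemma risk_periodThreats_mul_le (u : List Letter) (heven : Even (e ++ u).length) {k : ℕ}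
    (hk : 0 < k) (hke : 2 * k ≤ e.length) :
    risk t.playWeight (periodThreats (e ++ u) k) (e ++ u) * 1000 ^ (k + 1) ≤ t.periodRisk e k := by
  have he : e ≠ [] := by rintro rfl; simp at hke; omega
  have hhalf : (((e.tail.take (2 * k - 1)).reverse).length + 1) / 2 = k := by simp; omega
  have hhalf' (c) : ((c :: (e.take (2 * k)).reverse).length + 1) / 2 = k + 1 := by simp; omega
  have hword := (futureWeight_mul_le_weightProduct (t := t) (e := e)
    (s := (e.tail.take (2 * k - 1)).reverse) u).1 heven
  have hcons (c) := (futureWeight_mul_le_weightProduct (t := t) (e := e)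
    (s := c :: (e.take (2 * k)).reverse) u).1 heven
  rw [hhalf] at hword
  simp only [hhalf'] at hcons
  rw [risk_periodThreats, List.tail_append_of_ne_nil he,
    List.take_append_of_le_length (by simp; omega),
    List.take_append_of_le_length hke, periodRisk, reverseTakeThen_eq, reverseTakeThen_eq,
    ← Letter.sum_univ (fun c => t.weightProduct (c :: _) true e), List.append_nil, List.append_nil,
    add_mul, Finset.sum_mul]
  push_cast
  refine add_le_add ?_ (Finset.sum_le_sum fun c _ => hcons c)
  rw [pow_succ]
  linarith

lemma sum_risk_periodThreats_mul_le (u : List Letter) (heven : Even (e ++ u).length) {j : ℕ}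
    (hj : 2 * (j + 3) ≤ e.length) :
    (∑ k ∈ Finset.Ico 4 (j + 4), risk t.playWeight (periodThreats (e ++ u) k) (e ++ u)) *
      1000 ^ (j + 4) ≤ t.shortRisk e j := by
  induction j with
  | zero => simp [shortRisk]
  | succ j ih =>
    have hrest := ih (by omega)
    have hlast := risk_periodThreats_mul_le (t := t) u heven (k := j + 4) (by omega)
      (by omega)
    rw [show t.shortRisk e (j + 1) = 1000 * t.shortRisk e j + t.periodRisk e (j + 4) from rfl,
      show j + 1 + 4 = j + 4 + 1 by rfl, Finset.sum_Ico_succ_top (by omega), add_mul]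
    push_cast
    refine add_le_add ?_ hlast
    rw [pow_succ]
    linarith

lemma not_good_of_unplayable (u : List Letter) :
    (Even (e ++ u).length → t.unplayable e false = true → ¬ Good t.playWeight (e ++ u)) ∧
    (Odd (e ++ u).length → t.unplayable e true = true → ¬ Good t.playWeight (e ++ u)) := by
  induction e with
  | nil => simp [unplayable]
  | cons x e ih =>
    rw [List.cons_append, List.length_cons, good_cons]
    refine ⟨fun heven h hgood => ?_, fun hodd h hgood => ?_⟩
    · exact ih.2 (by simpa [Nat.even_add_one] using heven) h hgood.1
    · have heven : Even (e ++ u).length := by simpa [Nat.odd_add_one] using hodd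
      by_cases hx : t.weight e x = 0
      · have := playWeight_append_le (t := t) heven x
        rw [hx, Nat.cast_zero, zero_div] at this
        exact hgood.2 (this.antisymm (playWeight_nonneg _ _))
      · refine ih.1 heven ?_ hgood.1
        have hbeq : (t.weight e x).beq 0 = false :=
          Bool.eq_false_iff.2 fun hb => hx (Nat.eq_of_beq_eq_true hb)
        rw [show t.unplayable (x :: e) true = Bool.rec (motive := fun _ => Bool)
          (t.unplayable e false) true ((t.weight e x).beq 0) from rfl, hbeq] at h
        exact h

lemma Valid.sum_futureWeight_cons_le (h : t.Valid n) (heven : Even v.length) (hn : n ≤ v.length)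
    {e d : List Letter} (he : 3 ≤ e.length) (hed : e <+: d) {k : ℕ} (hk : d.length + 1 = 2 * k)
    (b : Letter) : ∑ c, futureWeight t.playWeight (c :: b :: d.reverse) v ≤
      (592 / 1000 : ℝ) ^ k * (t.aggregate v * t.endFactor e / 1000000) := by
  have hstep (c) : futureWeight t.playWeight (c :: b :: d.reverse) v ≤
      (592 / 1000 : ℝ) ^ k * t.endFactor e / 1000000000 *
        (t.weight v c * t.potential (b :: c :: v)) := by
    have hend := h.futureWeight_le_endFactor (v := b :: c :: v)
      (by simpa [Nat.even_add_one] using heven) (by simp; omega) he hed hk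
    rw [futureWeight_cons, futureWeight_cons, playWeight_of_even heven,
      playWeight_of_odd (by simpa using heven.add_one), one_mul]
    refine (mul_le_mul_of_nonneg_left hend (by positivity)).trans_eq ?_
    ring
  have hsum : (∑ c, t.weight v c * t.potential (b :: c :: v) : ℝ) ≤ 1000 * t.aggregate v := by
    exact_mod_cast (h.validAt v hn).sum_weight_mul_potential_le b
  refine (Finset.sum_le_sum fun c _ => hstep c).trans ?_
  rw [← Finset.mul_sum]
  refine (mul_le_mul_of_nonneg_left hsum (by positivity)).trans_eq ?_
  ring

lemma Valid.risk_periodThreats_le (h : t.Valid n) (heven : Even v.length) (hn : n ≤ v.length)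
    (hev : e <+: v) (he : 4 ≤ e.length) {k : ℕ} (hek : e.length + 1 ≤ 2 * k)
    (hkv : 2 * k ≤ v.length) :
    risk t.playWeight (periodThreats v k) v ≤ (592 / 1000 : ℝ) ^ k *
      ((t.potential v * t.endFactor e.tail + t.aggregate v * t.endFactor e) / 1000000) := by
  have hlast : v.take (2 * k - 1 + 1) = v.take (2 * k - 1) ++ [v[2 * k - 1]] :=
    (List.take_concat_get' v (2 * k - 1) (by omega)).symm
  rw [Nat.sub_add_cancel (by omega)] at hlast
  have htail : e.tail <+: v.tail.take (2 * k - 1) :=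
    List.prefix_take_iff.2 ⟨by simpa using hev.drop 1, by simp; omega⟩
  have htake : e <+: v.take (2 * k - 1) := List.prefix_take_iff.2 ⟨hev, by omega⟩
  rw [risk_periodThreats, hlast, add_div, mul_add]
  refine add_le_add (h.futureWeight_le_endFactor heven hn (by simp; omega) htail
    (by simp; omega)) ?_
  have hlength : (v.take (2 * k - 1)).length + 1 = 2 * k := by simp; omega
  simpa only [List.reverse_concat] using
    h.sum_futureWeight_cons_le heven hn (by omega) htake hlength v[2 * k - 1]

lemma Valid.sum_risk_periodThreats_le (h : t.Valid n) (hsettled : t.settled e = true)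
    (he : 4 ≤ e.length) (u : List Letter) (heven : Even (e ++ u).length)
    (hn : n ≤ (e ++ u).length) {j : ℕ} (hj : e.length + 1 ≤ 2 * j) :
    ∑ k ∈ Finset.Ico j ((e ++ u).length / 2 + 1),
      risk t.playWeight (periodThreats (e ++ u) k) (e ++ u) ≤
        (592 / 1000 : ℝ) ^ j / (1 - 592 / 1000) *
          ((t.potential e * t.endFactor e.tail + t.aggregate e * t.endFactor e) / 1000000) := by
  have hterm (k) (hk : k ∈ Finset.Ico j ((e ++ u).length / 2 + 1)) :=
    have hk := Finset.mem_Ico.1 hk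
    h.risk_periodThreats_le heven hn (List.prefix_append e u) he
      (show e.length + 1 ≤ 2 * k by omega) (by omega)
  refine (Finset.sum_le_sum hterm).trans ?_
  rw [← Finset.sum_mul, potential_append_of_settled u hsettled,
    aggregate_append_of_settled u hsettled]
  gcongr
  exact geom_sum_Ico_le_of_lt_one (by norm_num) (by norm_num)

theorem Valid.one_add_risk_le_sum_of_keyTest (h : t.Valid n) (htest : t.keyTest e = true)
    (u : List Letter) (hn : n ≤ (e ++ u).length) (heven : Even (e ++ u).length)
    (hgood : Good t.playWeight (e ++ u)) :
    1 + risk t.playWeight (newThreats 4 (e ++ u)) (e ++ u) ≤ ∑ x, t.playWeight (e ++ u) x := by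
  simp only [keyTest, Bool.and_eq_true, Bool.or_eq_true, Nat.ble_eq] at htest
  obtain ⟨he, hunplayable | ⟨hsettled, hineq⟩⟩ := htest
  · exact absurd hgood ((not_good_of_unplayable u).1 heven hunplayable)
  obtain ⟨K, hK⟩ : ∃ K, e.length / 2 = K + 3 := ⟨e.length / 2 - 3, by omega⟩
  have hshort := sum_risk_periodThreats_mul_le (t := t) u heven (j := K) (by omega)
  have hlong := h.sum_risk_periodThreats_le hsettled (by omega) u heven hn (j := K + 4) (by omega)
  have hsum : ∑ x, t.playWeight (e ++ u) x = (∑ x, t.weight e x : ℕ) / 1000 := by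
    simp only [playWeight_of_even heven, weight_append_of_settled u hsettled, Nat.cast_sum,
      Finset.sum_div]
  rw [risk_newThreats, ← Finset.sum_Ico_consecutive _ (show 4 ≤ K + 4 by omega)
    (show K + 4 ≤ (e ++ u).length / 2 + 1 by rw [List.length_append]; omega), hsum]
  rw [hK, ← Letter.sum_univ, Nat.add_sub_cancel, ← @Nat.cast_le ℝ] at hineq
  simp only [Nat.pow_eq, Nat.cast_add, Nat.cast_mul, Nat.cast_pow, Nat.cast_ofNat] at hineq
  set C : ℝ := t.potential e * t.endFactor e.tail + t.aggregate e * t.endFactor e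
  have hpos : (0 : ℝ) < 1000 ^ (K + 4) := by positivity
  have hlong' := (mul_le_mul_of_nonneg_right hlong hpos.le).trans_eq
    (show _ = 592 ^ (K + 4) * C / 408000 by rw [div_pow]; field_simp; ring)
  refine le_of_mul_le_mul_right ?_ hpos
  have hpow : (1000 : ℝ) ^ (K + 4) = 1000 ^ (K + 3) * 1000 := pow_succ _ _
  rw [add_mul, add_mul, one_mul, hpow]
  rw [hpow] at hshort hlong' hineq
  linarith

end DecisionTree

end KeyInequality

section Criterion

open Letter

namespace DecisionTree

variable {t : DecisionTree} {m n : ℕ} {v v₀ : List Letter}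

lemma good_of_unplayable_eq_false :
    (Even v.length → t.unplayable v false = false → Good t.playWeight v) ∧
    (Odd v.length → t.unplayable v true = false → Good t.playWeight v) := by
  induction v with
  | nil => simp [Good]
  | cons x v ih =>
    rw [List.length_cons, good_cons]
    refine ⟨fun heven h => ?_, fun hodd h => ?_⟩
    · have hodd : Odd v.length := by simpa [Nat.even_add_one] using heven
      exact ⟨ih.2 hodd h, by simp [playWeight_of_odd hodd]⟩
    · have heven : Even v.length := by simpa [Nat.odd_add_one] using hodd
      rw [show t.unplayable (x :: v) true = Bool.rec (motive := fun _ => Bool)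
        (t.unplayable v false) true ((t.weight v x).beq 0) from rfl] at h
      cases hx : (t.weight v x).beq 0
      · rw [hx] at h
        have : t.weight v x ≠ 0 := Nat.ne_of_beq_eq_false hx
        exact ⟨ih.1 heven h, by simpa [playWeight_of_even heven] using this⟩
      · rw [hx] at h
        cases h

lemma valid_of_search (hpos : 0 < t.potential [])
    (h : search t.localTest n [] [] [c0, c1, c2, c3] = true) : t.Valid n where
  potential_nil_pos := hpos
  validAt _ hv := of_search (fun _ _ => ValidAt.of_map) (fun _ => validAt_of_localTest t) h hv

lemma Valid.one_add_risk_le_sum (h : t.Valid n)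
    (htest : search t.keyTest m [] [] [c0, c1, c2, c3] = true) (hm : m ≤ v.length)
    (hn : n ≤ v.length) (heven : Even v.length) (hgood : Good t.playWeight v) :
    1 + risk t.playWeight (newThreats 4 v) v ≤ ∑ x, t.playWeight v x := by
  let P (v : List Letter) : Prop := n ≤ v.length → Even v.length → Good t.playWeight v →
    1 + risk t.playWeight (newThreats 4 v) v ≤ ∑ x, t.playWeight v x
  refine of_search (P := P) (fun σ v hσ => ?_)
    (fun e he u => h.one_add_risk_le_sum_of_keyTest he u) htest hm hn heven hgood
  have hmap := playWeight_map (t := t) σ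
  simpa only [P, List.length_map, good_map hmap, risk_newThreats_map hmap,
    ← Equiv.sum_comp σ (t.playWeight (v.map σ)), hmap] using hσ

theorem annWins (hpos : 0 < t.potential [])
    (hlocal : search t.localTest n [] [] [c0, c1, c2, c3] = true)
    (hkey : search t.keyTest m [] [] [c0, c1, c2, c3] = true) (hn : n ≤ v₀.length)
    (hm : m ≤ v₀.length) (hv₀ : Even v₀.length) (hgood : t.unplayable v₀ false = false) :
    AnnWins Letter := by
  have hvalid := valid_of_search hpos hlocal
  refine annWins_of_weights t.playWeight 4 v₀ playWeight_nonneg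
    (fun v hv x => playWeight_of_odd hv x) hv₀ (good_of_unplayable_eq_false.1 hv₀ hgood)
    (fun v hv heven a ha x y hx hlen => ?_)
    (fun v hv => hvalid.one_add_risk_le_sum hkey (hm.trans hv.length_le) (hn.trans hv.length_le))
  refine (hvalid.validAt v (hn.trans hv.length_le)).no_overlap a ?_ x y hx (by omega)
  rw [playWeight_of_even heven] at ha
  exact_mod_cast (div_ne_zero_iff.1 ha).1

end DecisionTree

end Criterion

noncomputable section Certificate

open Letter DecisionTree

/-- The nodes `node₁`, ..., `node₄` are those at which `1`, ..., `4` colours can occur. -/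
def node₁ (a : DecisionTree) : DecisionTree := node c0 fun _ => a

def node₂ (a b : DecisionTree) : DecisionTree := node c1 fun x => Letter.rec a b b b x

def node₃ (a b c : DecisionTree) : DecisionTree := node c2 fun x => Letter.rec a b c c x

def node₄ (a b c d : DecisionTree) : DecisionTree := node c3 fun x => Letter.rec a b c d x

/-- The node at which the colour `i` leads to `a` and the other three colours lead to `b`. -/
def split (i : Letter) (a b : DecisionTree) : DecisionTree :=
  Letter.rec (node₄ a b b b) (node₄ b a b b) (node₄ b b a b) (node₄ b b b a) i

/-- The leaf for histories that Ann avoids, because she would have to play a letter of weight zero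
in order to reach them.  The large potential keeps the leaf from affecting `minPotential`. -/
def dead : DecisionTree := leaf 0 0 0 0 1000000000 0

-- The digits in the names of the subtrees are the colours that lead to them.
def tree000102 : DecisionTree :=
  node₄ (split c0 (split c0 (node₄ dead (leaf 0 545 0 545 1347 1516)
  (leaf 0 519 278 526 1283 2137) (leaf 0 519 278 526 1283 2137)) (leaf 0 504 300 544 1248 2193))
  (leaf 0 381 471 487 1084 1840)) (split c0 dead (leaf 0 290 477 525 1171 1809)) (split c0 (split
  c0 (split c0 dead (leaf 0 463 359 491 1145 1846)) (leaf 0 463 359 498 1145 1855))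
  (leaf 0 462 319 513 1142 1816)) (split c0 (split c0 (split c0 dead
  (leaf 0 399 459 478 1127 1881)) (leaf 0 376 461 471 1132 1841)) (leaf 0 393 460 472 1130 1865))

def tree000110 : DecisionTree :=
  node₃ (node₃ dead (leaf 0 411 397 397 1000 1526) (leaf 0 411 397 397 1000 1526)) (node₃ dead
  (leaf 0 311 450 450 1000 1495) (leaf 0 311 450 450 1000 1495)) (split c0 dead
  (leaf 0 410 450 365 1000 1548))

def tree000112 : DecisionTree :=
  node₄ (split c0 (split c0 (node₄ dead (leaf 0 545 0 545 1278 1392)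
  (leaf 0 489 321 493 1147 1628) (leaf 0 489 321 493 1147 1628)) (leaf 0 343 363 543 1084 1532))
  (leaf 0 249 507 470 1000 1484)) (split c0 (split c0 (split c0 dead
  (leaf 0 342 527 411 1038 1568)) (leaf 0 344 529 411 1042 1573)) (leaf 0 344 526 410 1036 1568))
  (split c0 (split c0 (split c0 dead (leaf 0 338 534 304 1051 1446))
  (leaf 0 313 519 425 1022 1535)) (leaf 0 249 516 454 1016 1476)) (split c0 (split c0 (split c0
  dead (leaf 0 354 335 497 1000 1461)) (leaf 0 354 415 497 1000 1554))
  (leaf 0 332 534 359 1051 1502))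

def tree000120 : DecisionTree :=
  node₄ (split c0 dead (leaf 0 336 471 397 1001 1562)) (split c0 dead
  (leaf 0 339 471 485 1041 1694)) (split c0 dead (leaf 0 446 345 485 1044 1654)) (split c0 dead
  (leaf 0 428 471 328 1002 1587))

def tree000122 : DecisionTree :=
  node₄ (split c0 (split c0 (node₄ dead (leaf 0 545 0 545 1286 1423)
  (leaf 0 476 323 476 1123 1636) (leaf 0 476 323 476 1123 1636)) (leaf 0 418 360 428 1000 1542))
  (leaf 0 339 522 423 1074 1623)) (split c0 (split c0 (split c0 dead
  (leaf 0 430 430 351 1014 1551)) (leaf 0 430 493 341 1014 1615)) (leaf 0 394 498 335 1024 1564))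
  (split c0 (split c0 (split c0 dead (leaf 0 386 484 424 1000 1644))
  (leaf 0 387 507 430 1043 1680)) (leaf 0 366 518 431 1065 1666)) (split c0 (split c0 (split c0
  dead (leaf 0 301 413 484 1063 1511)) (leaf 0 407 392 472 1062 1619))
  (leaf 0 328 390 519 1066 1564))

def tree000123 : DecisionTree :=
  node₄ (split c0 (split c0 (node₄ dead (leaf 0 545 545 0 1286 1425)
  (leaf 0 458 457 369 1081 1644) (leaf 0 458 457 369 1081 1644)) (leaf 0 447 410 369 1055 1572))
  (leaf 0 435 328 502 1031 1617)) (split c0 (split c0 (split c0 dead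
  (leaf 0 458 332 408 1081 1540)) (leaf 0 408 518 343 1065 1617)) (leaf 0 327 522 394 1074 1571))
  (split c0 (split c0 (split c0 dead (leaf 0 425 419 473 1003 1678))
  (leaf 0 428 429 502 1031 1730)) (leaf 0 437 348 503 1033 1645)) (split c0 (split c0 (split c0
  dead (leaf 0 409 262 534 1096 1539)) (leaf 0 453 262 521 1070 1585))
  (leaf 0 374 329 534 1105 1572))

def tree0001 : DecisionTree :=
  node₃ (node₃ dead dead tree000102) (node₃ tree000110 dead tree000112) (node₄ tree000120 dead
  tree000122 tree000123)

def tree001100 : DecisionTree :=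
  node₃ (node₃ dead (leaf 0 0 612 612 1141 1348) (leaf 0 0 597 597 1113 1315)) (node₃ dead
  (leaf 0 0 620 620 1156 1366) (leaf 0 0 620 620 1156 1366)) (split c0 dead
  (leaf 0 0 686 687 1281 1511))

def tree001102 : DecisionTree :=
  node₄ (split c0 (node₄ (split c1 (split c1 (split c0 (leaf 0 497 259 517 1000 1711)
  (leaf 0 497 260 538 1028 1737)) (leaf 0 497 270 558 1067 1781)) (leaf 0 497 256 562 1074 1756))
  (split c1 (leaf 0 497 0 643 1229 1299) (leaf 0 498 325 402 1176 1724))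
  (leaf 0 470 325 446 1176 1741) (leaf 0 470 325 446 1176 1741)) (leaf 0 372 630 246 1218 1428))
  (split c0 dead (leaf 0 498 601 349 1140 1643)) (split c0 (split c0 (split c1 (split c1 (split c0
  (leaf 0 490 0 647 1237 1295) (leaf 0 490 256 539 1030 1472)) (leaf 0 478 289 591 1130 1563))
  (leaf 0 268 590 422 1133 1447)) (leaf 0 387 584 385 1135 1536)) (leaf 0 375 600 370 1138 1523))
  (split c0 (split c0 (split c1 (split c1 (split c0 (leaf 0 490 634 0 1202 1277)
  (leaf 0 490 490 289 1000 1464)) (leaf 0 448 594 325 1126 1588)) (leaf 0 276 508 503 1000 1456))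
  (leaf 0 467 394 446 1000 1484)) (leaf 0 276 575 574 1093 1611))

def tree001110 : DecisionTree :=
  node₃ (node₃ dead (leaf 0 0 599 599 1348 1517) (leaf 0 481 366 366 1000 1477)) (node₃ dead
  (leaf 0 431 432 432 1000 1586) (leaf 0 431 432 432 1000 1586)) (split c0 dead
  (leaf 0 481 469 282 1056 1500))

def tree001112 : DecisionTree :=
  node₄ (split c0 (node₄ (split c1 (split c1 (split c1 dead (leaf 0 428 420 448 1029 1653))
  (leaf 0 450 421 462 1040 1696)) (leaf 0 450 418 461 1038 1691)) (split c1
  (leaf 0 482 0 603 1357 1300) (leaf 0 482 407 391 1000 1622)) (leaf 0 340 486 423 1190 1619)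
  (leaf 0 340 486 423 1190 1619)) (leaf 0 408 602 229 1181 1451)) (split c0 (split c0 (split c1
  (split c1 (split c1 dead (leaf 0 419 460 395 1000 1492)) (leaf 0 425 469 395 1000 1509))
  (leaf 0 424 468 395 1000 1507)) (leaf 0 464 481 395 1000 1570)) (leaf 0 482 511 305 1003 1521))
  (split c0 (split c0 (split c1 (split c1 (split c1 dead (leaf 0 415 406 381 1000 1408))
  (leaf 0 419 405 419 1000 1456)) (leaf 0 264 594 335 1165 1393)) (leaf 0 427 439 374 1000 1453))
  (leaf 0 322 602 286 1181 1415)) (split c0 (split c0 (split c1 (split c1 (split c1 dead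
  (leaf 0 436 436 371 1000 1456)) (leaf 0 439 435 371 1000 1459)) (leaf 0 374 273 544 1224 1394))
  (leaf 0 481 434 339 1000 1470)) (leaf 0 309 514 390 1009 1418))

def tree001120 : DecisionTree :=
  node₄ (node₄ dead (leaf 0 505 0 771 1542 1552) (leaf 0 505 447 446 1104 1820)
  (leaf 0 505 447 446 1104 1820)) (split c0 dead (leaf 0 505 443 526 1094 1907)) (split c0 dead
  (leaf 0 355 400 471 1000 1588)) (split c0 dead (leaf 0 447 434 540 1080 1836))

def tree001122 : DecisionTree :=
  node₄ (split c0 (node₄ (split c1 (split c1 (split c2 (leaf 0 426 330 463 1000 1551)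
  (leaf 0 477 330 384 1033 1518)) (leaf 0 444 330 464 1000 1574)) (leaf 0 372 290 530 1073 1508))
  (split c1 (leaf 0 511 0 714 1445 1487) (leaf 0 511 297 487 1106 1635))
  (leaf 0 511 325 520 1106 1715) (leaf 0 511 325 520 1106 1715)) (leaf 0 511 598 389 1171 1801))
  (split c0 (split c0 (split c1 (split c1 (split c2 (leaf 0 0 561 679 1375 1448)
  (leaf 0 247 561 561 1136 1648)) (leaf 0 309 561 568 1150 1746)) (leaf 0 424 430 553 1120 1686))
  (leaf 0 424 455 553 1120 1715)) (leaf 0 424 563 462 1103 1734)) (split c0 (split c0 (split c1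
  (split c1 (split c2 (leaf 0 511 0 610 1235 1366) (leaf 0 443 400 451 1000 1557))
  (leaf 0 472 316 482 1022 1533)) (leaf 0 325 588 277 1152 1421)) (leaf 0 511 467 269 1106 1510))
  (leaf 0 309 680 248 1332 1473)) (split c0 (split c0 (split c1 (split c1 (split c2
  (leaf 0 511 767 0 1502 1544) (leaf 0 510 596 227 1167 1617)) (leaf 0 511 600 349 1175 1803))
  (leaf 0 511 515 399 1106 1717)) (leaf 0 511 457 434 1106 1690)) (leaf 0 397 602 521 1179 1814))

def tree001123 : DecisionTree :=
  node₄ (split c0 (node₄ (split c1 (split c1 (split c2 (leaf 0 418 437 400 1000 1508)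
  (leaf 0 454 447 318 1000 1471)) (leaf 0 449 400 400 1000 1505)) (leaf 0 314 584 277 1156 1403))
  (split c1 (leaf 0 511 746 0 1476 1526) (leaf 0 511 529 260 1106 1571))
  (leaf 0 511 302 531 1139 1625) (leaf 0 511 302 531 1139 1625)) (leaf 0 511 332 574 1132 1709))
  (split c0 (split c0 (split c1 (split c1 (split c2 (leaf 0 0 735 566 1454 1512)
  (leaf 0 256 586 555 1160 1673)) (leaf 0 329 563 566 1114 1765)) (leaf 0 380 464 565 1112 1683))
  (leaf 0 380 477 566 1114 1700)) (leaf 0 284 562 566 1114 1675)) (split c0 (split c0 (split c1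
  (split c1 (split c2 (leaf 0 511 0 636 1252 1396) (leaf 0 446 371 456 1000 1533))
  (leaf 0 461 356 473 1000 1555)) (leaf 0 451 400 331 1000 1427)) (leaf 0 511 401 344 1106 1521))
  (leaf 0 273 364 603 1187 1475)) (split c0 (split c0 (split c1 (split c1 (split c2
  (leaf 0 509 734 0 1452 1509) (leaf 0 509 530 270 1102 1676)) (leaf 0 508 509 379 1100 1814))
  (leaf 0 509 298 536 1102 1625)) (leaf 0 509 292 554 1102 1643)) (leaf 0 509 331 605 1191 1741))

def tree0011 : DecisionTree :=
  node₃ (node₃ tree001100 dead tree001102) (node₃ tree001110 dead tree001112) (node₄ tree001120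
  dead tree001122 tree001123)

def tree001200 : DecisionTree :=
  node₄ (node₄ dead (leaf 0 684 0 561 1325 1408) (leaf 0 586 0 603 1135 1342)
  (leaf 0 586 0 603 1135 1342)) (split c0 dead (leaf 0 567 0 680 1280 1406)) (split c0 dead
  (leaf 0 716 0 734 1387 1637)) (split c0 dead (leaf 0 706 0 724 1367 1613))

def tree001203 : DecisionTree :=
  node₄ (split c0 (node₄ (split c1 (split c2 (split c0 (leaf 0 517 484 250 1029 1724)
  (leaf 0 535 484 257 1065 1760)) (leaf 0 551 484 268 1097 1802)) (leaf 0 549 484 263 1093 1789))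
  (split c2 (leaf 0 654 484 0 1302 1337) (leaf 0 424 484 317 1164 1764))
  (leaf 0 432 484 317 1164 1773) (leaf 0 432 484 317 1164 1773)) (leaf 0 226 375 619 1165 1405))
  (split c0 (split c0 (split c1 (split c2 (split c0 (leaf 0 0 471 652 1227 1300)
  (leaf 0 250 471 533 1003 1478)) (leaf 0 430 445 480 1020 1642)) (leaf 0 503 418 384 1000 1512))
  (leaf 0 568 340 394 1098 1502)) (leaf 0 586 294 525 1133 1612)) (split c0 dead
  (leaf 0 693 235 665 1379 1823)) (split c0 (split c0 (split c1 (split c2 (split c0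
  (leaf 0 717 466 0 1427 1387) (leaf 0 601 466 257 1196 1609)) (leaf 0 601 441 391 1196 1776))
  (leaf 0 430 299 612 1200 1555)) (leaf 0 418 286 670 1261 1572)) (leaf 0 563 233 633 1191 1632))

def tree001210 : DecisionTree :=
  node₄ (node₄ dead (leaf 0 0 515 701 1524 1651) (leaf 0 477 322 418 1000 1574)
  (leaf 0 477 322 418 1000 1574)) (split c0 dead (leaf 0 275 435 625 1359 1746)) (split c0 dead
  (leaf 0 477 426 315 1020 1575)) (split c0 dead (leaf 0 344 384 499 1009 1565))

def tree001211 : DecisionTree :=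
  node₄ (split c0 (node₄ (split c1 (split c2 (split c1 dead (leaf 0 401 454 452 1007 1612))
  (leaf 0 401 473 460 1049 1647)) (leaf 0 401 472 458 1047 1643)) (split c2
  (leaf 0 0 526 581 1167 1381) (leaf 0 304 498 457 1104 1557)) (leaf 0 528 344 367 1097 1526)
  (leaf 0 528 344 367 1097 1526)) (leaf 0 541 357 354 1081 1529)) (split c0 (split c0 (split c1
  (split c2 (split c1 dead (leaf 0 434 388 450 1000 1558)) (leaf 0 446 388 450 1000 1572))
  (leaf 0 468 388 450 1000 1598)) (leaf 0 500 388 452 1000 1638)) (leaf 0 507 326 478 1013 1596))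
  (split c0 (split c0 (split c1 (split c2 (split c1 dead (leaf 0 501 266 455 1168 1810))
  (leaf 0 516 257 459 1129 1809)) (leaf 0 324 429 475 1130 1602)) (leaf 0 312 482 485 1079 1578))
  (leaf 0 538 486 242 1078 1562)) (split c0 (split c0 (split c1 (split c2 (split c1 dead
  (leaf 0 476 429 313 1000 1526)) (leaf 0 494 430 313 1000 1548)) (leaf 0 308 416 503 1011 1508))
  (leaf 0 392 478 407 1060 1575)) (leaf 0 536 228 479 1071 1503))

def tree001213 : DecisionTree :=
  node₄ (split c0 (node₄ (split c1 (split c2 (split c1 dead (leaf 0 429 433 425 1037 1747))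
  (leaf 0 450 452 433 1082 1811)) (leaf 0 441 442 432 1058 1785)) (split c2
  (leaf 0 541 530 0 1269 1410) (leaf 0 387 444 448 1088 1745)) (leaf 0 297 483 484 1175 1742)
  (leaf 0 297 483 484 1175 1742)) (leaf 0 204 499 553 1204 1668)) (split c0 (split c0 (split c1
  (split c2 (split c1 dead (leaf 0 389 427 460 1023 1630)) (leaf 0 389 429 486 1027 1663))
  (leaf 0 389 430 475 1030 1652)) (leaf 0 394 432 517 1045 1711)) (leaf 0 290 451 549 1110 1649))
  (split c0 (split c0 (split c1 (split c2 (split c1 dead (leaf 0 441 313 434 1000 1500))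
  (leaf 0 467 313 446 1000 1546)) (leaf 0 367 530 290 1269 1545)) (leaf 0 494 340 427 1017 1595))
  (leaf 0 536 340 339 1103 1541)) (split c0 (split c0 (split c1 (split c2 (split c1 dead
  (leaf 0 376 442 402 1058 1566)) (leaf 0 384 442 405 1058 1579)) (leaf 0 256 375 553 1118 1505))
  (leaf 0 327 429 483 1027 1584)) (leaf 0 300 361 551 1114 1536))

def tree001220 : DecisionTree :=
  node₄ (node₄ dead (leaf 0 610 0 653 1314 1469) (leaf 0 406 417 526 1087 1729)
  (leaf 0 406 417 526 1087 1729)) (split c0 dead (leaf 0 608 306 487 1169 1742)) (split c0 dead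
  (leaf 0 376 425 387 1108 1543)) (split c0 dead (leaf 0 369 424 636 1280 1829))

def tree001221 : DecisionTree :=
  node₄ (split c0 (node₄ (split c1 (split c2 (split c2 (leaf 0 357 436 441 1000 1536)
  (leaf 0 357 447 448 1018 1556)) (leaf 0 358 437 443 1000 1541)) (leaf 0 218 389 593 1194 1476))
  (split c2 (leaf 0 0 512 674 1356 1490) (leaf 0 274 493 611 1230 1701))
  (leaf 0 423 422 573 1153 1775) (leaf 0 423 422 573 1153 1775)) (leaf 0 619 429 442 1196 1806))
  (split c0 (split c0 (split c1 (split c2 (split c2 (leaf 0 0 488 675 1358 1459)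
  (leaf 0 245 488 538 1111 1600)) (leaf 0 275 488 558 1123 1660)) (leaf 0 525 435 380 1005 1578))
  (leaf 0 580 386 391 1111 1640)) (leaf 0 578 345 447 1107 1651)) (split c0 (split c0 (split c1
  (split c2 (split c2 (leaf 0 601 0 502 1153 1279) (leaf 0 414 421 425 1000 1531))
  (leaf 0 471 296 456 1000 1467)) (leaf 0 285 527 348 1176 1433)) (leaf 0 379 362 502 1010 1505))
  (leaf 0 479 527 217 1176 1498)) (split c0 (split c0 (split c1 (split c2 (split c2
  (leaf 0 629 526 0 1206 1423) (leaf 0 520 513 283 1168 1721)) (leaf 0 587 494 284 1126 1773))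
  (leaf 0 404 492 484 1120 1705)) (leaf 0 462 490 484 1115 1762)) (leaf 0 589 274 534 1130 1671))

def tree001223 : DecisionTree :=
  node₄ (split c0 (node₄ (split c1 (split c2 (split c2 (leaf 0 443 446 353 1000 1546)
  (leaf 0 442 462 352 1020 1561)) (leaf 0 449 458 324 1011 1521)) (leaf 0 374 527 249 1163 1395))
  (split c2 (leaf 0 626 527 0 1204 1401) (leaf 0 595 425 319 1144 1643))
  (leaf 0 491 440 431 1134 1716) (leaf 0 491 440 431 1134 1716)) (leaf 0 505 361 577 1119 1681))
  (split c0 (split c0 (split c1 (split c2 (split c2 (leaf 0 0 497 699 1303 1418)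
  (leaf 0 258 497 546 1097 1551)) (leaf 0 376 497 539 1102 1748)) (leaf 0 417 497 443 1097 1611))
  (leaf 0 417 446 515 1000 1624)) (leaf 0 392 355 567 1057 1533)) (split c0 (split c0 (split c1
  (split c2 (split c2 (leaf 0 489 0 616 1148 1236) (leaf 0 439 417 446 1000 1535))
  (leaf 0 489 354 396 1000 1455)) (leaf 0 352 521 308 1150 1420)) (leaf 0 439 510 345 1126 1545))
  (leaf 0 206 522 517 1152 1485)) (split c0 (split c0 (split c1 (split c2 (split c2
  (leaf 0 632 527 0 1215 1408) (leaf 0 523 490 299 1081 1564)) (leaf 0 525 488 361 1077 1632))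
  (leaf 0 398 352 578 1077 1548)) (leaf 0 419 370 578 1077 1596)) (leaf 0 513 335 580 1081 1659))

def tree001230 : DecisionTree :=
  node₄ (node₄ dead (leaf 0 730 538 0 1348 1471) (leaf 0 397 496 456 1050 1610)
  (leaf 0 397 496 456 1050 1610)) (split c0 dead (leaf 0 578 407 457 1068 1697)) (split c0 dead
  (leaf 0 509 495 457 1053 1732)) (split c0 dead (leaf 0 374 438 412 1000 1459))

def tree001231 : DecisionTree :=
  node₄ (split c0 (node₄ (split c1 (split c2 (split c3 (leaf 0 396 431 442 1000 1550)
  (leaf 0 396 437 447 1000 1563)) (leaf 0 402 365 478 1000 1516)) (leaf 0 237 367 592 1133 1434))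
  (split c2 (leaf 0 0 538 603 1155 1356) (leaf 0 345 401 572 1095 1594))
  (leaf 0 498 502 396 1089 1718) (leaf 0 498 502 396 1089 1718)) (leaf 0 547 515 338 1088 1668))
  (split c0 (split c0 (split c1 (split c2 (split c3 (leaf 0 0 529 612 1172 1355)
  (leaf 0 232 489 540 1034 1488)) (leaf 0 301 489 540 1034 1571)) (leaf 0 488 487 350 1029 1555))
  (leaf 0 509 487 364 1029 1595)) (leaf 0 539 412 407 1028 1584)) (split c0 (split c0 (split c1
  (split c2 (split c3 (leaf 0 518 0 584 1118 1246) (leaf 0 485 267 488 1117 1688))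
  (leaf 0 501 202 544 1042 1605)) (leaf 0 285 503 395 1110 1398)) (leaf 0 409 291 543 1040 1450))
  (leaf 0 400 305 501 1000 1400)) (split c0 (split c0 (split c1 (split c2 (split c3
  (leaf 0 547 538 0 1136 1289) (leaf 0 443 444 334 1000 1433)) (leaf 0 475 453 309 1000 1452))
  (leaf 0 349 488 334 1031 1382)) (leaf 0 484 538 234 1136 1483)) (leaf 0 508 430 293 1000 1442))

def tree001233 : DecisionTree :=
  node₄ (split c0 (node₄ (split c1 (split c2 (split c3 (leaf 0 438 414 399 1000 1495)
  (leaf 0 450 414 399 1000 1509)) (leaf 0 478 392 379 1000 1489)) (leaf 0 547 242 407 1041 1458))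
  (split c2 (leaf 0 683 518 0 1300 1417) (leaf 0 670 395 247 1275 1529))
  (leaf 0 511 397 424 1058 1597) (leaf 0 511 397 424 1058 1597)) (leaf 0 532 340 602 1153 1707))
  (split c0 (split c0 (split c1 (split c2 (split c3 (leaf 0 0 519 617 1188 1348)
  (leaf 0 245 518 531 1095 1525)) (leaf 0 259 518 581 1118 1598)) (leaf 0 415 439 446 1000 1522))
  (leaf 0 426 470 552 1063 1693)) (leaf 0 426 366 605 1165 1623)) (split c0 (split c0 (split c1
  (split c2 (split c3 (leaf 0 548 0 613 1180 1314) (leaf 0 512 272 514 1000 1558))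
  (leaf 0 548 272 569 1095 1661)) (leaf 0 433 469 473 1000 1614)) (leaf 0 436 477 451 1008 1601))
  (leaf 0 407 486 613 1180 1761)) (split c0 (split c0 (split c1 (split c2 (split c3
  (leaf 0 610 519 0 1161 1336) (leaf 0 435 436 424 1000 1516)) (leaf 0 520 409 283 1000 1418))
  (leaf 0 306 258 609 1166 1358)) (leaf 0 243 519 481 1097 1468)) (leaf 0 228 384 617 1205 1436))

def tree0012 : DecisionTree :=
  node₄ (node₄ tree001200 dead dead tree001203) (node₄ tree001210 tree001211 dead tree001213)
  (node₄ tree001220 tree001221 dead tree001223) (node₄ tree001230 tree001231 dead tree001233)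

def tree010001 : DecisionTree :=
  node₃ (node₃ dead dead (leaf 0 0 646 646 1463 1732)) (node₃ (node₃ (leaf 0 0 630 630 1427 1689)
  (node₃ dead (leaf 0 0 612 612 1386 1641) (leaf 0 0 612 612 1386 1641))
  (leaf 0 0 630 630 1427 1689)) (leaf 0 0 613 613 1388 1643) (leaf 0 0 613 613 1388 1643)) (split
  c0 (split c1 (split c0 dead (leaf 0 0 738 455 1432 1457)) (leaf 0 0 714 548 1385 1554))
  (leaf 0 0 737 548 1396 1561))

def tree010002 : DecisionTree :=
  node₄ (node₄ dead (split c0 (split c0 (leaf 0 0 0 1313 2462 1458) (leaf 0 0 584 725 1360 1600))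
  (leaf 0 0 627 662 1453 1590)) (leaf 0 0 632 702 1317 1548) (leaf 0 0 632 702 1317 1548)) (split
  c0 (split c1 (split c0 dead (leaf 0 0 642 622 1217 1406)) (leaf 0 0 641 670 1257 1458))
  (leaf 0 0 642 648 1217 1435)) (split c0 (split c1 (split c0 dead (leaf 0 0 612 629 1180 1380))
  (leaf 0 0 613 630 1182 1383)) (leaf 0 0 613 621 1165 1373)) (split c0 (split c1 (split c0 dead
  (leaf 0 0 621 653 1225 1417)) (leaf 0 0 623 677 1270 1446)) (leaf 0 0 638 648 1215 1430))

def tree010011 : DecisionTree :=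
  node₃ (node₃ dead dead (leaf 0 0 601 601 1154 1366)) (node₃ (node₃ (leaf 0 0 620 620 1190 1409)
  (node₃ dead (leaf 0 0 601 601 1154 1366) (leaf 0 0 601 601 1154 1366))
  (leaf 0 0 620 620 1190 1409)) (leaf 0 0 620 620 1190 1409) (leaf 0 0 620 620 1190 1409)) (split
  c0 (split c1 (split c0 dead (leaf 0 0 525 665 1277 1510)) (leaf 0 0 526 667 1280 1514))
  (leaf 0 0 656 611 1278 1451))

def tree010012 : DecisionTree :=
  node₄ (node₄ (split c1 (split c0 dead (leaf 0 0 601 625 1139 1341))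
  (leaf 0 0 611 624 1146 1351)) dead (leaf 0 0 609 621 1142 1346) (leaf 0 0 609 621 1142 1346))
  (split c0 (split c1 (split c0 dead (leaf 0 0 607 600 1124 1313)) (leaf 0 0 609 653 1190 1372))
  (leaf 0 0 609 649 1182 1368)) (split c0 (split c1 (split c0 dead (leaf 0 0 576 608 1137 1301))
  (leaf 0 0 577 624 1137 1306)) (leaf 0 0 576 621 1131 1301)) (split c0 (split c1 (split c0 dead
  (leaf 0 0 589 596 1091 1289)) (leaf 0 0 590 592 1093 1285)) (leaf 0 0 608 612 1126 1327))

def tree010021 : DecisionTree :=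
  node₄ (node₄ dead dead (leaf 0 0 611 598 1219 1443) (leaf 0 0 611 598 1219 1443)) (split c0
  (split c1 (split c0 dead (leaf 0 0 570 635 1293 1439)) (leaf 0 0 570 635 1293 1439))
  (leaf 0 0 618 635 1293 1496)) (split c0 (split c1 (split c0 dead (leaf 0 0 631 592 1413 1550))
  (leaf 0 0 644 626 1453 1615)) (leaf 0 0 644 639 1312 1547)) (split c0 (split c1 (split c0 dead
  (leaf 0 0 552 619 1248 1391)) (leaf 0 0 600 619 1248 1448)) (leaf 0 0 562 664 1250 1404))

def tree010022 : DecisionTree :=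
  node₄ (node₄ (split c1 (split c0 dead (leaf 0 0 588 604 1097 1297))
  (leaf 0 0 590 606 1101 1301)) (split c0 (split c0 (leaf 0 0 0 1180 2141 1268)
  (leaf 0 0 580 628 1144 1326)) (leaf 0 0 565 618 1122 1298)) (leaf 0 0 604 619 1127 1330)
  (leaf 0 0 604 619 1127 1330)) (split c0 (split c1 (split c0 dead (leaf 0 0 624 594 1161 1325))
  (leaf 0 0 625 594 1163 1327)) (leaf 0 0 622 592 1157 1321)) (split c0 (split c1 (split c0 dead
  (leaf 0 0 664 603 1235 1379)) (leaf 0 0 664 603 1235 1379)) (leaf 0 0 624 612 1161 1345)) (split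
  c0 (split c1 (split c0 dead (leaf 0 0 592 617 1179 1348)) (leaf 0 0 631 617 1174 1376))
  (leaf 0 0 625 601 1163 1334))

def tree010023 : DecisionTree :=
  node₄ (node₄ (split c1 (split c0 dead (leaf 0 0 596 604 1109 1305))
  (leaf 0 0 597 612 1111 1315)) (split c0 (split c0 (leaf 0 0 1168 0 2173 1286)
  (leaf 0 0 597 603 1113 1305)) (leaf 0 0 597 603 1113 1305)) dead dead) (split c0 (split c1
  (split c0 dead (leaf 0 0 568 672 1220 1348)) (leaf 0 0 571 672 1220 1351))
  (leaf 0 0 571 624 1133 1299)) (split c0 (split c1 (split c0 dead (leaf 0 0 564 659 1196 1329))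
  (leaf 0 0 568 709 1287 1387)) (leaf 0 0 597 655 1189 1361)) (split c0 (split c1 (split c0 dead
  (leaf 0 0 569 628 1140 1301)) (leaf 0 0 585 628 1140 1319)) (leaf 0 0 592 606 1101 1303))

def tree0100 : DecisionTree :=
  node₃ (node₃ dead tree010001 tree010002) (node₃ dead tree010011 tree010012) (node₄ dead
  tree010021 tree010022 tree010023)

def tree010200 : DecisionTree :=
  node₄ (node₄ dead (split c0 (split c2 (leaf 0 0 562 570 1371 1562)
  (leaf 302 0 502 529 1225 1818)) (leaf 303 0 457 505 1122 1724)) (leaf 508 0 335 496 1102 1779)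
  (leaf 508 0 335 496 1102 1779)) (split c0 dead (leaf 509 0 385 442 1074 1765)) (split c0 dead
  (leaf 509 0 368 418 1074 1745)) (split c0 dead (leaf 505 0 404 383 1065 1666))

def tree010201 : DecisionTree :=
  node₄ (node₄ (split c1 (split c0 dead (leaf 840 0 0 553 1541 1714))
  (leaf 788 0 0 564 1443 1671)) dead (leaf 791 0 0 564 1452 1677) (leaf 791 0 0 564 1452 1677))
  (split c0 (split c1 (split c0 dead (leaf 809 0 0 553 1485 1680)) (leaf 752 0 0 568 1391 1640))
  (leaf 833 0 0 414 1529 1505)) (split c0 dead (leaf 772 0 0 529 1417 1605)) (split c0 (split c1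
  (split c0 dead (leaf 807 0 0 550 1481 1600)) (leaf 706 0 0 570 1296 1522))
  (leaf 754 0 0 561 1384 1557))

def tree010203 : DecisionTree :=
  node₄ (node₄ (split c1 (split c0 dead (leaf 554 0 432 434 1073 1830))
  (leaf 399 0 529 460 1298 1827)) (split c0 (split c2 (leaf 570 0 562 0 1379 1465)
  (leaf 553 0 437 310 1072 1673)) (leaf 564 0 437 310 1092 1686)) (leaf 532 0 390 454 1030 1770)
  (leaf 532 0 390 454 1030 1770)) (split c0 (split c1 (split c0 dead
  (leaf 515 0 426 436 1045 1779)) (leaf 332 0 499 463 1224 1710)) (leaf 561 0 275 463 1086 1649))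
  (split c0 dead (leaf 532 0 348 451 1030 1706)) (split c0 (split c1 (split c0 dead
  (leaf 471 0 448 368 1099 1671)) (leaf 348 0 486 463 1193 1710)) (leaf 461 0 363 463 1029 1662))

def tree010211 : DecisionTree :=
  node₄ (node₄ (split c1 (split c0 dead (leaf 476 0 359 379 1000 1609))
  (leaf 476 0 386 370 1007 1636)) dead (leaf 476 0 387 369 1009 1636)
  (leaf 476 0 387 369 1009 1636)) (split c0 (split c1 (split c0 dead
  (leaf 468 0 424 411 1106 1715)) (leaf 458 0 428 419 1116 1722)) (leaf 476 0 375 405 1000 1639))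
  (split c0 (split c1 (split c0 dead (leaf 388 0 350 428 1021 1579))
  (leaf 476 0 351 428 1021 1693)) (leaf 421 0 434 380 1041 1584)) (split c0 (split c1 (split c0
  dead (leaf 410 0 340 453 1363 1752)) (leaf 393 0 434 444 1349 1872))
  (leaf 356 0 403 463 1051 1609))

def tree010213 : DecisionTree :=
  node₄ (node₄ (split c1 (split c0 dead (leaf 461 0 404 413 1000 1667))
  (leaf 402 0 470 420 1129 1702)) (split c0 (split c2 (leaf 572 0 562 0 1350 1467)
  (leaf 414 0 544 280 1307 1923)) (leaf 572 0 344 280 1132 1823)) (leaf 552 0 225 504 1143 1641)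
  (leaf 552 0 225 504 1143 1641)) (split c0 (split c1 (split c0 dead
  (leaf 473 0 390 452 1040 1713)) (leaf 361 0 450 511 1157 1746)) (leaf 509 0 261 509 1153 1648))
  (split c0 (split c1 (split c0 dead (leaf 331 0 552 331 1326 1615))
  (leaf 233 0 539 524 1295 1741)) (leaf 279 0 458 514 1164 1666)) (split c0 (split c1 (split c0
  dead (leaf 386 0 275 524 1187 1544)) (leaf 241 0 495 524 1190 1688))
  (leaf 332 0 359 524 1187 1601))

def tree010220 : DecisionTree :=
  node₄ (node₄ dead (split c0 (split c2 (leaf 0 0 562 569 1448 1532)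
  (leaf 362 0 473 509 1219 1931)) (leaf 392 0 429 429 1110 1820)) (leaf 355 0 350 546 1101 1656)
  (leaf 355 0 350 546 1101 1656)) (split c0 dead (leaf 349 0 464 407 1196 1657)) (split c0 dead
  (leaf 445 0 512 363 1319 1807)) (split c0 dead (leaf 472 0 434 317 1118 1669))

def tree010221 : DecisionTree :=
  node₄ (node₄ (split c1 (split c0 dead (leaf 567 0 240 421 1094 1623))
  (leaf 567 0 253 423 1094 1648)) dead (leaf 607 0 248 335 1171 1592)
  (leaf 607 0 248 335 1171 1592)) (split c0 (split c1 (split c0 dead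
  (leaf 487 0 414 395 1197 1872)) (leaf 273 0 433 484 1252 1795)) (leaf 616 0 341 212 1193 1614))
  (split c0 (split c1 (split c0 dead (leaf 475 0 415 356 1076 1726))
  (leaf 475 0 429 352 1111 1741)) (leaf 475 0 402 356 1039 1704)) (split c0 (split c1 (split c0
  dead (leaf 432 0 308 449 1000 1589)) (leaf 453 0 304 452 1000 1609))
  (leaf 469 0 208 484 1006 1489))

def tree010223 : DecisionTree :=
  node₄ (node₄ (split c1 (split c0 dead (leaf 506 0 251 490 1000 1504))
  (leaf 453 0 300 555 1104 1598)) (split c0 (split c2 (leaf 579 0 562 0 1452 1521)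
  (leaf 559 0 438 300 1132 1622)) (leaf 540 0 426 300 1101 1584)) (leaf 306 0 385 531 1056 1542)
  (leaf 306 0 385 531 1056 1542)) (split c0 (split c1 (split c0 dead
  (leaf 429 0 458 466 1183 1709)) (leaf 257 0 471 529 1217 1618)) (leaf 499 0 180 557 1117 1467))
  (split c0 (split c1 (split c0 dead (leaf 387 0 446 476 1152 1657))
  (leaf 358 0 445 505 1150 1658)) (leaf 387 0 450 486 1163 1675)) (split c0 (split c1 (split c0
  dead (leaf 449 0 255 502 1005 1463)) (leaf 270 0 417 543 1080 1566))
  (leaf 456 0 250 510 1021 1472))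

def tree010230 : DecisionTree :=
  node₄ (node₄ dead (split c0 (split c2 (leaf 0 0 551 570 1213 1422)
  (leaf 370 0 517 492 1138 1696)) (leaf 442 0 391 396 1023 1494)) (leaf 414 0 386 427 1019 1506)
  (leaf 414 0 386 427 1019 1506)) (split c0 dead (leaf 273 0 386 521 1087 1453)) (split c0 dead
  (leaf 450 0 314 498 1039 1584)) (split c0 dead (leaf 462 0 485 325 1068 1551))

def tree010231 : DecisionTree :=
  node₄ (node₄ (split c1 (split c0 dead (leaf 562 0 301 392 1073 1556))
  (leaf 563 0 440 260 1075 1592)) dead (leaf 510 0 286 433 1000 1524)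
  (leaf 510 0 286 433 1000 1524)) (split c0 (split c1 (split c0 dead
  (leaf 482 0 411 441 1004 1692)) (leaf 320 0 423 482 1033 1579)) (leaf 563 0 437 219 1075 1541))
  (split c0 (split c1 (split c0 dead (leaf 465 0 424 368 1381 1805))
  (leaf 465 0 436 363 1378 1797)) (leaf 305 0 440 482 1033 1562)) (split c0 (split c1 (split c0
  dead (leaf 493 0 395 370 1000 1584)) (leaf 516 0 399 376 1000 1631))
  (leaf 516 0 399 354 1000 1597))

def tree010233 : DecisionTree :=
  node₄ (node₄ (split c1 (split c0 dead (leaf 523 0 293 457 1057 1532))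
  (leaf 519 0 449 350 1057 1599)) (split c0 (split c2 (leaf 753 0 450 0 1438 1474)
  (leaf 604 0 447 276 1153 1601)) (leaf 604 0 423 276 1153 1569)) (leaf 550 0 270 485 1050 1567)
  (leaf 550 0 270 485 1050 1567)) (split c0 (split c1 (split c0 dead
  (leaf 438 0 449 459 1050 1643)) (leaf 266 0 450 546 1140 1559)) (leaf 615 0 196 431 1203 1477))
  (split c0 (split c1 (split c0 dead (leaf 416 0 449 369 1050 1507))
  (leaf 251 0 450 546 1140 1542)) (leaf 408 0 390 414 1000 1477)) (split c0 (split c1 (split c0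
  dead (leaf 432 0 446 386 1043 1542)) (leaf 322 0 450 546 1140 1622))
  (leaf 463 0 308 506 1056 1545))

def tree0102 : DecisionTree :=
  node₄ (node₄ tree010200 tree010201 dead tree010203) (node₄ dead tree010211 dead tree010213)
  (node₄ tree010220 tree010221 dead tree010223) (node₄ tree010230 tree010231 dead tree010233)

def tree011001 : DecisionTree :=
  node₃ (node₃ dead dead (leaf 0 0 613 613 1153 1361)) (node₃ dead (leaf 0 0 610 610 1147 1355)
  (leaf 0 0 610 610 1147 1355)) (split c0 (split c1 (split c1 (split c0 (split c0
  (leaf 0 0 0 1360 2557 1514) (leaf 0 0 530 804 1512 1499)) (leaf 0 0 503 803 1510 1467))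
  (leaf 0 0 545 700 1317 1401)) (leaf 0 0 645 663 1247 1474)) (leaf 0 0 655 654 1232 1453))

def tree011002 : DecisionTree :=
  node₄ (node₄ dead (split c1 (split c0 (leaf 486 0 0 645 1210 1273)
  (leaf 486 0 390 308 1000 1390)) (leaf 332 0 390 539 1011 1491)) (leaf 486 0 444 321 1000 1406)
  (leaf 486 0 444 321 1000 1406)) (split c0 (split c1 (split c1 (split c0 (split c0
  (leaf 351 0 454 481 1000 1440) (leaf 350 0 454 496 1000 1455)) (leaf 350 0 454 506 1000 1467))
  (leaf 350 0 396 530 1000 1429)) (leaf 225 0 528 530 1000 1432)) (leaf 486 0 529 332 1000 1513))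
  (split c0 (split c1 (split c1 (split c0 (split c0 (leaf 486 0 0 732 1373 1370)
  (leaf 486 0 241 551 1034 1452)) (leaf 486 0 323 545 1022 1557)) (leaf 467 0 480 398 1000 1510))
  (leaf 273 0 492 545 1022 1464)) (leaf 377 0 529 429 1000 1495)) (split c0 (split c1 (split c1
  (split c0 (split c0 (leaf 486 0 728 0 1369 1365) (leaf 485 0 597 247 1123 1565))
  (leaf 486 0 581 347 1093 1706)) (leaf 317 0 486 498 1000 1455)) (leaf 182 0 579 499 1089 1416))
  (leaf 436 0 475 475 1000 1554))

def tree011012 : DecisionTree :=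
  node₄ (node₄ (split c1 (split c1 (split c0 (split c1 dead (leaf 370 0 458 421 1093 1642))
  (leaf 370 0 456 431 1088 1653)) (leaf 370 0 456 428 1088 1649)) (leaf 371 0 430 443 1026 1633))
  dead (leaf 370 0 489 398 1167 1655) (leaf 370 0 489 398 1167 1655)) (split c0 (split c1 (split
  c1 (split c0 (split c1 dead (leaf 370 0 458 476 1086 1704)) (leaf 370 0 463 472 1083 1705))
  (leaf 370 0 464 476 1086 1712)) (leaf 370 0 463 476 1086 1711)) (leaf 370 0 490 417 1146 1668))
  (split c0 (split c1 (split c1 (split c0 (split c1 dead (leaf 370 0 426 429 1000 1596))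
  (leaf 370 0 426 438 1000 1608)) (leaf 312 0 461 446 1078 1600)) (leaf 208 0 490 491 1146 1581))
  (leaf 370 0 353 471 1075 1552)) (split c0 (split c1 (split c1 (split c0 (split c1 dead
  (leaf 320 0 461 484 1114 1661)) (leaf 320 0 466 484 1114 1668)) (leaf 320 0 473 463 1106 1649))
  (leaf 277 0 480 491 1123 1647)) (leaf 236 0 474 491 1120 1591))

def tree011021 : DecisionTree :=
  node₄ (node₄ (split c1 (split c1 (split c0 (split c2 (leaf 0 0 662 527 1371 1599)
  (leaf 198 0 564 498 1257 1942)) (leaf 222 0 594 504 1272 2049)) (leaf 466 0 485 289 1191 1731))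
  (leaf 309 0 501 466 1177 1778)) dead (leaf 526 0 354 331 1171 1622)
  (leaf 526 0 354 331 1171 1622)) (split c0 dead (leaf 503 0 497 421 1063 1866)) (split c0 (split
  c1 (split c1 (split c0 (split c2 (leaf 526 0 0 544 1373 1469) (leaf 484 0 283 501 1265 1699))
  (leaf 492 0 321 510 1288 1770)) (leaf 286 0 416 504 1272 1620)) (leaf 346 0 417 481 1214 1662))
  (leaf 474 0 415 363 1000 1643)) (split c0 (split c1 (split c1 (split c0 (split c2
  (leaf 525 0 724 0 1500 1543) (leaf 525 0 593 245 1229 1980)) (leaf 525 0 585 291 1212 2083))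
  (leaf 525 0 546 360 1131 1916)) (leaf 511 0 430 465 1135 1836)) (leaf 397 0 482 486 1000 1676))

def tree011022 : DecisionTree :=
  node₄ (node₄ (split c1 (split c1 (split c0 (split c2 (leaf 0 0 678 546 1409 1453)
  (leaf 225 0 532 546 1106 1712)) (leaf 344 0 545 546 1133 1960)) (leaf 344 0 514 546 1068 1701))
  (leaf 344 0 526 544 1093 1688)) (split c1 (split c0 (leaf 526 0 0 613 1174 1336)
  (leaf 523 0 400 349 1089 1514)) (leaf 431 0 441 467 1011 1582)) (leaf 379 0 523 504 1087 1658)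
  (leaf 379 0 523 504 1087 1658)) (split c0 (split c1 (split c1 (split c0 (split c2
  (leaf 344 0 525 472 1069 1581) (leaf 344 0 525 474 1069 1584)) (leaf 344 0 529 479 1077 1594))
  (leaf 344 0 525 476 1069 1586)) (leaf 239 0 529 562 1077 1558)) (leaf 526 0 546 214 1112 1541))
  (split c0 (split c1 (split c1 (split c0 (split c2 (leaf 526 0 0 571 1095 1289)
  (leaf 465 0 327 484 1000 1507)) (leaf 469 0 359 494 1000 1561)) (leaf 372 0 494 311 1006 1398))
  (leaf 222 0 494 527 1009 1456)) (leaf 479 0 494 233 1006 1443)) (split c0 (split c1 (split c1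
  (split c0 (split c2 (leaf 492 0 747 0 1521 1500) (leaf 492 0 526 311 1071 1584))
  (leaf 492 0 526 359 1071 1638)) (leaf 321 0 487 528 1071 1570)) (leaf 254 0 525 528 1069 1533))
  (leaf 377 0 527 528 1073 1687))

def tree011023 : DecisionTree :=
  node₄ (node₄ (split c1 (split c1 (split c0 (split c2 (leaf 0 0 765 479 1547 1454)
  (leaf 257 0 586 479 1185 1683)) (leaf 395 0 574 479 1162 1909)) (leaf 476 0 533 401 1078 1674))
  (leaf 476 0 534 412 1084 1740)) (split c1 (split c0 (leaf 526 0 646 0 1307 1421)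
  (leaf 518 0 381 421 1078 1566)) (leaf 402 0 531 420 1074 1602)) dead dead) (split c0 (split c1
  (split c1 (split c0 (split c2 (leaf 330 0 496 429 1003 1481) (leaf 330 0 498 428 1007 1482))
  (leaf 330 0 510 429 1032 1498)) (leaf 330 0 508 405 1028 1469)) (leaf 328 0 507 530 1026 1605))
  (leaf 514 0 227 564 1070 1537)) (split c0 (split c1 (split c1 (split c0 (split c2
  (leaf 525 0 0 582 1103 1300) (leaf 471 0 314 492 1000 1508)) (leaf 464 0 366 484 1000 1552))
  (leaf 422 0 484 293 1000 1428)) (leaf 218 0 484 546 1034 1460)) (leaf 452 0 397 378 1000 1456))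
  (split c0 (split c1 (split c1 (split c0 (split c2 (leaf 445 0 762 0 1541 1460)
  (leaf 445 0 551 263 1115 1503)) (leaf 445 0 561 302 1135 1558)) (leaf 338 0 409 560 1105 1534))
  (leaf 260 0 547 563 1107 1606)) (leaf 435 0 374 563 1067 1615))

def tree0110 : DecisionTree :=
  node₃ (node₃ dead tree011001 tree011002) (node₃ dead dead tree011012) (node₄ dead tree011021
  tree011022 tree011023)

def tree011200 : DecisionTree :=
  node₄ (node₄ dead (split c1 (split c2 (leaf 0 0 364 792 1483 1617)
  (leaf 538 0 364 251 1249 1556)) (leaf 318 0 364 578 1249 1698)) (leaf 537 0 245 455 1068 1539)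
  (leaf 537 0 245 455 1068 1539)) (node₄ dead (leaf 0 0 364 854 1599 1686)
  (leaf 466 0 284 504 1000 1601) (leaf 466 0 284 504 1000 1601)) (split c0 dead
  (leaf 538 0 317 505 1088 1742)) (split c0 dead (leaf 538 0 300 516 1070 1719))

def tree011201 : DecisionTree :=
  node₄ (node₄ (split c1 (split c1 (split c2 (split c0 (leaf 0 0 0 1122 2142 1268)
  (leaf 659 0 0 585 1117 1321)) (leaf 634 0 0 564 1077 1272)) (leaf 614 0 0 545 1041 1230))
  (leaf 630 0 0 556 1065 1259)) dead (leaf 721 0 0 502 1218 1289) (leaf 721 0 0 502 1218 1289))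
  (split c0 (split c1 (split c1 dead (leaf 638 0 0 564 1078 1276)) (leaf 628 0 0 557 1064 1258))
  (leaf 637 0 0 563 1077 1274)) (split c0 dead (leaf 699 0 0 537 1181 1306)) (split c0 (split c1
  (split c1 (split c2 (split c0 (leaf 1230 0 0 0 2078 1230) (leaf 637 0 0 584 1083 1278))
  (leaf 642 0 0 588 1090 1288)) (leaf 593 0 0 559 1004 1188)) (leaf 594 0 0 560 1004 1188))
  (leaf 667 0 0 603 1127 1334))

def tree011203 : DecisionTree :=
  node₄ (node₄ (split c1 (split c1 (split c2 (split c0 (leaf 0 0 302 904 1729 1615)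
  (leaf 496 0 268 557 1066 1658)) (leaf 582 0 258 518 1000 1680)) (leaf 606 0 300 371 1029 1627))
  (leaf 385 0 314 596 1140 1683)) (split c1 (split c2 (leaf 826 0 314 0 1396 1464)
  (leaf 446 0 314 471 1156 1606)) (leaf 456 0 314 470 1153 1615)) (leaf 609 0 161 462 1029 1448)
  (leaf 609 0 161 462 1029 1448)) (split c0 (split c1 (split c1 (split c2 (split c0
  (leaf 479 0 257 540 1011 1600) (leaf 483 0 264 540 1011 1618)) (leaf 487 0 265 539 1009 1623))
  (leaf 502 0 290 477 1000 1620)) (leaf 502 0 312 540 1070 1734)) (leaf 535 0 256 540 1011 1653))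
  (split c0 dead (leaf 541 0 314 547 1077 1785)) (split c0 (split c1 (split c1 (split c2 (split c0
  (leaf 1045 0 314 0 1771 1683) (leaf 747 0 314 274 1266 1689)) (leaf 651 0 314 432 1103 1768))
  (leaf 650 0 314 432 1102 1767)) (leaf 444 0 314 591 1107 1737)) (leaf 497 0 228 572 1071 1594))

def tree011210 : DecisionTree :=
  node₄ (node₄ dead (split c1 (split c2 (leaf 0 0 364 853 1675 1760)
  (leaf 551 0 364 235 1338 1725)) (leaf 451 0 364 411 1338 1804)) (leaf 551 0 225 460 1000 1563)
  (leaf 551 0 225 460 1000 1563)) (node₄ dead (leaf 550 0 211 478 1000 1558)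
  (leaf 551 0 211 479 1000 1560) (leaf 551 0 211 479 1000 1560)) (split c0 dead
  (leaf 546 0 196 469 1000 1511)) (split c0 dead (leaf 551 0 186 470 1000 1495))

def tree011213 : DecisionTree :=
  node₄ (node₄ (split c1 (split c1 (split c2 (split c1 dead (leaf 534 0 255 487 1196 1669))
  (leaf 538 0 271 517 1205 1744)) (leaf 575 0 261 504 1120 1743)) (leaf 419 0 315 568 1158 1781))
  (split c1 (split c2 (leaf 778 0 364 0 1370 1570) (leaf 462 0 364 414 1456 2116))
  (leaf 474 0 364 388 1365 2074)) (leaf 557 0 140 554 1115 1522) (leaf 557 0 140 554 1115 1522))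
  (split c0 (split c1 (split c1 (split c2 (split c1 dead (leaf 578 0 208 521 1087 1652))
  (leaf 578 0 208 520 1087 1651)) (leaf 578 0 208 523 1087 1654)) (leaf 561 0 217 540 1088 1677))
  (leaf 576 0 125 536 1083 1487)) (split c0 (split c1 (split c1 (split c2 (split c1 dead
  (leaf 460 0 254 564 1136 1685)) (leaf 461 0 254 567 1142 1690)) (leaf 471 0 176 580 1168 1546))
  (leaf 286 0 339 646 1301 1794)) (leaf 358 0 305 564 1136 1694)) (split c0 (split c1 (split c1
  (split c2 (split c1 dead (leaf 469 0 304 472 1117 1693)) (leaf 477 0 308 472 1132 1710))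
  (leaf 475 0 205 564 1136 1594)) (leaf 265 0 346 658 1325 1802)) (leaf 489 0 136 554 1116 1446))

def tree011220 : DecisionTree :=
  node₄ (node₄ dead (split c1 (split c2 (leaf 0 0 364 768 1403 1593)
  (leaf 493 0 329 398 1169 1613)) (leaf 433 0 290 563 1029 1649)) (leaf 516 0 288 558 1021 1723)
  (leaf 516 0 288 558 1021 1723)) (node₄ dead (leaf 677 0 0 643 1177 1391)
  (leaf 572 0 213 496 1000 1555) (leaf 572 0 213 496 1000 1555)) (split c0 dead
  (leaf 596 0 180 424 1036 1432)) (split c0 dead (leaf 607 0 298 396 1057 1660))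

def tree011221 : DecisionTree :=
  node₄ (node₄ (split c1 (split c1 (split c2 (split c2 (leaf 0 0 271 995 1948 1753)
  (leaf 341 0 271 667 1306 1841)) (leaf 531 0 271 630 1234 2059)) (leaf 566 0 271 521 1020 1789))
  (leaf 566 0 271 521 1020 1783)) dead (leaf 566 0 272 545 1067 1800)
  (leaf 566 0 272 545 1067 1800)) (split c0 (split c1 (split c1 dead
  (leaf 531 0 220 511 1001 1622)) (leaf 610 0 281 512 1055 1839)) (leaf 611 0 281 541 1060 1874))
  (split c0 (split c1 (split c1 (split c2 (split c2 (leaf 587 0 0 520 1019 1203)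
  (leaf 566 0 216 485 1000 1591)) (leaf 562 0 210 516 1011 1611)) (leaf 398 0 276 519 1017 1584))
  (leaf 421 0 281 470 1000 1561)) (leaf 487 0 281 386 1000 1506)) (split c0 (split c1 (split c1
  (split c2 (split c2 (leaf 1007 0 281 0 1741 1652) (leaf 715 0 281 298 1236 2032))
  (leaf 779 0 281 348 1347 2211)) (leaf 663 0 281 426 1146 1974)) (leaf 524 0 281 549 1132 1828))
  (leaf 504 0 254 594 1122 1742))

def tree011223 : DecisionTree :=
  node₄ (node₄ (split c1 (split c1 (split c2 (split c2 (leaf 0 0 338 905 1650 1686)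
  (leaf 376 0 317 617 1125 1707)) (leaf 403 0 337 656 1196 1818)) (leaf 560 0 253 575 1060 1712))
  (leaf 560 0 228 576 1053 1660)) (split c1 (split c2 (leaf 773 0 364 0 1334 1537)
  (leaf 539 0 297 500 1053 1702)) (leaf 528 0 297 500 1053 1691)) (leaf 451 0 307 598 1090 1741)
  (leaf 451 0 307 598 1090 1741)) (split c0 (split c1 (split c1 (split c2 (split c2
  (leaf 538 0 209 507 1000 1524) (leaf 537 0 209 507 1000 1523)) (leaf 538 0 209 507 1000 1524))
  (leaf 538 0 209 507 1000 1524)) (leaf 539 0 283 546 1003 1722)) (leaf 578 0 94 547 1000 1366))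
  (split c0 (split c1 (split c1 (split c2 (split c2 (leaf 768 0 0 486 1325 1309)
  (leaf 668 0 216 492 1153 1653)) (leaf 657 0 214 469 1134 1613)) (leaf 604 0 139 495 1042 1430))
  (leaf 407 0 314 511 1113 1618)) (leaf 456 0 299 460 1060 1580)) (split c0 (split c1 (split c1
  (split c2 (split c2 (leaf 1013 0 316 0 1748 1676) (leaf 645 0 316 395 1120 1735))
  (leaf 642 0 314 470 1113 1808)) (leaf 591 0 288 506 1021 1742)) (leaf 545 0 261 559 1019 1696))
  (leaf 593 0 204 548 1023 1613))

def tree011230 : DecisionTree :=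
  node₄ (node₄ dead (split c1 (split c2 (leaf 0 0 364 784 1619 1681)
  (leaf 529 0 330 424 1198 1724)) (leaf 473 0 294 517 1068 1697)) (leaf 619 0 257 518 1106 1765)
  (leaf 619 0 257 518 1106 1765)) (node₄ dead (leaf 888 0 364 0 1586 1670)
  (leaf 560 0 284 462 1031 1700) (leaf 560 0 284 462 1031 1700)) (split c0 dead
  (leaf 600 0 297 500 1078 1811)) (split c0 dead (leaf 559 0 284 376 1031 1600))

def tree011231 : DecisionTree :=
  node₄ (node₄ (split c1 (split c1 (split c2 (split c3 (leaf 0 0 314 924 1756 1704)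
  (leaf 403 0 314 595 1131 1886)) (leaf 492 0 314 595 1138 2008)) (leaf 531 0 314 590 1122 1925))
  (leaf 531 0 314 548 1122 1861)) dead (leaf 490 0 279 527 1002 1673)
  (leaf 490 0 279 527 1002 1673)) (split c0 (split c1 (split c1 dead
  (leaf 550 0 300 418 1072 1704)) (leaf 550 0 300 543 1072 1845)) (leaf 573 0 297 544 1062 1865))
  (split c0 (split c1 (split c1 (split c2 (split c3 (leaf 664 0 0 545 1223 1337)
  (leaf 731 0 0 545 1346 1410)) (leaf 710 0 0 545 1308 1387)) (leaf 352 0 315 545 1179 1695))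
  (leaf 640 0 315 277 1179 1706)) (leaf 349 0 315 551 1179 1698)) (split c0 (split c1 (split c1
  (split c2 (split c3 (leaf 920 0 314 0 1694 1666) (leaf 622 0 267 370 1146 1658))
  (leaf 664 0 255 357 1223 1664)) (leaf 475 0 314 429 1122 1665)) (leaf 563 0 240 429 1037 1604))
  (leaf 542 0 290 408 1037 1663))

def tree011233 : DecisionTree :=
  node₄ (node₄ (split c1 (split c1 (split c2 (split c3 (leaf 0 0 343 973 1884 1852)
  (leaf 339 0 343 662 1282 1835)) (leaf 464 0 343 673 1303 1973)) (leaf 562 0 294 551 1068 1825))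
  (leaf 550 0 304 576 1116 1864)) (split c1 (split c2 (leaf 846 0 343 0 1515 1583)
  (leaf 571 0 296 465 1074 1740)) (leaf 526 0 295 525 1071 1762)) (leaf 571 0 293 548 1064 1829)
  (leaf 571 0 293 548 1064 1829)) (split c0 (split c1 (split c1 (split c2 (split c3
  (leaf 495 0 250 560 1085 1674) (leaf 495 0 259 560 1085 1694)) (leaf 496 0 278 560 1085 1735))
  (leaf 503 0 299 519 1085 1741)) (leaf 503 0 305 560 1107 1800)) (leaf 605 0 106 558 1081 1473))
  (split c0 (split c1 (split c1 (split c2 (split c3 (leaf 711 0 0 564 1270 1389)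
  (leaf 619 0 169 563 1106 1628)) (leaf 690 0 230 564 1232 1831)) (leaf 610 0 230 564 1092 1751))
  (leaf 524 0 300 564 1092 1815)) (leaf 575 0 299 560 1085 1860)) (split c0 (split c1 (split c1
  (split c2 (split c3 (leaf 1021 0 263 0 1823 1586) (leaf 539 0 249 515 1000 1665))
  (leaf 678 0 255 415 1211 1702)) (leaf 468 0 266 491 1000 1603)) (leaf 374 0 266 554 1073 1581))
  (leaf 543 0 263 397 1000 1563))

def tree0112 : DecisionTree :=
  node₄ (node₄ tree011200 tree011201 dead tree011203) (node₄ tree011210 dead dead tree011213)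
  (node₄ tree011220 tree011221 dead tree011223) (node₄ tree011230 tree011231 dead tree011233)

def tree012001 : DecisionTree :=
  node₄ (node₄ dead dead (leaf 0 0 0 1246 2175 1288) (leaf 0 0 0 1246 2175 1288)) (split c0 (split
  c1 (split c2 (split c0 (split c0 (leaf 0 0 0 1194 2084 1234) (leaf 0 0 0 1194 2084 1234))
  (leaf 0 0 0 1194 2084 1234)) (leaf 0 0 0 1143 1995 1181)) (leaf 0 0 0 1268 2213 1310))
  (leaf 0 0 0 1202 2098 1242)) (split c0 dead (leaf 0 0 0 1163 2030 1202)) (split c0 (split c1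
  (split c2 (split c0 (split c0 dead (leaf 0 0 0 1205 2215 1312)) (leaf 0 0 0 1203 2211 1309))
  (leaf 0 0 0 1205 2215 1312)) (leaf 0 0 0 1190 2115 1252)) (leaf 0 0 0 1221 2148 1272))

def tree012002 : DecisionTree :=
  node₄ (node₄ dead (split c2 (split c0 dead (leaf 775 0 0 447 1412 1285))
  (leaf 760 0 0 449 1384 1271)) (leaf 741 0 0 486 1350 1288) (leaf 741 0 0 486 1350 1288)) (split
  c0 (split c1 (split c2 (split c0 (split c0 (leaf 608 0 0 706 1226 1373)
  (leaf 611 0 0 706 1226 1376)) (leaf 635 0 0 706 1226 1401)) (leaf 609 0 0 706 1226 1374))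
  (leaf 647 0 0 706 1226 1414)) (leaf 665 0 0 614 1196 1339)) (split c0 (split c1 (split c2 (split
  c0 (split c0 (leaf 636 0 0 652 1144 1347) (leaf 636 0 0 655 1144 1350))
  (leaf 636 0 0 658 1144 1353)) (leaf 617 0 0 638 1109 1312)) (leaf 617 0 0 639 1110 1313))
  (leaf 617 0 0 638 1109 1312)) (split c0 (split c1 (split c2 (split c0 (split c0
  (leaf 1358 0 0 0 2441 1445) (leaf 914 0 0 407 1643 1565)) (leaf 803 0 0 587 1444 1709))
  (leaf 589 0 0 695 1213 1345)) (leaf 429 0 0 860 1494 1341)) (leaf 622 0 0 645 1121 1325))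

def tree012003 : DecisionTree :=
  node₄ (node₄ dead (split c2 (split c0 (leaf 1144 0 0 0 2082 1233) (leaf 615 0 0 581 1191 1321))
  (leaf 655 0 0 581 1192 1361)) (leaf 623 0 0 581 1134 1285) (leaf 623 0 0 581 1134 1285)) (split
  c0 (split c1 (split c2 (split c0 (split c0 (leaf 617 0 0 614 1123 1294)
  (leaf 618 0 0 614 1125 1295)) (leaf 618 0 0 615 1125 1296)) (leaf 618 0 0 614 1125 1295))
  (leaf 618 0 0 647 1125 1329)) (leaf 629 0 0 659 1146 1353)) (split c0 (split c1 (split c2 (split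
  c0 (split c0 (leaf 602 0 0 631 1097 1295) (leaf 584 0 0 611 1063 1255))
  (leaf 582 0 0 609 1059 1251)) (leaf 607 0 0 635 1105 1305)) (leaf 542 0 0 650 1130 1250))
  (leaf 609 0 0 637 1108 1309)) (split c0 (split c1 (split c2 (split c0 (split c0
  (leaf 1252 0 0 0 2278 1349) (leaf 870 0 0 361 1583 1356)) (leaf 665 0 0 616 1220 1435))
  (leaf 611 0 0 640 1118 1317)) (leaf 632 0 0 663 1159 1364)) (leaf 593 0 0 620 1079 1274))

def tree012011 : DecisionTree :=
  node₄ (node₄ (split c1 (split c2 (split c0 (split c1 dead (leaf 585 0 0 661 1385 1622))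
  (leaf 589 0 0 660 1383 1626)) (leaf 588 0 0 660 1383 1558)) (leaf 617 0 0 661 1385 1605)) dead
  (leaf 565 0 0 650 1362 1479) (leaf 565 0 0 650 1362 1479)) (split c0 (split c1 (split c2 (split
  c0 (split c1 dead (leaf 614 0 0 613 1284 1483)) (leaf 614 0 0 622 1303 1494))
  (leaf 614 0 0 613 1284 1483)) (leaf 618 0 0 629 1318 1508)) (leaf 704 0 0 537 1405 1495)) (split
  c0 dead (leaf 623 0 0 590 1243 1465)) (split c0 (split c1 (split c2 (split c0 (split c1 dead
  (leaf 726 0 0 420 1452 1714)) (leaf 745 0 0 431 1490 1759)) dead) (leaf 680 0 0 561 1361 1606))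
  (leaf 489 0 0 719 1366 1384))

def tree012013 : DecisionTree :=
  node₄ (node₄ (split c1 (split c2 (split c0 (split c1 dead (leaf 591 0 0 668 1377 1508))
  (leaf 601 0 0 668 1377 1519)) (leaf 607 0 0 562 1381 1402)) (leaf 607 0 0 669 1379 1527)) dead
  (leaf 565 0 0 668 1377 1477) (leaf 565 0 0 668 1377 1477)) (split c0 (split c1 (split c2 (split
  c0 (split c1 dead (leaf 571 0 0 662 1163 1362)) (leaf 572 0 0 668 1174 1370))
  (leaf 572 0 0 661 1162 1362)) (leaf 572 0 0 683 1200 1385)) (leaf 572 0 0 661 1162 1362)) (split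
  c0 (split c1 (split c2 (split c0 (split c1 dead (leaf 607 0 0 693 1218 1437))
  (leaf 591 0 0 670 1180 1394)) (leaf 574 0 0 651 1146 1354)) (leaf 469 0 0 754 1325 1338))
  (leaf 536 0 0 643 1130 1301)) (split c0 (split c1 (split c2 (split c0 (split c1 dead
  (leaf 569 0 0 633 1196 1379)) (leaf 571 0 0 633 1196 1381)) (leaf 554 0 0 634 1197 1362))
  (leaf 506 0 0 678 1194 1304)) (leaf 594 0 0 586 1185 1351))

def tree012021 : DecisionTree :=
  node₄ (node₄ (split c1 (split c2 (split c0 (split c2 dead (leaf 462 0 0 734 1648 1610))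
  (leaf 462 0 0 762 1711 1648)) (leaf 601 0 0 632 1419 1601)) (leaf 601 0 0 687 1543 1688)) dead
  (leaf 585 0 0 633 1422 1586) (leaf 585 0 0 633 1422 1586)) (split c0 (split c1 (split c2 (split
  c0 (split c2 dead (leaf 560 0 0 683 1534 1588)) (leaf 560 0 0 682 1532 1587))
  (leaf 560 0 0 680 1527 1584)) (leaf 434 0 0 762 1711 1540)) (leaf 741 0 0 463 1525 1515)) (split
  c0 dead (leaf 613 0 0 643 1444 1599)) (split c0 (split c1 (split c2 (split c0 (split c2 dead
  (leaf 779 0 0 508 1928 2087)) (leaf 798 0 0 493 1871 2077)) (leaf 534 0 0 693 1389 1473))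
  (leaf 561 0 0 721 1445 1539)) (leaf 573 0 0 649 1303 1468))

def tree012022 : DecisionTree :=
  node₄ (node₄ (split c1 (split c2 (split c0 (split c2 dead (leaf 397 0 0 791 1437 1691))
  (leaf 397 0 0 791 1437 1691)) (leaf 611 0 0 618 1153 1339)) (leaf 624 0 0 625 1136 1336)) (split
  c2 (split c0 dead (leaf 629 0 0 579 1110 1276)) (leaf 621 0 0 556 1096 1243))
  (leaf 611 0 0 594 1078 1273) (leaf 611 0 0 594 1078 1273)) (split c0 (split c1 (split c2 (split
  c0 (split c2 dead (leaf 736 0 0 579 1325 1399)) (leaf 742 0 0 579 1335 1406))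
  (leaf 670 0 0 584 1206 1334)) (leaf 656 0 0 616 1181 1353)) (leaf 612 0 0 607 1101 1297)) (split
  c0 (split c1 (split c2 (split c0 (split c2 dead (leaf 638 0 0 630 1148 1349))
  (leaf 638 0 0 630 1148 1349)) (leaf 623 0 0 617 1121 1319)) (leaf 484 0 0 740 1340 1302))
  (leaf 617 0 0 611 1110 1306)) (split c0 (split c1 (split c2 (split c0 (split c2 dead
  (leaf 663 0 0 581 1193 1401)) (leaf 663 0 0 581 1193 1401)) (leaf 619 0 0 611 1114 1308))
  (leaf 614 0 0 665 1205 1363)) (leaf 596 0 0 593 1074 1270))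

def tree012023 : DecisionTree :=
  node₄ (node₄ (split c1 (split c2 (split c0 (split c2 dead (leaf 622 0 0 609 1780 1746))
  (leaf 628 0 0 609 1798 1756)) (leaf 652 0 0 609 1342 1440)) (leaf 683 0 0 609 1411 1528)) (split
  c2 (split c0 (leaf 1156 0 0 0 2379 1409) (leaf 652 0 0 609 1342 1532))
  (leaf 651 0 0 609 1340 1530)) dead dead) (split c0 (split c1 (split c2 (split c0 (split c2 dead
  (leaf 603 0 0 628 1241 1363)) (leaf 613 0 0 630 1262 1377)) (leaf 604 0 0 631 1243 1367))
  (leaf 613 0 0 639 1262 1386)) (leaf 600 0 0 596 1235 1327)) (split c0 (split c1 (split c2 (split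
  c0 (split c2 dead (leaf 639 0 0 665 1315 1444)) (leaf 639 0 0 690 1325 1469))
  (leaf 639 0 0 685 1315 1464)) (leaf 538 0 0 755 1449 1416)) (leaf 639 0 0 609 1315 1388)) (split
  c0 (split c1 (split c2 (split c0 (split c2 dead (leaf 564 0 0 657 1261 1344))
  (leaf 569 0 0 656 1259 1350)) (leaf 510 0 0 679 1230 1301)) (leaf 370 0 0 845 1531 1296))
  (leaf 572 0 0 624 1177 1321))

def tree012031 : DecisionTree :=
  node₄ (node₄ (split c1 (split c2 (split c0 (split c3 (leaf 0 0 0 1259 2455 1453)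
  (leaf 465 0 0 801 1562 1622)) (leaf 621 0 0 809 1578 1866)) (leaf 709 0 0 693 1472 1672))
  (leaf 709 0 0 711 1452 1680)) dead (leaf 666 0 0 711 1386 1574) (leaf 666 0 0 711 1386 1574))
  (split c0 (split c1 (split c2 (split c0 (split c3 (leaf 667 0 0 685 1336 1548)
  (leaf 662 0 0 684 1334 1541)) (leaf 641 0 0 685 1336 1519)) (leaf 618 0 0 685 1336 1492))
  (leaf 701 0 0 686 1344 1588)) (leaf 699 0 0 616 1341 1505)) (split c0 dead
  (leaf 681 0 0 675 1316 1552)) (split c0 (split c1 (split c2 (split c0 (split c3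
  (leaf 1284 0 0 0 2462 1458) (leaf 775 0 0 460 1486 1411)) (leaf 694 0 0 560 1331 1434))
  (leaf 455 0 0 711 1386 1337)) (leaf 492 0 0 751 1464 1426)) (leaf 621 0 0 592 1191 1389))

def tree012032 : DecisionTree :=
  node₄ (node₄ (split c1 (split c2 (split c0 (split c3 (leaf 0 0 0 1113 2046 1211) dead)
  (leaf 408 0 0 781 1436 1694)) (leaf 614 0 0 607 1124 1323)) (leaf 673 0 0 592 1240 1375)) (split
  c2 (split c0 dead (leaf 719 0 0 480 1220 1243)) (leaf 613 0 0 561 1040 1225)) dead dead) (split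
  c0 (split c1 (split c2 (split c0 (split c0 (leaf 680 0 0 563 1154 1294)
  (leaf 680 0 0 563 1154 1294)) (leaf 680 0 0 563 1154 1294)) (leaf 680 0 0 563 1154 1294))
  (leaf 680 0 0 627 1154 1364)) (leaf 641 0 0 591 1088 1286)) (split c0 (split c1 (split c2 (split
  c0 (split c0 (leaf 641 0 0 571 1088 1264) (leaf 641 0 0 571 1088 1264))
  (leaf 620 0 0 571 1052 1243)) (leaf 612 0 0 566 1041 1230)) (leaf 609 0 0 562 1033 1222))
  (leaf 606 0 0 559 1028 1216)) (split c0 (split c1 (split c2 (split c0 (split c3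
  (leaf 1324 0 0 0 2246 1330) (leaf 696 0 0 523 1181 1267)) (leaf 696 0 0 526 1181 1270))
  (leaf 700 0 0 525 1188 1273)) (leaf 541 0 0 723 1329 1329)) (leaf 632 0 0 583 1072 1268))

def tree012033 : DecisionTree :=
  node₄ (node₄ (split c1 (split c2 (split c0 (split c3 (leaf 0 0 0 1163 2152 1274)
  (leaf 330 0 0 905 1674 1571)) (leaf 515 0 0 822 1528 1805)) (leaf 645 0 0 670 1240 1464))
  (leaf 659 0 0 684 1267 1499)) (split c2 (split c0 (leaf 1159 0 0 0 2207 1307)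
  (leaf 650 0 0 610 1238 1434)) (leaf 650 0 0 633 1238 1461)) (leaf 654 0 0 672 1246 1470)
  (leaf 654 0 0 672 1246 1470)) (split c0 (split c1 (split c2 (split c0 (split c0
  (leaf 656 0 0 689 1268 1487) (leaf 656 0 0 689 1268 1487)) (leaf 665 0 0 686 1266 1494))
  (leaf 665 0 0 632 1266 1436)) (leaf 648 0 0 689 1268 1478)) (leaf 668 0 0 691 1272 1503)) (split
  c0 (split c1 (split c2 (split c0 (split c0 (leaf 617 0 0 657 1209 1409)
  (leaf 617 0 0 657 1209 1409)) (leaf 618 0 0 641 1180 1392)) (leaf 618 0 0 640 1178 1391))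
  (leaf 540 0 0 704 1296 1373)) (leaf 612 0 0 634 1167 1378)) (split c0 (split c1 (split c2 (split
  c0 (split c3 (leaf 1287 0 0 0 2451 1451) (leaf 730 0 0 517 1390 1384))
  (leaf 705 0 0 583 1343 1428)) (leaf 610 0 0 584 1162 1322)) (leaf 650 0 0 584 1238 1367))
  (leaf 610 0 0 584 1162 1347))

def tree0120 : DecisionTree :=
  node₄ (node₄ dead tree012001 tree012002 tree012003) (node₄ dead tree012011 dead tree012013)
  (node₄ dead tree012021 tree012022 tree012023) (node₄ dead tree012031 tree012032 tree012033)

def tree012200 : DecisionTree :=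
  node₄ (node₄ dead (split c2 (split c2 (leaf 0 0 466 735 1449 1455)
  (leaf 357 0 323 512 1010 1582)) (leaf 357 0 466 415 1011 1652)) (leaf 431 0 205 642 1266 1701)
  (leaf 431 0 205 642 1266 1701)) (node₄ dead (leaf 429 0 295 585 1159 1746)
  (leaf 0 0 467 741 1461 1463) (leaf 429 0 295 585 1159 1746)) (split c0 dead
  (leaf 407 0 389 555 1100 1796)) (split c0 dead (leaf 431 0 273 589 1165 1726))

def tree012201 : DecisionTree :=
  node₄ (node₄ (split c1 (split c2 (split c2 (split c0 (leaf 0 0 0 1187 2599 1539)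
  (leaf 551 0 0 712 1559 1512)) (leaf 712 0 0 605 1325 1546)) (leaf 719 0 0 572 1313 1510))
  (leaf 716 0 0 596 1308 1544)) dead (leaf 776 0 0 489 1417 1464) (leaf 776 0 0 489 1417 1464))
  (split c0 (split c1 (split c2 (split c2 (split c0 (leaf 723 0 0 566 1321 1513)
  (leaf 723 0 0 567 1321 1514)) (leaf 723 0 0 570 1321 1518)) (leaf 723 0 0 571 1321 1519))
  (leaf 724 0 0 615 1347 1577)) (leaf 715 0 0 594 1306 1540)) (split c0 dead
  (leaf 668 0 0 556 1220 1441)) (split c0 (split c1 (split c2 (split c2 (split c0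
  (leaf 1355 0 0 0 2475 1465) (leaf 715 0 0 566 1306 1455)) (leaf 824 0 0 562 1505 1567))
  (leaf 694 0 0 609 1268 1484)) (leaf 681 0 0 625 1246 1471)) (leaf 685 0 0 628 1251 1478))

def tree012203 : DecisionTree :=
  node₄ (node₄ (split c1 (split c2 (split c2 (split c0 (leaf 0 0 437 655 1292 1324)
  (leaf 428 0 434 469 1000 1563)) (leaf 489 0 427 460 1000 1612)) (leaf 489 0 437 332 1000 1475))
  (leaf 370 0 379 589 1162 1570)) (split c2 (split c2 (leaf 765 0 437 0 1437 1394)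
  (leaf 436 0 266 530 1288 1499)) (leaf 413 0 381 492 1196 1536)) (leaf 512 0 324 468 1000 1519)
  (leaf 512 0 324 468 1000 1519)) (split c0 (split c1 (split c2 (split c2 (split c0
  (leaf 382 0 348 472 1000 1409) (leaf 382 0 348 501 1000 1443)) (leaf 382 0 348 517 1020 1461))
  (leaf 382 0 303 529 1043 1419)) (leaf 379 0 348 563 1110 1512)) (leaf 574 0 284 515 1079 1593))
  (split c0 dead (leaf 549 0 244 560 1104 1568)) (split c0 (split c1 (split c2 (split c2 (split c0
  (leaf 827 0 406 0 1554 1437) (leaf 642 0 406 239 1206 1516)) (leaf 635 0 406 313 1193 1597))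
  (leaf 473 0 238 601 1185 1524)) (leaf 321 0 366 602 1187 1515)) (leaf 535 0 200 557 1099 1494))

def tree012210 : DecisionTree :=
  node₄ (node₄ dead (split c2 (split c2 (leaf 0 0 634 569 1486 1584)
  (leaf 356 0 456 543 1143 1716)) (leaf 571 0 396 393 1133 1700)) (leaf 618 0 218 539 1137 1643)
  (leaf 618 0 218 539 1137 1643)) (node₄ dead (leaf 466 0 469 287 1099 1513)
  (leaf 403 0 472 341 1106 1516) (leaf 466 0 469 287 1099 1513)) (split c0 dead
  (leaf 618 0 323 543 1143 1793)) (split c0 dead (leaf 594 0 292 483 1092 1650))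

def tree012211 : DecisionTree :=
  node₄ (node₄ (split c1 (split c2 (split c2 (split c1 (leaf 0 0 614 569 1439 1572)
  (leaf 253 0 525 559 1231 1792)) (leaf 305 0 547 567 1282 1906)) (leaf 560 0 333 477 1047 1685))
  (leaf 562 0 307 569 1218 1783)) dead (leaf 631 0 205 546 1169 1650)
  (leaf 631 0 205 546 1169 1650)) (split c0 (split c1 (split c2 (split c2 (split c1
  (leaf 493 0 371 425 1000 1592) (leaf 510 0 379 416 1000 1610)) (leaf 512 0 395 438 1000 1662))
  (leaf 512 0 389 426 1000 1639)) (leaf 321 0 432 464 1013 1538)) (leaf 550 0 432 222 1016 1481))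
  (split c0 (split c1 (split c2 dead (leaf 563 0 389 475 1040 1756))
  (leaf 563 0 344 475 1040 1693)) (leaf 564 0 419 475 1042 1798)) (split c0 (split c1 (split c2
  (split c2 (split c1 (leaf 631 0 623 0 1460 1553) (leaf 630 0 547 180 1282 1834))
  (leaf 630 0 547 278 1282 2045)) (leaf 566 0 494 357 1158 1901)) (leaf 592 0 323 495 1278 1851))
  (leaf 631 0 221 569 1192 1702))

def tree012213 : DecisionTree :=
  node₄ (node₄ (split c1 (split c2 (split c2 (split c1 (leaf 0 0 605 548 1418 1518)
  (leaf 263 0 484 525 1134 1608)) (leaf 338 0 482 536 1130 1700)) (leaf 489 0 482 347 1130 1631))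
  (leaf 522 0 360 537 1123 1733)) (split c2 (split c2 (leaf 697 0 552 0 1294 1524)
  (leaf 450 0 502 313 1177 1864)) (leaf 611 0 404 301 1128 1879)) (leaf 591 0 294 519 1091 1694)
  (leaf 591 0 294 519 1091 1694)) (split c0 (split c1 (split c2 (split c2 (split c1
  (leaf 447 0 396 413 1000 1547) (leaf 447 0 401 418 1000 1561)) (leaf 447 0 416 433 1000 1600))
  (leaf 447 0 412 434 1000 1596)) (leaf 280 0 484 482 1134 1573)) (leaf 500 0 502 231 1177 1527))
  (split c0 (split c1 (split c2 (split c2 (split c1 (leaf 761 0 0 544 1404 1502)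
  (leaf 621 0 267 503 1146 1669)) (leaf 620 0 267 530 1144 1702)) (leaf 620 0 339 494 1144 1757))
  (leaf 558 0 339 563 1178 1775)) (leaf 618 0 256 546 1142 1704)) (split c0 (split c1 (split c2
  (split c2 (split c1 (leaf 940 0 425 0 1734 1614) (leaf 646 0 425 260 1192 1615))
  (leaf 616 0 425 387 1137 1739)) (leaf 584 0 246 542 1134 1648)) (leaf 429 0 425 542 1134 1728))
  (leaf 487 0 353 541 1132 1690))

def tree012220 : DecisionTree :=
  node₄ (node₄ dead (split c2 (split c2 (leaf 0 0 493 628 1280 1423)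
  (leaf 415 0 447 386 1061 1674)) (leaf 465 0 490 266 1165 1660)) (leaf 492 0 186 527 1074 1497)
  (leaf 492 0 186 527 1074 1497)) (node₄ dead (leaf 283 0 493 454 1171 1555)
  (leaf 563 0 0 613 1249 1443) (leaf 283 0 493 454 1171 1555)) (split c0 dead
  (leaf 420 0 493 383 1171 1640)) (split c0 dead (leaf 542 0 493 208 1171 1582))

def tree012221 : DecisionTree :=
  node₄ (node₄ (split c1 (split c2 (split c2 (split c2 dead (leaf 381 0 393 442 1000 1483))
  (leaf 381 0 393 442 1000 1483)) (leaf 561 0 354 288 1013 1385)) (leaf 433 0 393 442 1000 1499))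
  dead (leaf 482 0 310 427 1000 1423) (leaf 482 0 310 427 1000 1423)) (split c0 (split c1 (split
  c2 (split c2 (split c2 dead (leaf 509 0 378 431 1000 1546)) (leaf 511 0 389 430 1000 1561))
  (leaf 508 0 384 429 1000 1550)) (leaf 361 0 428 442 1000 1476)) (leaf 561 0 428 212 1013 1393))
  (split c0 (split c1 (split c2 dead (leaf 499 0 411 396 1000 1522))
  (leaf 456 0 418 405 1000 1507)) (leaf 536 0 418 340 1000 1499)) (split c0 (split c1 (split c2
  (split c2 (split c2 dead (leaf 519 0 425 317 1313 1861)) (leaf 502 0 425 337 1396 1893))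
  (leaf 312 0 425 442 1038 1490)) (leaf 388 0 425 443 1005 1547)) (leaf 561 0 211 443 1013 1373))

def tree012223 : DecisionTree :=
  node₄ (node₄ (split c1 (split c2 (split c2 (split c2 dead (leaf 422 0 442 448 1300 1794))
  (leaf 432 0 443 454 1331 1820)) (leaf 555 0 369 333 1002 1464)) (leaf 371 0 377 532 1048 1522))
  (split c2 (split c2 (leaf 564 0 494 0 1173 1262) (leaf 318 0 489 440 1161 1519))
  (leaf 371 0 359 525 1098 1488)) (leaf 407 0 280 533 1050 1423) (leaf 407 0 280 533 1050 1423))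
  (split c0 (split c1 (split c2 (split c2 (split c2 dead (leaf 416 0 396 453 1000 1502))
  (leaf 416 0 410 469 1000 1540)) (leaf 416 0 410 469 1000 1540)) (leaf 279 0 476 524 1130 1559))
  (leaf 416 0 277 526 1039 1419)) (split c0 (split c1 (split c2 (split c2 (split c2 dead
  (leaf 391 0 441 448 1047 1534)) (leaf 391 0 449 449 1066 1546)) (leaf 391 0 458 450 1087 1560))
  (leaf 346 0 493 477 1171 1596)) (leaf 391 0 455 450 1080 1556)) (split c0 (split c1 (split c2
  (split c2 (split c2 dead (leaf 368 0 441 431 1047 1491)) (leaf 368 0 441 440 1047 1502))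
  (leaf 312 0 367 530 1047 1446)) (leaf 273 0 422 533 1053 1487)) (leaf 368 0 337 498 1000 1423))

def tree012230 : DecisionTree :=
  node₄ (node₄ dead (split c2 (split c2 (leaf 0 0 622 661 1557 1772)
  (leaf 431 0 497 418 1148 1815)) (leaf 431 0 477 466 1103 1843)) (leaf 654 0 223 500 1187 1702)
  (leaf 654 0 223 500 1187 1702)) (node₄ dead (leaf 586 0 322 478 1126 1734)
  (leaf 752 0 590 0 1363 1613) (leaf 586 0 322 478 1126 1734)) (split c0 dead
  (leaf 614 0 365 466 1113 1806)) (split c0 dead (leaf 536 0 248 449 1058 1539))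

def tree012231 : DecisionTree :=
  node₄ (node₄ (split c1 (split c2 (split c2 (split c3 (leaf 0 0 465 681 1461 1501)
  (leaf 260 0 465 585 1255 1771)) (leaf 324 0 465 583 1251 1865)) (leaf 549 0 465 401 1074 1733))
  (leaf 549 0 379 445 1000 1671)) dead (leaf 596 0 205 580 1245 1655)
  (leaf 596 0 205 580 1245 1655)) (split c0 (split c1 (split c2 (split c2 (split c3
  (leaf 507 0 362 456 1000 1617) (leaf 510 0 363 453 1000 1618)) (leaf 518 0 363 457 1000 1631))
  (leaf 507 0 325 457 1000 1568)) (leaf 545 0 363 470 1009 1677)) (leaf 575 0 369 479 1040 1729))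
  (split c0 (split c1 (split c2 dead (leaf 596 0 234 527 1131 1646))
  (leaf 596 0 241 527 1131 1665)) dead) (split c0 (split c1 (split c2 (split c2 (split c3
  (leaf 596 0 465 0 1078 1274) (leaf 548 0 399 313 1000 1530)) (leaf 492 0 437 322 1010 1533))
  (leaf 374 0 414 430 1000 1513)) (leaf 275 0 465 499 1074 1564)) (leaf 550 0 194 470 1009 1451))

def tree012233 : DecisionTree :=
  node₄ (node₄ (split c1 (split c2 (split c2 (split c3 (leaf 0 0 529 687 1480 1600)
  (leaf 209 0 529 573 1235 1848)) (leaf 369 0 512 547 1183 2093)) (leaf 544 0 369 523 1179 1869))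
  (leaf 543 0 285 556 1198 1807)) (split c2 (split c2 (leaf 700 0 549 0 1269 1502)
  (leaf 527 0 505 297 1167 1640)) (leaf 576 0 276 501 1101 1644)) (leaf 653 0 225 532 1184 1685)
  (leaf 653 0 225 532 1184 1685)) (split c0 (split c1 (split c2 (split c2 (split c3
  (leaf 470 0 355 460 1000 1575) (leaf 470 0 356 473 1017 1593)) (leaf 463 0 355 506 1088 1626))
  (leaf 476 0 356 455 1000 1576)) (leaf 480 0 356 544 1169 1694)) (leaf 612 0 292 537 1154 1739))
  (split c0 (split c1 (split c2 (split c2 (split c3 (leaf 744 0 0 526 1403 1468)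
  (leaf 597 0 242 522 1126 1636)) (leaf 611 0 242 525 1152 1654)) (leaf 566 0 364 523 1124 1770))
  (leaf 498 0 372 526 1131 1712)) (leaf 582 0 372 452 1098 1708)) (split c0 (split c1 (split c2
  (split c2 (split c3 (leaf 644 0 549 0 1268 1470) (leaf 514 0 398 406 1000 1612))
  (leaf 388 0 433 467 1004 1602)) (leaf 449 0 257 501 1077 1471)) (leaf 243 0 488 534 1148 1607))
  (leaf 547 0 178 488 1049 1451))

def tree0122 : DecisionTree :=
  node₄ (node₄ tree012200 tree012201 dead tree012203) (node₄ tree012210 tree012211 dead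
  tree012213) (node₄ tree012220 tree012221 dead tree012223) (node₄ tree012230 tree012231 dead
  tree012233)

def tree012300 : DecisionTree :=
  node₄ (node₄ dead (split c2 (split c3 (leaf 0 0 596 556 1237 1408)
  (leaf 340 0 356 524 1166 1503)) (leaf 436 0 400 413 1169 1586)) (leaf 450 0 240 540 1206 1563)
  (leaf 450 0 240 540 1206 1563)) (node₄ dead (leaf 474 0 446 466 1270 1755)
  (leaf 0 0 728 556 1394 1558) (leaf 474 0 446 466 1270 1755)) (split c0 dead
  (leaf 435 0 530 422 1166 1742)) (split c0 dead (leaf 462 0 358 522 1238 1696))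

def tree012301 : DecisionTree :=
  node₄ (node₄ (split c1 (split c2 (split c3 (split c0 (leaf 0 0 1143 0 2559 1515)
  (leaf 617 0 687 0 1538 1530)) (leaf 714 0 553 0 1244 1449)) (leaf 613 0 659 0 1475 1491))
  (leaf 758 0 546 0 1322 1506)) dead (leaf 757 0 472 0 1319 1404) (leaf 757 0 472 0 1319 1404))
  (split c0 (split c1 (split c2 (split c3 (split c0 (leaf 809 0 556 0 1409 1567)
  (leaf 810 0 556 0 1411 1568)) (leaf 810 0 556 0 1411 1568)) (leaf 810 0 525 0 1411 1527))
  (leaf 812 0 551 0 1415 1564)) (leaf 771 0 578 0 1343 1557)) (split c0 (split c1 (split c2 dead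
  (leaf 577 0 680 0 1400 1421)) (leaf 578 0 660 0 1316 1372)) (leaf 547 0 680 0 1317 1342)) (split
  c0 dead (leaf 797 0 583 0 1389 1591))

def tree012302 : DecisionTree :=
  node₄ (node₄ (split c1 (split c2 (split c3 (split c0 (leaf 0 0 525 538 1196 1302)
  (leaf 361 0 470 477 1061 1546)) (leaf 379 0 482 473 1065 1573)) (leaf 592 0 388 327 1070 1503))
  (leaf 362 0 481 469 1062 1549)) (split c2 (split c3 (leaf 669 0 0 538 1210 1424)
  (leaf 454 0 337 443 1000 1450)) (leaf 493 0 371 389 1000 1459)) (leaf 656 0 363 236 1186 1423)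
  (leaf 656 0 363 236 1186 1423)) (split c0 (split c1 (split c2 (split c3 (split c0
  (leaf 387 0 431 435 1000 1474) (leaf 387 0 428 453 1008 1494)) (leaf 387 0 438 480 1068 1541))
  (leaf 388 0 378 469 1043 1460)) (leaf 307 0 487 487 1083 1520)) (leaf 600 0 487 259 1085 1534))
  (split c0 (split c1 (split c2 (split c3 (split c0 (leaf 805 0 0 405 1455 1395)
  (leaf 571 0 294 405 1033 1505)) (leaf 567 0 339 405 1025 1556)) (leaf 485 0 469 405 1000 1582))
  (leaf 408 0 525 405 1005 1563)) (leaf 521 0 525 251 1005 1482)) (split c0 dead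
  (leaf 504 0 291 425 1006 1454))

def tree012310 : DecisionTree :=
  node₄ (node₄ dead (split c2 (split c3 (leaf 0 0 697 549 1629 1724)
  (leaf 299 0 518 537 1260 1849)) (leaf 564 0 315 529 1246 1905)) (leaf 654 0 247 507 1195 1750)
  (leaf 654 0 247 507 1195 1750)) (node₄ dead (leaf 504 0 469 244 1096 1529)
  (leaf 485 0 498 258 1164 1568) (leaf 504 0 469 244 1096 1529)) (split c0 dead
  (leaf 622 0 383 389 1133 1739)) (split c0 dead (leaf 759 0 184 529 1383 1806))

def tree012311 : DecisionTree :=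
  node₄ (node₄ (split c1 (split c2 (split c3 (split c1 (leaf 0 0 564 557 1367 1587)
  (leaf 246 0 532 557 1367 1923)) (leaf 441 0 415 557 1367 2064)) (leaf 683 0 232 477 1368 1822))
  (leaf 690 0 191 557 1367 1874)) dead (leaf 742 0 185 557 1367 1864)
  (leaf 742 0 185 557 1367 1864)) (split c0 (split c1 (split c2 (split c3 (split c1
  (leaf 538 0 367 342 1000 1586) (leaf 538 0 374 341 1000 1595)) (leaf 538 0 407 342 1000 1642))
  (leaf 538 0 385 342 1000 1611)) (leaf 370 0 516 366 1206 1645)) (leaf 649 0 169 385 1189 1496))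
  (split c0 (split c1 (split c2 dead (leaf 700 0 262 513 1282 1865))
  (leaf 701 0 209 513 1284 1793)) (leaf 701 0 262 513 1284 1867)) (split c0 (split c1 (split c2
  (split c3 (split c1 (leaf 736 0 471 0 1348 1448) (leaf 736 0 471 229 1348 2010))
  (leaf 736 0 459 320 1348 2217)) (leaf 611 0 296 509 1344 1866)) (leaf 685 0 210 518 1381 1850))
  (leaf 735 0 186 557 1385 1874))

def tree012320 : DecisionTree :=
  node₄ (node₄ dead (split c2 (split c3 (leaf 0 0 525 557 1242 1347)
  (leaf 369 0 454 431 1000 1613)) (leaf 378 0 525 304 1034 1541)) (leaf 607 0 384 247 1186 1475)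
  (leaf 607 0 384 247 1186 1475)) (node₄ dead (leaf 402 0 514 290 1012 1445)
  (leaf 631 0 0 553 1233 1457) (leaf 402 0 514 290 1012 1445)) (split c0 dead
  (leaf 652 0 282 367 1270 1565)) (split c0 dead (leaf 307 0 525 391 1034 1482))

def tree012321 : DecisionTree :=
  node₄ (node₄ (split c1 (split c2 (split c3 (split c2 dead (leaf 369 0 428 408 1009 1518))
  (leaf 369 0 428 408 1009 1518)) (leaf 576 0 374 250 1006 1391)) (leaf 415 0 428 408 1009 1526))
  dead (leaf 577 0 283 354 1007 1435) (leaf 577 0 283 354 1007 1435)) (split c0 (split c1 (split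
  c2 (split c3 (split c2 dead (leaf 532 0 379 406 1005 1600)) (leaf 537 0 392 406 1005 1621))
  (leaf 534 0 388 407 1007 1614)) (leaf 377 0 453 406 1005 1528)) (leaf 577 0 369 245 1008 1399))
  (split c0 (split c1 (split c2 dead (leaf 507 0 405 408 1009 1593))
  (leaf 441 0 453 408 1009 1586)) (leaf 576 0 267 408 1009 1504)) (split c0 (split c1 (split c2
  (split c3 (split c2 dead (leaf 481 0 449 287 1194 1743)) (leaf 510 0 453 296 1231 1800))
  (leaf 393 0 453 366 1000 1494)) (leaf 412 0 428 408 1000 1483)) (leaf 521 0 453 218 1000 1385))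

def tree012322 : DecisionTree :=
  node₄ (node₄ (split c1 (split c2 (split c3 (split c2 dead (leaf 387 0 453 439 1131 1777))
  (leaf 379 0 486 435 1107 1797)) (leaf 591 0 458 213 1065 1445)) (leaf 473 0 525 281 1033 1456))
  (split c2 (split c3 (leaf 625 0 0 489 1092 1290) (leaf 585 0 372 264 1021 1436))
  (leaf 476 0 420 347 1000 1496)) (leaf 481 0 526 225 1035 1405) (leaf 481 0 526 225 1035 1405))
  (split c0 (split c1 (split c2 (split c3 (split c2 dead (leaf 496 0 427 428 1000 1629))
  (leaf 492 0 440 448 1001 1666)) (leaf 495 0 437 446 1000 1663)) (leaf 264 0 526 478 1068 1546))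
  (leaf 520 0 526 187 1035 1453)) (split c0 (split c1 (split c2 (split c3 (split c2 dead
  (leaf 484 0 436 436 1000 1577)) (leaf 490 0 450 452 1010 1620)) (leaf 491 0 452 450 1005 1637))
  (leaf 306 0 523 489 1092 1570)) (leaf 567 0 453 280 1092 1512)) (split c0 (split c1 (split c2
  (split c3 (split c2 dead (leaf 491 0 519 249 1077 1802)) (leaf 510 0 524 249 1077 1829))
  (leaf 397 0 463 415 1079 1630)) (leaf 259 0 525 489 1033 1515)) (leaf 368 0 526 347 1035 1544))

def tree012330 : DecisionTree :=
  node₄ (node₄ dead (split c2 (split c3 (leaf 0 0 616 547 1246 1474)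
  (leaf 394 0 474 458 1078 1822)) (leaf 393 0 466 473 1078 1831)) (leaf 533 0 447 381 1079 1687)
  (leaf 533 0 447 381 1079 1687)) (node₄ dead (leaf 595 0 391 375 1077 1609)
  (leaf 674 0 605 0 1222 1443) (leaf 595 0 391 375 1077 1609)) (split c0 dead
  (leaf 585 0 279 464 1059 1584)) (split c0 dead (leaf 445 0 273 510 1162 1489))

def tree012331 : DecisionTree :=
  node₄ (node₄ (split c1 (split c2 (split c3 (split c3 (leaf 0 0 584 526 1195 1405)
  (leaf 255 0 527 525 1192 1728)) (leaf 286 0 584 526 1195 1845)) (leaf 558 0 518 293 1051 1635))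
  (leaf 558 0 422 471 1070 1771)) dead (leaf 647 0 189 525 1209 1647)
  (leaf 647 0 189 525 1209 1647)) (split c0 (split c1 (split c2 (split c3 (split c3
  (leaf 507 0 351 412 1000 1535) (leaf 507 0 351 419 1000 1544)) (leaf 510 0 351 442 1004 1578))
  (leaf 508 0 351 428 1000 1557)) (leaf 612 0 351 513 1165 1787)) (leaf 647 0 229 526 1210 1697))
  (split c0 (split c1 (split c2 dead (leaf 579 0 348 441 1083 1650))
  (leaf 580 0 324 441 1085 1623)) (leaf 580 0 365 441 1085 1672)) (split c0 (split c1 (split c2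
  (split c3 (split c3 (leaf 644 0 489 0 1205 1297) (leaf 516 0 393 365 1000 1529))
  (leaf 540 0 413 322 1010 1522)) (leaf 401 0 407 422 1000 1493)) (leaf 295 0 489 419 1000 1471))
  (leaf 442 0 225 526 1194 1461))

def tree012332 : DecisionTree :=
  node₄ (node₄ (split c1 (split c2 (split c3 (split c3 (leaf 0 0 586 530 1267 1489)
  (leaf 211 0 553 502 1200 1782)) (leaf 348 0 532 474 1134 1958)) (leaf 511 0 531 360 1132 1826))
  (leaf 606 0 433 360 1133 1724)) (split c2 (split c3 (leaf 672 0 0 526 1258 1485)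
  (leaf 602 0 308 325 1125 1512)) (leaf 532 0 405 399 1115 1668)) (leaf 364 0 570 414 1215 1706)
  (leaf 364 0 570 414 1215 1706)) (split c0 (split c1 (split c2 (split c3 (split c3
  (leaf 503 0 420 360 1000 1596) (leaf 501 0 424 360 1000 1599)) (leaf 527 0 424 360 1000 1628))
  (leaf 515 0 411 360 1000 1598)) (leaf 640 0 424 360 1197 1753)) (leaf 644 0 534 197 1205 1666))
  (split c0 (split c1 (split c2 (split c3 (split c3 (leaf 843 0 0 370 1577 1457)
  (leaf 594 0 287 370 1111 1591)) (leaf 621 0 297 370 1162 1635)) (leaf 592 0 426 370 1107 1689))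
  (leaf 441 0 527 367 1110 1638)) (leaf 595 0 527 228 1113 1614)) (split c0 (split c1 (split c2
  (split c3 (split c3 (leaf 728 0 494 0 1362 1429) (leaf 535 0 407 332 1001 1574))
  (leaf 578 0 442 304 1081 1626)) (leaf 460 0 331 430 1025 1534)) (leaf 238 0 496 530 1264 1637))
  (leaf 396 0 307 530 1264 1574))

def tree0123 : DecisionTree :=
  node₄ (node₄ tree012300 tree012301 tree012302 dead) (node₄ tree012310 tree012311 dead dead)
  (node₄ tree012320 tree012321 tree012322 dead) (node₄ tree012330 tree012331 tree012332 dead)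

/-- The weights, potentials and aggregates for which the certificates hold, found by computer. -/
def tree : DecisionTree :=
  node₁ (node₂ (node₂ (node₂ dead tree0001) (node₃ dead tree0011 tree0012)) (node₃ (node₃ tree0100
  dead tree0102) (node₃ tree0110 dead tree0112) (node₄ tree0120 dead tree0122 tree0123)))

lemma search_localTest_tree : search tree.localTest 13 [] [] [c0, c1, c2, c3] = true := by
  decide +kernel

lemma search_keyTest_tree : search tree.keyTest 20 [] [] [c0, c1, c2, c3] = true := by
  decide +kernel

/-- An imaginary beginning of the play, long enough for the certificates. -/
def pastHistory : List Letter :=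
  [c0, c2, c2, c1, c0, c2, c0, c3, c1, c2, c0, c1, c1, c0, c1, c3, c0, c0, c3, c1]

theorem annWins_letter : AnnWins Letter :=
  annWins (t := tree) (v₀ := pastHistory) (by decide +kernel) search_localTest_tree
    search_keyTest_tree (by decide) (by decide) (by decide) (by decide +kernel)

end Certificate

end NonrepetitiveGame

open NonrepetitiveGame in
theorem stmt_0_general {A : Type*} (hA : 4 ≤ ENat.card A) :
    ∃ ψ : List A → A, ∀ φ : List A → A, ∀ k : ℕ, ∀ u : List A,
      2 ≤ u.length → ¬ (u ++ u) <:+: playNR ψ φ k := by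
  have hcard : Cardinal.lift (Cardinal.mk Letter) ≤ Cardinal.lift (Cardinal.mk A) := by
    simpa [show Fintype.card Letter = 4 from rfl, ENat.card] using hA
  obtain ⟨ι⟩ := Cardinal.lift_mk_le'.1 hcard
  have : Nonempty Letter := ⟨.c0⟩
  exact annWins_letter.of_leftInverse (Function.leftInverse_invFun ι.injective)

/-- Over a finite alphabet with at least 4 letters, Ann has a winning strategy for the
nonrepetitive game: there is an Ann strategy `ψ` such that against every Ben strategy
`φ`, no word arising in the play contains a factor `u ++ u` with `|u| ≥ 2`. -/
theorem stmt_0 (A : Type*) [Fintype A] (hA : 4 ≤ Fintype.card A) :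
    ∃ ψ : List A → A, ∀ φ : List A → A, ∀ k : ℕ, ∀ u : List A,
      2 ≤ u.length → ¬ (u ++ u) <:+: playNR ψ φ k :=
  stmt_0_general (by simpa using hA)
end

section
/- Let A be a finite alphabet with at least 6 letters. Then Ann has a winning strategy for the erase-repetition game over A: there exists an Ann strategy ψ such that for every Ben strategy φ, the set of lengths of the words arising in the play between ψ and φ is unbounded. -/
open scoped Classical

/-- If the word `w` has a suffix that is a square `u ++ u` (with `u` nonempty), erase
the second half `u` of the shortest such square suffix; otherwise do nothing. -/
noncomputable def eraseStep {A : Type*} (w : List A) : List A :=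
  if h : ∃ n, 0 < n ∧ ∃ u : List A, u.length = n ∧ (u ++ u) <:+ w then
    w.take (w.length - Nat.find h)
  else w

/-- Repeatedly erase the second half of the shortest square suffix, until no suffix of
the word is a square.  Since each erasing strictly shortens the word, iterating
`eraseStep` `w.length` many times reaches the fixed point. -/
noncomputable def reduce {A : Type*} (w : List A) : List A := eraseStep^[w.length] w

/-- The play of the erase-repetition game over the alphabet `A`: starting from the
empty word, Ann (strategy `ψ`) and Ben (strategy `φ`) alternately append a letter,
Ann moving first; after each move the word is reduced by repeatedly erasing the
second half of the shortest square suffix. -/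
noncomputable def playER {A : Type*} (ψ φ : List A → A) : ℕ → List A
  | 0 => []
  | k + 1 =>
      let w := playER ψ φ k
      reduce (w ++ [if Even k then ψ w else φ w])

/-!
A square with half of length `n` is a stretch of `n` letters repeated at distance `n`. Ann keeps
every stretch repeated at a distance `n` with `2 ^ j ≤ n < 2 ^ (j + 1)` shorter than `2 ^ j`, which
rules out squares. One round makes a repeated stretch longer by at most two letters, and it stops
growing when Ann does not play the letter that would extend it. Two distinct distances of the same
class `j` cannot both carry stretches of length `2 ^ (j - 1)`: their difference would be a distance
of a smaller class with too long a stretch. So a single forbidden letter serves a whole class, and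
it is enough to serve class `j` once in every `2 ^ (j - 2)` rounds. Hence in each round Ann can
avoid three letters for the distances `1, 2, 3`, one letter for class `2`, and one letter for a
single class `j ≥ 3` chosen by the ruler sequence: five letters in all. The only square Ben can then
complete is `xx`, where `x` is Ann's last letter, and this erases nothing but his own letter.
-/

section

variable {A : Type*}

/-- The last `L` letters of the word whose reversal is `r` also occur `n` places earlier. Words are
reversed here, last letter first, so that a move is a `List.cons`. -/
def HasRepeat (r : List A) (n L : ℕ) : Prop :=
  ∃ u : List A, u.length = L ∧ u <+: r ∧ u <+: r.drop n

namespace HasRepeat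

variable {r : List A} {x : A} {m n K L : ℕ}

theorem zero (r : List A) (n : ℕ) : HasRepeat r n 0 :=
  ⟨[], rfl, List.nil_prefix, List.nil_prefix⟩

theorem mono (h : HasRepeat r n L) (hKL : K ≤ L) : HasRepeat r n K := by
  obtain ⟨u, rfl, hr, hn⟩ := h
  exact ⟨u.take K, List.length_take_of_le hKL, (List.take_prefix K u).trans hr,
    (List.take_prefix K u).trans hn⟩

theorem eq_zero_of_nil (h : HasRepeat ([] : List A) n L) : L = 0 := by
  obtain ⟨u, rfl, hu, -⟩ := h
  simpa using hu

theorem sub (hm : HasRepeat r m L) (hn : HasRepeat r n L) (hmn : m ≤ n) :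
    HasRepeat (r.drop m) (n - m) L := by
  obtain ⟨u, rfl, hur, hum⟩ := hm
  obtain ⟨v, hv, hvr, hvn⟩ := hn
  obtain rfl : u = v := (List.prefix_of_prefix_length_le hur hvr hv.ge).eq_of_length hv.symm
  exact ⟨u, rfl, hum, by rwa [List.drop_drop, Nat.add_sub_cancel' hmn]⟩

theorem of_cons (h : HasRepeat (x :: r) n (L + 1)) (hn : n ≠ 0) :
    HasRepeat r n L ∧ r[n - 1]? = some x := by
  obtain ⟨k, rfl⟩ := Nat.exists_eq_succ_of_ne_zero hn
  obtain ⟨_ | ⟨a, u⟩, hu, hr, hk⟩ := h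
  · simp at hu
  obtain ⟨rfl, hur⟩ := List.cons_prefix_cons.1 hr
  obtain ⟨v, hv⟩ : a :: u <+: r.drop k := hk
  refine ⟨⟨u, by simpa using hu, hur, v, ?_⟩, ?_⟩
  · rw [← List.tail_drop, ← hv, List.cons_append, List.tail_cons]
  · rw [Nat.succ_sub_one, ← List.head?_drop, ← hv, List.cons_append, List.head?_cons]

theorem of_square {w u : List A} (h : u ++ u <:+ w) :
    HasRepeat w.reverse u.length u.length := by
  obtain ⟨p, rfl⟩ := h
  exact ⟨u.reverse, List.length_reverse, by simp, by simp⟩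

end HasRepeat

/-- The class of a distance `n` is `Nat.log 2 n`. In the word whose reversal is `r`, every stretch
repeated at a distance of class `j`, wherever it ends, has fewer than `2 ^ j` letters. -/
def ShortRepeats (r : List A) : Prop :=
  ∀ s, s <:+ r → ∀ n ≠ 0, ∀ L, HasRepeat s n L → L < 2 ^ Nat.log 2 n

namespace ShortRepeats

variable {r : List A} {m n L : ℕ}

theorem cons {x : A} (h : ShortRepeats r)
    (hx : ∀ n ≠ 0, ∀ L, HasRepeat (x :: r) n L → L < 2 ^ Nat.log 2 n) :
    ShortRepeats (x :: r) := by
  intro s hs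
  rcases List.suffix_cons_iff.1 hs with rfl | hs
  · exact hx
  · exact h s hs

theorem not_square_suffix {w : List A} (h : ShortRepeats w.reverse) :
    ∀ u ≠ [], ¬ u ++ u <:+ w := by
  intro u hu hw
  have hlen : u.length ≠ 0 := by simpa using hu
  exact (h _ List.suffix_rfl _ hlen _ (.of_square hw)).not_ge (Nat.pow_log_le_self 2 hlen)

theorem eq_of_log_eq (h : ShortRepeats r) (hm : m ≠ 0) (hn : n ≠ 0)
    (hlog : Nat.log 2 m = Nat.log 2 n) (hL : 2 ^ Nat.log 2 n ≤ 2 * L)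
    (hrm : HasRepeat r m L) (hrn : HasRepeat r n L) : m = n := by
  by_contra hne
  wlog hlt : m < n generalizing m n
  · exact this hn hm hlog.symm (hlog ▸ hL) hrn hrm (Ne.symm hne) (by omega)
  have hsub : n - m ≠ 0 := by omega
  have hsmall : Nat.log 2 (n - m) < Nat.log 2 n := by
    refine Nat.log_lt_of_lt_pow hsub ?_
    have hm_ge : 2 ^ Nat.log 2 n ≤ m := hlog ▸ Nat.pow_log_le_self 2 hm
    have hn_lt : n < 2 ^ (Nat.log 2 n + 1) := Nat.lt_pow_succ_log_self one_lt_two n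
    rw [pow_succ] at hn_lt
    omega
  have hshort : L < 2 ^ Nat.log 2 (n - m) :=
    h _ (List.drop_suffix m r) _ hsub L (hrm.sub hrn hlt.le)
  have hdouble : 2 ^ (Nat.log 2 (n - m) + 1) ≤ 2 ^ Nat.log 2 n :=
    Nat.pow_le_pow_right two_pos hsmall
  rw [pow_succ] at hdouble
  omega

theorem exists_letter_extending (h : ShortRepeats r) (j : ℕ) :
    ∃ c : Option A, ∀ n ≠ 0, Nat.log 2 n = j → ∀ L, HasRepeat r n L → 2 ^ j ≤ 2 * L →
      r[n - 1]? = c := by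
  by_cases hex : ∃ m ≠ 0, Nat.log 2 m = j ∧ ∃ K, HasRepeat r m K ∧ 2 ^ j ≤ 2 * K
  · obtain ⟨m, hm, rfl, K, hK, hKj⟩ := hex
    refine ⟨r[m - 1]?, fun n hn hlog L hL hLj => ?_⟩
    have hmin : 2 ^ Nat.log 2 m ≤ 2 * min K L := by omega
    rw [h.eq_of_log_eq hn hm hlog hmin (hL.mono (min_le_right K L)) (hK.mono (min_le_left K L))]
  · exact ⟨none, fun n hn hlog L hL hLj => (hex ⟨n, hn, hlog, L, hL, hLj⟩).elim⟩

end ShortRepeats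

/-- The schedule of Ann: in round `t` she serves the classes `0`, `1`, `2` and one further class,
given by the ruler sequence. -/
def Serves (t j : ℕ) : Prop :=
  j ≤ 2 ∨ j = padicValNat 2 t + 3

theorem exists_padicValNat_add_eq (p : ℕ) [hp : Fact p.Prime] (t i : ℕ) :
    ∃ d < p ^ (i + 1), padicValNat p (t + d) = i := by
  set q := (t + p ^ (i + 1) - p ^ i - 1) / p ^ (i + 1)
  -- `m` is the least number congruent to `p ^ i` modulo `p ^ (i + 1)` that is at least `t`.
  obtain ⟨m, hm⟩ : ∃ m, m = p ^ i * (p * q + 1) := ⟨_, rfl⟩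
  have hval : padicValNat p m = i := by
    have hcoprime : ¬ p ∣ p * q + 1 := by
      simpa [Nat.dvd_add_right (dvd_mul_right p q)] using hp.out.ne_one
    rw [hm, padicValNat.mul (pow_ne_zero i hp.out.ne_zero) (p * q).succ_ne_zero,
      padicValNat.prime_pow, padicValNat.eq_zero_of_not_dvd hcoprime, add_zero]
  have hexpand : m = p ^ (i + 1) * q + p ^ i := by rw [hm]; ring
  have hpow : p ^ i < p ^ (i + 1) := Nat.pow_lt_pow_succ hp.out.one_lt
  have hlower : p ^ (i + 1) * q ≤ t + p ^ (i + 1) - p ^ i - 1 := Nat.mul_div_le _ _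
  have hupper : t + p ^ (i + 1) - p ^ i - 1 < p ^ (i + 1) * q + p ^ (i + 1) :=
    Nat.lt_mul_div_succ _ (Nat.zero_lt_of_lt hpow)
  refine ⟨m - t, by omega, ?_⟩
  rwa [Nat.add_sub_cancel' (by omega)]

theorem exists_serves_add (t k : ℕ) : ∃ d < 2 ^ k, Serves (t + d) (k + 2) := by
  cases k with
  | zero => exact ⟨0, one_pos, .inl le_rfl⟩
  | succ i =>
    obtain ⟨d, hd, hval⟩ := exists_padicValNat_add_eq 2 t i
    exact ⟨d, hd, .inr (by rw [hval])⟩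

/-- A stretch of `L` letters repeated at distance `n` before round `t` will be served while it is
still shorter than `2 ^ Nat.log 2 n`, even if it grows by two letters in each round before. -/
def OnSchedule (t n L : ℕ) : Prop :=
  ∃ d, Serves (t + d) (Nat.log 2 n) ∧ L + 2 * d < 2 ^ Nat.log 2 n

theorem OnSchedule.lt {t n L : ℕ} (h : OnSchedule t n L) : L < 2 ^ Nat.log 2 n := by
  obtain ⟨d, -, hd⟩ := h
  omega

theorem onSchedule_of_lt_four {t n L : ℕ} (hn : n < 4) (hL : L < 2 ^ Nat.log 2 n) :
    OnSchedule t n L :=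
  ⟨0, .inl (Nat.lt_succ_iff.1 (Nat.log_lt_of_lt_pow' three_ne_zero (by omega))), by simpa using hL⟩

theorem onSchedule_of_four_le {t n L : ℕ} (hn : 4 ≤ n) (hL : 2 * L < 2 ^ Nat.log 2 n + 4) :
    OnSchedule t n L := by
  obtain ⟨k, hk⟩ : ∃ k, Nat.log 2 n = k + 2 :=
    Nat.exists_eq_add_of_le' (Nat.le_log_of_pow_le one_lt_two hn)
  obtain ⟨d, hd, hserves⟩ := exists_serves_add t k
  refine ⟨d, hk ▸ hserves, ?_⟩
  rw [hk, pow_add] at hL ⊢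
  omega

/-- The invariant that Ann maintains before each of her turns; `r` is the reversed word and `t`
the number of the round. -/
structure Guarded (r : List A) (t : ℕ) : Prop where
  short : ShortRepeats r
  onSchedule : ∀ n ≠ 0, ∀ L, HasRepeat r n L → OnSchedule t n L

/-- Playing `x` in round `t` extends no repeated stretch that Ann must break in this round: among
the served classes, those of distance `n < 4` even if empty, as two more letters would already be
too many, and those that have reached half of the bound `2 ^ Nat.log 2 n`. The letter that would
extend a stretch repeated at distance `n` is `r[n - 1]?`. -/
def IsSafe (r : List A) (t : ℕ) (x : A) : Prop :=
  ∀ n ≠ 0, Serves t (Nat.log 2 n) → ∀ L, HasRepeat r n L → n < 4 ∨ 2 ^ Nat.log 2 n ≤ 2 * L →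
    r[n - 1]? ≠ some x

theorem IsSafe.getElem?_ne {r : List A} {t n : ℕ} {x : A} (hx : IsSafe r t x) (hn : n < 3) :
    r[n]? ≠ some x :=
  hx (n + 1) n.succ_ne_zero
    (.inl (Nat.lt_succ_iff.1 (Nat.log_lt_of_lt_pow' three_ne_zero (by omega)))) 0 (.zero r _)
    (.inl (by omega))

theorem exists_some_notMem_of_length_lt_card (l : List (Option A))
    (h : (l.length : ℕ∞) < ENat.card A) : ∃ x : A, some x ∉ l := by
  have hlt : (l.reduceOption.toFinset : Set A).encard < (Set.univ : Set A).encard := by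
    rw [Set.encard_univ, Set.encard_coe_eq_coe_finsetCard]
    exact h.trans_le' (mod_cast (List.toFinset_card_le _).trans (List.reduceOption_length_le l))
  obtain ⟨x, hx⟩ := (Set.ne_univ_iff_exists_notMem _).1 (fun heq => hlt.ne (congrArg _ heq))
  rw [Finset.mem_coe, List.mem_toFinset, List.reduceOption_mem_iff] at hx
  exact ⟨x, hx⟩

theorem ShortRepeats.exists_isSafe {r : List A} (h : ShortRepeats r) (hA : 6 ≤ ENat.card A)
    (t : ℕ) : ∃ x, IsSafe r t x := by
  obtain ⟨c, hc⟩ := h.exists_letter_extending 2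
  obtain ⟨d, hd⟩ := h.exists_letter_extending (padicValNat 2 t + 3)
  obtain ⟨x, hx⟩ := exists_some_notMem_of_length_lt_card [r[0]?, r[1]?, r[2]?, c, d]
    (lt_of_lt_of_le (by norm_num) hA)
  simp only [List.mem_cons, List.not_mem_nil, or_false, not_or] at hx
  obtain ⟨hx0, hx1, hx2, hxc, hxd⟩ := hx
  refine ⟨x, fun n hn hserves L hL hbreak hext => ?_⟩
  rcases lt_or_ge n 4 with hlt | hge
  · interval_cases n
    exacts [hn rfl, hx0 hext.symm, hx1 hext.symm, hx2 hext.symm]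
  have hlong : 2 ^ Nat.log 2 n ≤ 2 * L := hbreak.resolve_left hge.not_gt
  rcases hserves with hle | heq
  · have hlog : Nat.log 2 n = 2 := hle.antisymm (Nat.le_log_of_pow_le one_lt_two hge)
    exact hxc (hext ▸ hc n hn hlog L hL (by rwa [hlog] at hlong))
  · exact hxd (hext ▸ hd n hn heq L hL (by rwa [heq] at hlong))

namespace Guarded

variable {r : List A} {t : ℕ} {x y : A}

theorem nil (t : ℕ) : Guarded ([] : List A) t where
  short s hs n _ L hL := by
    obtain rfl := List.suffix_nil.1 hs
    rw [hL.eq_zero_of_nil]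
    positivity
  onSchedule n _ L hL := by
    obtain rfl := hL.eq_zero_of_nil
    rcases lt_or_ge n 4 with hlt | hge
    · exact onSchedule_of_lt_four hlt (by positivity)
    · exact onSchedule_of_four_le hge (by positivity)

theorem onSchedule_add_two (h : Guarded r t) (hx : IsSafe r t x) {n L : ℕ} (hn : n ≠ 0)
    (hL : HasRepeat r n L) (hext : r[n - 1]? = some x) : OnSchedule (t + 1) n (L + 2) := by
  obtain ⟨d, hserves, hd⟩ := h.onSchedule n hn L hL
  cases d with
  | zero =>
    have hunbroken : ¬ (n < 4 ∨ 2 ^ Nat.log 2 n ≤ 2 * L) :=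
      fun hbreak => hx n hn hserves L hL hbreak hext
    exact onSchedule_of_four_le (by omega) (by omega)
  | succ d => exact ⟨d, by rwa [add_assoc, add_comm 1 d], by omega⟩

theorem onSchedule_succ (h : Guarded r t) (hx : IsSafe r t x) {n L : ℕ} (hn : n ≠ 0)
    (hone : n = 1 → L = 0)
    (hrepeat : ∀ K, L = K + 2 → HasRepeat r n K ∧ r[n - 1]? = some x) :
    OnSchedule (t + 1) n L := by
  rcases lt_or_ge L 2 with hlt | hge
  · rcases lt_or_ge n 4 with hn4 | hn4
    · refine onSchedule_of_lt_four hn4 ?_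
      rcases eq_or_ne n 1 with rfl | hne
      · simp [hone rfl]
      · exact hlt.trans_le (Nat.le_self_pow (Nat.log_pos one_lt_two (by omega)).ne' 2)
    · exact onSchedule_of_four_le hn4 (by have := Nat.one_le_two_pow (n := Nat.log 2 n); omega)
  · obtain ⟨K, rfl⟩ := Nat.exists_eq_add_of_le' hge
    obtain ⟨hK, hext⟩ := hrepeat K rfl
    exact h.onSchedule_add_two hx hn hK hext

theorem cons (h : Guarded r t) (hx : IsSafe r t x) : Guarded (x :: r) (t + 1) := by
  have hsched : ∀ n ≠ 0, ∀ L, HasRepeat (x :: r) n L → OnSchedule (t + 1) n L := by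
    intro n hn L hL
    refine h.onSchedule_succ hx hn ?_ ?_
    · rintro rfl
      by_contra hpos
      obtain ⟨K, rfl⟩ := Nat.exists_eq_succ_of_ne_zero hpos
      exact hx.getElem?_ne three_pos (hL.of_cons one_ne_zero).2
    · rintro K rfl
      obtain ⟨hK, hext⟩ := hL.of_cons hn
      exact ⟨hK.mono K.le_succ, hext⟩
  exact ⟨h.short.cons fun n hn L hL => (hsched n hn L hL).lt, hsched⟩

theorem cons_cons (h : Guarded r t) (hx : IsSafe r t x) (hyx : y ≠ x) :
    Guarded (y :: x :: r) (t + 1) := by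
  have hsched : ∀ n ≠ 0, ∀ L, HasRepeat (y :: x :: r) n L → OnSchedule (t + 1) n L := by
    intro n hn L hL
    refine h.onSchedule_succ hx hn ?_ ?_
    · rintro rfl
      by_contra hpos
      obtain ⟨K, rfl⟩ := Nat.exists_eq_succ_of_ne_zero hpos
      exact hyx (by simpa using (hL.of_cons one_ne_zero).2.symm)
    · rintro K rfl
      exact (hL.of_cons hn).1.of_cons hn
  exact ⟨(h.cons hx).short.cons fun n hn L hL => (hsched n hn L hL).lt, hsched⟩

end Guarded

theorem eraseStep_eq_self {w : List A} (h : ∀ u ≠ [], ¬ u ++ u <:+ w) : eraseStep w = w := by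
  refine dif_neg ?_
  rintro ⟨_, hpos, u, rfl, hu⟩
  exact h u (List.length_pos_iff.1 hpos) hu

theorem reduce_eq_self {w : List A} (h : ∀ u ≠ [], ¬ u ++ u <:+ w) : reduce w = w :=
  Function.iterate_fixed (eraseStep_eq_self h) _

theorem eraseStep_append_pair (w : List A) (x : A) : eraseStep (w ++ [x, x]) = w ++ [x] := by
  have hsquare : 0 < 1 ∧ ∃ u : List A, u.length = 1 ∧ u ++ u <:+ w ++ [x, x] :=
    ⟨one_pos, [x], rfl, List.suffix_append w [x, x]⟩
  rw [eraseStep, dif_pos ⟨1, hsquare⟩,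
    (Nat.find_eq_iff _).2 ⟨hsquare, fun n hn hex => hn.not_ge hex.1⟩]
  simp [List.take_append]

theorem reduce_append_pair {w : List A} {x : A} (h : ∀ u ≠ [], ¬ u ++ u <:+ w ++ [x]) :
    reduce (w ++ [x, x]) = w ++ [x] := by
  rw [reduce, List.length_append, List.length_cons, ← add_assoc, Function.iterate_succ_apply,
    eraseStep_append_pair, Function.iterate_fixed (eraseStep_eq_self h)]

theorem playER_two_mul_succ (ψ φ : List A → A) (N : ℕ) :
    playER ψ φ (2 * (N + 1)) =
      let w := playER ψ φ (2 * N)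
      let v := reduce (w ++ [ψ w])
      reduce (v ++ [φ v]) := by
  simp [mul_add, playER]

theorem le_length_playER_of_invariant {P : List A → Prop} {ψ : List A → A} (hnil : P [])
    (hsquare : ∀ w, P w → ∀ u ≠ [], ¬ u ++ u <:+ w)
    (hψ : ∀ w, P w → P (w ++ [ψ w]) ∧ ∀ y ≠ ψ w, P (w ++ [ψ w, y])) (φ : List A → A) (N : ℕ) :
    N ≤ (playER ψ φ (2 * N)).length := by
  suffices H : P (playER ψ φ (2 * N)) ∧ N ≤ (playER ψ φ (2 * N)).length from H.2
  induction N with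
  | zero => exact ⟨hnil, le_rfl⟩
  | succ N ih =>
    rw [playER_two_mul_succ]
    set w := playER ψ φ (2 * N)
    obtain ⟨hw, hlen⟩ := ih
    obtain ⟨hAnn, hBen⟩ := hψ w hw
    simp only [reduce_eq_self (hsquare _ hAnn), List.append_assoc, List.cons_append,
      List.nil_append]
    set y := φ (w ++ [ψ w])
    by_cases hy : y = ψ w
    · rw [hy, reduce_append_pair (hsquare _ hAnn)]
      exact ⟨hAnn, by simpa using hlen⟩
    · rw [reduce_eq_self (hsquare _ (hBen y hy))]
      refine ⟨hBen y hy, ?_⟩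
      simp only [List.length_append, List.length_cons, List.length_nil]
      omega

end

theorem stmt_1_general (A : Type*) (hA : 6 ≤ ENat.card A) :
    ∃ ψ : List A → A, ∀ φ : List A → A, ∀ N : ℕ, N ≤ (playER ψ φ (2 * N)).length := by
  let P (w : List A) : Prop := ∃ t, Guarded w.reverse t
  have hmove : ∀ w, P w → ∃ x, P (w ++ [x]) ∧ ∀ y ≠ x, P (w ++ [x, y]) := by
    rintro w ⟨t, ht⟩
    obtain ⟨x, hx⟩ := ht.short.exists_isSafe hA t
    exact ⟨x, ⟨t + 1, by simpa using ht.cons hx⟩,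
      fun y hy => ⟨t + 1, by simpa using ht.cons_cons hx hy⟩⟩
  have : Nonempty A := (ENat.card_ne_zero_iff_nonempty A).1 (by intro h; simp [h] at hA)
  choose! ψ hψ using hmove
  exact ⟨ψ, le_length_playER_of_invariant ⟨0, .nil 0⟩
    (fun w ⟨_, ht⟩ => ht.short.not_square_suffix) hψ⟩

/-- Over a finite alphabet with at least 6 letters, Ann has a winning strategy for the
erase-repetition game: there is a strategy `ψ` for Ann such that against every Ben
strategy `φ`, the lengths of the words arising in the play are unbounded. -/
theorem stmt_1 (A : Type*) [Fintype A] (hA : 6 ≤ Fintype.card A) :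
    ∃ ψ : List A → A, ∀ φ : List A → A, ∀ N : ℕ, ∃ k : ℕ,
      N ≤ (playER ψ φ k).length := by
  obtain ⟨ψ, hψ⟩ := stmt_1_general A (by rw [ENat.card_eq_coe_fintype_card]; exact_mod_cast hA)
  exact ⟨ψ, fun φ N => ⟨2 * N, hψ φ N⟩⟩
end
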